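/- Let k, p ∈ ℕ with k ≥ 2 and p ≥ 2, let R > 0 and ε > 0. Then there exists C > 0 such that for every u₀ ∈ H^k(𝕋) with ‖u₀‖_{H¹(𝕋)} ≤ R, the unique global solution u of the defocusing NLS with u(0,·) = u₀ satisfies ‖u(t)‖_{H^k(𝕋)} ≤ C ‖u₀‖_{H^k(𝕋)} + C t^{(k−1)/2+ε} for all t > 0. Moreover, if k is not divisible by 3, the bound holds with ε = 0. -/

import Mathlib

open MeasureTheory
open scoped Real BigOperators ENNReal

noncomputable section

/-- `n`-th spatial derivative. -/
def pD (n : ℕ) (f : ℝ → ℂ) : ℝ → ℂ := iteratedDeriv n f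

/-- Complex conjugate of the `n`-th spatial derivative. -/
def cD (n : ℕ) (f : ℝ → ℂ) (x : ℝ) : ℂ := (starRingEnd ℂ) (iteratedDeriv n f x)

/-- Integral over one period of the torus `𝕋 = ℝ/2πℤ`. -/
def tInt (f : ℝ → ℂ) : ℂ := ∫ x in (0:ℝ)..(2 * Real.pi), f x

/-- Squared `L²(𝕋)` norm. -/
def L2sq (f : ℝ → ℂ) : ℝ := ∫ x in (0:ℝ)..(2 * Real.pi), ‖f x‖ ^ 2

/-- Squared `Hᵏ(𝕋)` norm: `‖u‖² = ‖u‖²_{L²} + ‖∂ₓᵏu‖²_{L²}`. -/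
def HkSq (k : ℕ) (f : ℝ → ℂ) : ℝ := L2sq f + L2sq (pD k f)

/-- `Hᵏ(𝕋)` norm. -/
def HkNorm (k : ℕ) (f : ℝ → ℂ) : ℝ := Real.sqrt (HkSq k f)

/-- A classical (smooth and `2π`-periodic in space, differentiable in time) solution of the
defocusing NLS `i ∂ₜ u + ∂ₓ² u - u |u|^{2p} = 0` for times in the set `I`. -/
structure IsNLS (p : ℕ) (I : Set ℝ) (u : ℝ → ℝ → ℂ) : Prop where
  smooth : ∀ t ∈ I, ContDiff ℝ (⊤ : ℕ∞) (u t)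
  periodic : ∀ t ∈ I, Function.Periodic (u t) (2 * Real.pi)
  tdiff : ∀ (x : ℝ), ∀ t ∈ I, DifferentiableAt ℝ (fun s => u s x) t
  eqn : ∀ t ∈ I, ∀ x : ℝ,
    Complex.I * deriv (fun s => u s x) t + pD 2 (u t) x
      = u t x * ((‖u t x‖ : ℂ)) ^ (2 * p)

/-!
In Fourier variables the derivative of `‖∂ₓᵏu‖²` along the flow is a `(2p + 2)`-linear form over
frequencies of zero total momentum, with symbol `Σ σᵢ nᵢ²ᵏ`. Its nonresonant part is divided by the
resonance function `Ω = Σ σᵢ nᵢ²` and moved into a modified energy. The factorization of signed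
power sums bounds the remaining symbols by the product of the two largest frequencies to the power
`k - 1` times `1 + n₃ n₄ / ⟨Ω⟩`, where `n₃`, `n₄` are the next two. A quadrilinear `ℓ²` estimate
with the weight `⟨Ω⟩⁻¹` then bounds both the correction and the rate of change of the modified
energy by `‖u‖²` in `Hᵏ⁻¹`, with constants controlled by the conserved mass and energy.
Interpolating `Hᵏ⁻¹` between `H¹` and `Hᵏ` yields the growth `t^((k-1)/2)`.

A solution is only assumed to be pointwise differentiable in time, whereas differentiating the
Fourier series requires decay of the coefficients that is locally uniform in time. By Baire's
theorem, the closed set of times at which this fails, if nonempty, has a relatively open part on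
which the decay is uniform; the decay persists for a time controlled by the conserved quantities,
so it is uniform on a full neighbourhood of that part, which is a contradiction.
-/

namespace NLS

open scoped Topology

/-! ### Signed power sums -/

section ThreeLargestFrequencies

variable {x₁ x₂ x₃ s₁ s₂ s₃ : ℝ}

lemma two_mul_abs_sub_le_abs_sq_add_sq_sub_sq {y z w e : ℝ} (h : y + z - w + e = 0) :
    2 * |y * z| - (2 * |e| * |w| + e ^ 2) ≤ |y ^ 2 + z ^ 2 - w ^ 2| := by
  obtain rfl : y = w - z - e := by linarith
  have hyz : |2 * ((w - z - e) * z)| = 2 * |(w - z - e) * z| := by rw [abs_mul, abs_two]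
  have hew : |2 * (e * w) - e ^ 2| ≤ 2 * |e| * |w| + e ^ 2 := by
    refine (abs_sub _ _).trans_eq ?_
    rw [abs_mul, abs_mul, abs_two, abs_sq, mul_assoc]
  have htri := abs_sub_abs_le_abs_sub (2 * ((w - z - e) * z)) (-(2 * (e * w) - e ^ 2))
  rw [abs_neg] at htri
  calc _ ≤ |2 * ((w - z - e) * z) - -(2 * (e * w) - e ^ 2)| := by linarith
    _ = |(w - z - e) ^ 2 + z ^ 2 - w ^ 2| := by rw [← abs_neg]; congr 1; ring

/-- If the signs agree the squares add up; otherwise eliminating the frequency with the isolated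
sign leaves twice the product of the other two. -/
lemma two_mul_sub_le_abs_signed_sq_add {e : ℝ} (hs₁ : |s₁| = 1) (hs₂ : |s₂| = 1) (hs₃ : |s₃| = 1)
    (h₁₂ : |x₂| ≤ |x₁|) (h₂₃ : |x₃| ≤ |x₂|) (hlin : s₁ * x₁ + s₂ * x₂ + s₃ * x₃ + e = 0) :
    2 * (|x₂| * |x₃|) - (2 * |e| * |x₁| + e ^ 2) ≤ |s₁ * x₁ ^ 2 + s₂ * x₂ ^ 2 + s₃ * x₃ ^ 2| := by
  have same : 2 * (|x₂| * |x₃|) - (2 * |e| * |x₁| + e ^ 2) ≤ x₁ ^ 2 + x₂ ^ 2 + x₃ ^ 2 := by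
    have : 0 ≤ 2 * |e| * |x₁| + e ^ 2 := by positivity
    nlinarith [sq_nonneg (|x₂| - |x₃|), sq_abs x₂, sq_abs x₃, sq_nonneg x₁]
  have mixed : ∀ {y z w e' : ℝ}, |e'| = |e| → |w| ≤ |x₁| → |x₂| * |x₃| ≤ |y| * |z| →
      y + z - w + e' = 0 →
      2 * (|x₂| * |x₃|) - (2 * |e| * |x₁| + e ^ 2) ≤ |y ^ 2 + z ^ 2 - w ^ 2| := by
    intro y z w e' he hw hyz h
    refine le_trans ?_ (two_mul_abs_sub_le_abs_sq_add_sq_sub_sq h)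
    rw [abs_mul, he, ← sq_abs e', he, sq_abs]
    gcongr
  have h₁₃ := h₂₃.trans h₁₂
  have hprod₁₂ : |x₂| * |x₃| ≤ |x₁| * |x₂| := by gcongr
  have hprod₁₃ : |x₂| * |x₃| ≤ |x₁| * |x₃| := by gcongr
  rcases eq_or_eq_neg_of_abs_eq hs₁ with rfl | rfl <;>
    rcases eq_or_eq_neg_of_abs_eq hs₂ with rfl | rfl <;>
    rcases eq_or_eq_neg_of_abs_eq hs₃ with rfl | rfl
  · exact same.trans ((le_abs_self _).trans_eq (by ring_nf))
  · exact (mixed rfl h₁₃ hprod₁₂ (by linarith)).trans_eq (by ring_nf)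
  · exact (mixed rfl h₁₂ hprod₁₃ (by linarith)).trans_eq (by ring_nf)
  · exact (mixed (abs_neg e) le_rfl le_rfl (by linarith)).trans_eq
      (by rw [← abs_neg]; ring_nf)
  · exact (mixed rfl le_rfl le_rfl (by linarith)).trans_eq (by ring_nf)
  · exact (mixed (abs_neg e) h₁₂ hprod₁₃ (by linarith)).trans_eq (by rw [← abs_neg]; ring_nf)
  · exact (mixed (abs_neg e) h₁₃ hprod₁₂ (by linarith)).trans_eq (by rw [← abs_neg]; ring_nf)
  · exact same.trans ((le_abs_self _).trans_eq (by rw [← abs_neg]; ring_nf))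

lemma abs_signed_pow_succ_add_le {A B : ℝ} (j : ℕ) (hs₁ : |s₁| = 1) (hs₂ : |s₂| = 1) (hB : 0 ≤ B)
    (hBA : B ≤ A) :
    |s₁ * A ^ (j + 1) + s₂ * B ^ (j + 1)| ≤ (j + 1) * A ^ j * |s₁ * A + s₂ * B| := by
  have hA : 0 ≤ A := hB.trans hBA
  have same : |A ^ (j + 1) + B ^ (j + 1)| ≤ (j + 1) * A ^ j * |A + B| := by
    rw [abs_of_nonneg (by positivity), abs_of_nonneg (by positivity)]
    calc A ^ (j + 1) + B ^ (j + 1) = 1 * (A ^ j * A + B ^ j * B) := by ring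
      _ ≤ (j + 1) * (A ^ j * A + A ^ j * B) := by gcongr; linarith [j.cast_nonneg (α := ℝ)]
      _ = _ := by ring
  have opposite : |A ^ (j + 1) - B ^ (j + 1)| ≤ (j + 1) * A ^ j * |A - B| := by
    refine (abs_pow_sub_pow_le A B (j + 1)).trans_eq ?_
    rw [abs_of_nonneg hA, abs_of_nonneg hB, max_eq_left hBA, Nat.add_sub_cancel]
    push_cast
    ring
  rcases eq_or_eq_neg_of_abs_eq hs₁ with rfl | rfl <;>
    rcases eq_or_eq_neg_of_abs_eq hs₂ with rfl | rfl
  · simpa only [one_mul] using same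
  · simpa only [one_mul, neg_mul, ← sub_eq_add_neg] using opposite
  · simpa only [one_mul, neg_mul, neg_add_eq_sub, abs_sub_comm] using opposite
  · simpa only [one_mul, neg_mul, ← neg_add, abs_neg] using same

variable {D d e₁ e₂ : ℝ}

lemma abs_le_mul_abs_of_signed_sum_eq_zero (hD : 0 ≤ D) (hs₁ : |s₁| = 1) (hs₂ : |s₂| = 1)
    (hs₃ : |s₃| = 1) (h₂₃ : |x₃| ≤ |x₂|) (h₃ : d ≤ |x₃|) (he₁ : |e₁| ≤ D * d)
    (hlin : s₁ * x₁ + s₂ * x₂ + s₃ * x₃ + e₁ = 0) : |x₁| ≤ (D + 2) * |x₂| := by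
  calc |x₁| = |s₁ * x₁| := by rw [abs_mul, hs₁, one_mul]
    _ = |s₂ * x₂ + s₃ * x₃ + e₁| := by
      rw [← abs_neg]; congr 1; linarith
    _ ≤ |s₂ * x₂| + |s₃ * x₃| + |e₁| := abs_add_three _ _ _
    _ = |x₂| + |x₃| + |e₁| := by rw [abs_mul, abs_mul, hs₂, hs₃, one_mul, one_mul]
    _ ≤ |x₂| + |x₂| + D * |x₂| := by
      gcongr
      exact he₁.trans (mul_le_mul_of_nonneg_left (h₃.trans h₂₃) hD)
    _ = (D + 2) * |x₂| := by ring

lemma sq_le_abs_signed_sq_add_of_mul_le (hD : 1 ≤ D) (hs₁ : |s₁| = 1) (hs₂ : |s₂| = 1)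
    (hs₃ : |s₃| = 1) (h₁₂ : |x₂| ≤ |x₁|) (h₂₃ : |x₃| ≤ |x₂|) (h₃ : d ≤ |x₃|) (hd : 0 ≤ d)
    (he₁ : |e₁| ≤ D * d) (he₂ : |e₂| ≤ D * d ^ 2)
    (hlin : s₁ * x₁ + s₂ * x₂ + s₃ * x₃ + e₁ = 0)
    (hK : (2 * D * (D + 2) + D ^ 2 + D) * d ≤ |x₃|) :
    |x₃| ^ 2 ≤ |s₁ * x₁ ^ 2 + s₂ * x₂ ^ 2 + s₃ * x₃ ^ 2 + e₂| := by
  have hx₁ := abs_le_mul_abs_of_signed_sum_eq_zero (by linarith) hs₁ hs₂ hs₃ h₂₃ h₃ he₁ hlin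
  have hmain := two_mul_sub_le_abs_signed_sq_add hs₁ hs₂ hs₃ h₁₂ h₂₃ hlin
  have hdx₂ : d ≤ |x₂| := h₃.trans h₂₃
  have herr : 2 * |e₁| * |x₁| + e₁ ^ 2 + |e₂| ≤ |x₂| * |x₃| := by
    calc 2 * |e₁| * |x₁| + e₁ ^ 2 + |e₂|
        = 2 * |e₁| * |x₁| + |e₁| * |e₁| + |e₂| := by rw [abs_mul_abs_self, sq]
      _ ≤ 2 * (D * d) * ((D + 2) * |x₂|) + (D * d) * (D * |x₂|) + D * (d * |x₂|) := by
        rw [sq] at he₂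
        gcongr
        · exact he₁.trans (by gcongr)
        · exact he₂.trans (by gcongr)
      _ = (2 * D * (D + 2) + D ^ 2 + D) * d * |x₂| := by ring
      _ ≤ |x₃| * |x₂| := by gcongr
      _ = |x₂| * |x₃| := mul_comm _ _
  have htri := abs_sub_abs_le_abs_sub (s₁ * x₁ ^ 2 + s₂ * x₂ ^ 2 + s₃ * x₃ ^ 2) (-e₂)
  rw [abs_neg, sub_neg_eq_add] at htri
  have hx₃ : |x₃| ^ 2 ≤ |x₂| * |x₃| := by rw [sq]; gcongr
  linarith

lemma abs_signed_pow_add_le {eM : ℝ} (j : ℕ) (hD : 1 ≤ D) (hs₁ : |s₁| = 1) (hs₂ : |s₂| = 1)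
    (hs₃ : |s₃| = 1) (h₁₂ : |x₂| ≤ |x₁|) (h₂₃ : |x₃| ≤ |x₂|) (h₃ : d ≤ |x₃|) (hd : 0 ≤ d)
    (he₂ : |e₂| ≤ D * d ^ 2) (heM : |eM| ≤ D * d ^ (2 * (j + 1))) :
    |s₁ * x₁ ^ (2 * (j + 1)) + s₂ * x₂ ^ (2 * (j + 1)) + s₃ * x₃ ^ (2 * (j + 1)) + eM| ≤
      (j + 2) * (D + 1) * |x₁| ^ (2 * j) *
        (|s₁ * x₁ ^ 2 + s₂ * x₂ ^ 2 + s₃ * x₃ ^ 2 + e₂| + |x₃| ^ 2) := by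
  set Ω := s₁ * x₁ ^ 2 + s₂ * x₂ ^ 2 + s₃ * x₃ ^ 2 + e₂ with hΩ
  have h₁₃ : |x₃| ≤ |x₁| := h₂₃.trans h₁₂
  have hpow₃ : |s₃ * x₃ ^ (2 * (j + 1))| ≤ |x₁| ^ (2 * j) * |x₃| ^ 2 := by
    rw [abs_mul, hs₃, one_mul, abs_pow, mul_add, mul_one, pow_add]
    gcongr
  have hpowM : |eM| ≤ D * (|x₁| ^ (2 * j) * |x₃| ^ 2) := by
    refine heM.trans ?_
    rw [mul_add, mul_one, pow_add]
    have : d ≤ |x₁| := h₃.trans h₁₃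
    gcongr
  have hquad : |s₁ * x₁ ^ 2 + s₂ * x₂ ^ 2| ≤ |Ω| + (D + 1) * |x₃| ^ 2 := by
    have hd₃ : D * d ^ 2 ≤ D * |x₃| ^ 2 := by gcongr
    calc |s₁ * x₁ ^ 2 + s₂ * x₂ ^ 2| = |Ω - s₃ * x₃ ^ 2 - e₂| := by rw [hΩ]; ring_nf
      _ ≤ |Ω| + |s₃ * x₃ ^ 2| + |e₂| := (abs_sub _ _).trans (by gcongr; exact abs_sub _ _)
      _ ≤ |Ω| + |x₃| ^ 2 + D * |x₃| ^ 2 := by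
        rw [abs_mul, hs₃, one_mul, abs_pow]; gcongr; exact he₂.trans hd₃
      _ = _ := by ring
  have hpair : |s₁ * x₁ ^ (2 * (j + 1)) + s₂ * x₂ ^ (2 * (j + 1))| ≤
      (j + 1) * |x₁| ^ (2 * j) * (|Ω| + (D + 1) * |x₃| ^ 2) := by
    have := abs_signed_pow_succ_add_le j hs₁ hs₂ (sq_nonneg x₂) (sq_le_sq.2 h₁₂)
    rw [← pow_mul, ← pow_mul, ← pow_mul, ← Even.pow_abs (even_two_mul j)] at this
    exact this.trans (by gcongr)
  calc _ ≤ (j + 1) * |x₁| ^ (2 * j) * (|Ω| + (D + 1) * |x₃| ^ 2) + |x₁| ^ (2 * j) * |x₃| ^ 2 +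
        D * (|x₁| ^ (2 * j) * |x₃| ^ 2) := (abs_add_three _ _ _).trans (by gcongr)
    _ = |x₁| ^ (2 * j) * ((j + 1) * |Ω| + (j + 2) * (D + 1) * |x₃| ^ 2) := by ring
    _ ≤ |x₁| ^ (2 * j) * ((j + 2) * (D + 1) * |Ω| + (j + 2) * (D + 1) * |x₃| ^ 2) := by
      gcongr
      nlinarith [j.cast_nonneg (α := ℝ)]
    _ = _ := by ring

lemma exists_abs_signed_pow_add_le (j : ℕ) (hD : 1 ≤ D) : ∃ C : ℝ, 0 ≤ C ∧
    ∀ {x₁ x₂ x₃ d s₁ s₂ s₃ e₁ e₂ eM : ℝ}, |s₁| = 1 → |s₂| = 1 → |s₃| = 1 →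
      |x₂| ≤ |x₁| → |x₃| ≤ |x₂| → d ≤ |x₃| → 0 ≤ d →
      |e₁| ≤ D * d → |e₂| ≤ D * d ^ 2 → |eM| ≤ D * d ^ (2 * (j + 1)) →
      s₁ * x₁ + s₂ * x₂ + s₃ * x₃ + e₁ = 0 →
      |s₁ * x₁ ^ (2 * (j + 1)) + s₂ * x₂ ^ (2 * (j + 1)) + s₃ * x₃ ^ (2 * (j + 1)) + eM| ≤
        C * (|x₁| ^ j * |x₂| ^ j *
          (|s₁ * x₁ ^ 2 + s₂ * x₂ ^ 2 + s₃ * x₃ ^ 2 + e₂| + |x₃| * d)) := by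
  set K := 2 * D * (D + 2) + D ^ 2 + D
  have : 0 ≤ K := by positivity
  refine ⟨(j + 2) * (D + 1) * (D + 2) ^ j * (2 + K), by positivity, ?_⟩
  intro x₁ x₂ x₃ d s₁ s₂ s₃ e₁ e₂ eM hs₁ hs₂ hs₃ h₁₂ h₂₃ h₃ hd he₁ he₂ heM hlin
  have hx₁ := abs_le_mul_abs_of_signed_sum_eq_zero (by linarith) hs₁ hs₂ hs₃ h₂₃ h₃ he₁ hlin
  have hupper := abs_signed_pow_add_le j hD hs₁ hs₂ hs₃ h₁₂ h₂₃ h₃ hd he₂ heM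
  set Ω := s₁ * x₁ ^ 2 + s₂ * x₂ ^ 2 + s₃ * x₃ ^ 2 + e₂
  have hpow : |x₁| ^ (2 * j) ≤ (D + 2) ^ j * (|x₁| ^ j * |x₂| ^ j) := by
    calc |x₁| ^ (2 * j) = |x₁| ^ j * |x₁| ^ j := by ring
      _ ≤ |x₁| ^ j * ((D + 2) * |x₂|) ^ j := by gcongr
      _ = _ := by rw [mul_pow]; ring
  have hsq : |x₃| ^ 2 ≤ |Ω| + K * (|x₃| * d) := by
    rcases le_total (K * d) |x₃| with hlarge | hsmall
    · have := sq_le_abs_signed_sq_add_of_mul_le hD hs₁ hs₂ hs₃ h₁₂ h₂₃ h₃ hd he₁ he₂ hlin hlarge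
      exact this.trans (le_add_of_nonneg_right (by positivity))
    · calc |x₃| ^ 2 = |x₃| * |x₃| := sq _
        _ ≤ |x₃| * (K * d) := by gcongr
        _ = K * (|x₃| * d) := by ring
        _ ≤ _ := le_add_of_nonneg_left (abs_nonneg _)
  have hsum : |Ω| + |x₃| ^ 2 ≤ (2 + K) * (|Ω| + |x₃| * d) := by
    have : 0 ≤ |x₃| * d := by positivity
    nlinarith [abs_nonneg Ω]
  refine hupper.trans ?_
  calc (j + 2) * (D + 1) * |x₁| ^ (2 * j) * (|Ω| + |x₃| ^ 2)
      ≤ (j + 2) * (D + 1) * ((D + 2) ^ j * (|x₁| ^ j * |x₂| ^ j)) *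
        ((2 + K) * (|Ω| + |x₃| * d)) := by gcongr
    _ = _ := by ring

end ThreeLargestFrequencies

lemma exists_four_largest {ι : Type*} [Fintype ι] (hι : 4 ≤ Fintype.card ι) (g : ι → ℝ) :
    ∃ f : Fin 4 → ι, Function.Injective f ∧ g (f 1) ≤ g (f 0) ∧ g (f 2) ≤ g (f 1) ∧
      g (f 3) ≤ g (f 2) ∧ ∀ i, i ≠ f 0 → i ≠ f 1 → i ≠ f 2 → g i ≤ g (f 3) := by
  classical
  have exists_max : ∀ s : Finset ι, s.card < 4 → ∃ i, i ∉ s ∧ ∀ j, j ∉ s → g j ≤ g i := by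
    intro s hs
    have : (sᶜ).Nonempty := by rw [← Finset.card_pos, Finset.card_compl]; omega
    obtain ⟨i, hi, hmax⟩ := Finset.exists_max_image sᶜ g this
    exact ⟨i, Finset.mem_compl.1 hi, fun j hj => hmax j (Finset.mem_compl.2 hj)⟩
  obtain ⟨i₀, -, h₀⟩ := exists_max ∅ (by simp)
  obtain ⟨i₁, hn₁, h₁⟩ := exists_max {i₀} (by simp)
  obtain ⟨i₂, hn₂, h₂⟩ := exists_max {i₀, i₁} (Finset.card_le_two.trans_lt (by norm_num))
  obtain ⟨i₃, hn₃, h₃⟩ := exists_max {i₀, i₁, i₂} (Finset.card_le_three.trans_lt (by norm_num))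
  simp only [Finset.mem_insert, Finset.mem_singleton, not_or] at hn₁ hn₂ hn₃ h₁ h₂ h₃
  refine ⟨![i₀, i₁, i₂, i₃], ?_, h₀ i₁ (by simp), h₁ i₂ hn₂.1, h₂ i₃ ⟨hn₃.1, hn₃.2.1⟩,
    fun i ha hb hc => h₃ i ⟨ha, hb, hc⟩⟩
  intro a b hab
  fin_cases a <;> fin_cases b <;> simp_all

lemma abs_cast_sign (s : ℤˣ) : |((s : ℤ) : ℝ)| = 1 := by
  rw [← Int.cast_abs, Int.isUnit_iff_abs_eq.1 s.isUnit, Int.cast_one]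

lemma abs_sum_sign_mul_pow_le {ι : Type*} (σ : ι → ℤˣ) (n : ι → ℤ) (m : ℕ)
    {s : Finset ι} {N : ℝ} (hN : ∀ i ∈ s, |(n i : ℝ)| ≤ N) :
    |∑ i ∈ s, ((σ i : ℤ) : ℝ) * (n i : ℝ) ^ m| ≤ s.card * N ^ m := by
  refine (Finset.abs_sum_le_sum_abs _ _).trans ?_
  rw [← nsmul_eq_mul]
  refine Finset.sum_le_card_nsmul _ _ _ fun i hi => ?_
  rw [abs_mul, abs_cast_sign, one_mul, abs_pow]
  exact pow_le_pow_left₀ (abs_nonneg _) (hN i hi) m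

section SignedPowerSum

variable {ι : Type*} [Fintype ι]

/-- The signed power sum `∑ᵢ σᵢ nᵢᵐ`. For `m = 1` it is the total momentum of the frequencies `n`,
for `m = 2` their resonance function, and for `m = 2k` the symbol of the time derivative of the
`k`-th Sobolev energy. -/
def signedPowerSum (σ : ι → ℤˣ) (m : ℕ) (n : ι → ℤ) : ℤ := ∑ i, σ i * n i ^ m

lemma cast_signedPowerSum_eq_three_add [DecidableEq ι] (σ : ι → ℤˣ) (n : ι → ℤ) (m : ℕ)
    {i₀ i₁ i₂ : ι} (h₀₁ : i₀ ≠ i₁) (h₀₂ : i₀ ≠ i₂) (h₁₂ : i₁ ≠ i₂) :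
    (signedPowerSum σ m n : ℝ) = ((σ i₀ : ℤ) : ℝ) * (n i₀ : ℝ) ^ m +
      ((σ i₁ : ℤ) : ℝ) * (n i₁ : ℝ) ^ m + ((σ i₂ : ℤ) : ℝ) * (n i₂ : ℝ) ^ m +
      ∑ i ∈ Finset.univ \ {i₀, i₁, i₂}, ((σ i : ℤ) : ℝ) * (n i : ℝ) ^ m := by
  rw [signedPowerSum, ← Finset.sum_sdiff (Finset.subset_univ {i₀, i₁, i₂}),
    Finset.sum_insert (by simp [h₀₁, h₀₂]), Finset.sum_insert (by simp [h₁₂]),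
    Finset.sum_singleton]
  push_cast
  ring

lemma exists_abs_signedPowerSum_le (k : ℕ) (hι : 4 ≤ Fintype.card ι) : ∃ C : ℝ, 0 ≤ C ∧
    ∀ (σ : ι → ℤˣ) (n : ι → ℤ), signedPowerSum σ 1 n = 0 →
    ∃ f : Fin 4 → ι, Function.Injective f ∧
      |(signedPowerSum σ (2 * (k + 1)) n : ℝ)| ≤
        C * (|(n (f 0) : ℝ)| ^ k * |(n (f 1) : ℝ)| ^ k *
          (|(signedPowerSum σ 2 n : ℝ)| + |(n (f 2) : ℝ)| * |(n (f 3) : ℝ)|)) := by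
  classical
  obtain ⟨C, hC, hbound⟩ := exists_abs_signed_pow_add_le k (D := Fintype.card ι)
    (by exact_mod_cast (by omega : 1 ≤ Fintype.card ι))
  refine ⟨C, hC, fun σ n hn => ?_⟩
  obtain ⟨f, hf, h₁₀, h₂₁, h₃₂, hrest⟩ := exists_four_largest hι (fun i => |(n i : ℝ)|)
  refine ⟨f, hf, ?_⟩
  have hsplit := fun m => cast_signedPowerSum_eq_three_add σ n m
    (hf.ne (by decide : (0 : Fin 4) ≠ 1)) (hf.ne (by decide : (0 : Fin 4) ≠ 2))
    (hf.ne (by decide : (1 : Fin 4) ≠ 2))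
  have htail : ∀ m, |∑ i ∈ Finset.univ \ {f 0, f 1, f 2}, ((σ i : ℤ) : ℝ) * (n i : ℝ) ^ m| ≤
      Fintype.card ι * |(n (f 3) : ℝ)| ^ m := by
    intro m
    refine (abs_sum_sign_mul_pow_le σ n m (N := |(n (f 3) : ℝ)|) fun i hi => ?_).trans ?_
    · simp only [Finset.mem_sdiff, Finset.mem_insert, Finset.mem_singleton, not_or] at hi
      exact hrest i hi.2.1 hi.2.2.1 hi.2.2.2
    · gcongr
      exact Finset.card_le_univ _
  have hlin := hsplit 1
  rw [hn, Int.cast_zero] at hlin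
  rw [hsplit 2, hsplit (2 * (k + 1))]
  refine hbound (e₁ := ∑ i ∈ Finset.univ \ {f 0, f 1, f 2}, ((σ i : ℤ) : ℝ) * (n i : ℝ))
    (abs_cast_sign _) (abs_cast_sign _) (abs_cast_sign _) h₁₀ h₂₁ h₃₂ (abs_nonneg _)
    ?_ (htail 2) (htail _) ?_
  · simpa only [pow_one] using htail 1
  · simpa only [pow_one] using hlin.symm

end SignedPowerSum

/-! ### Square-summable families in `ℝ≥0∞` -/

section l2Norm

variable {α β : Type*}

/-- The `ℓ²` norm of a family of extended nonnegative reals. -/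
def l2Norm (f : α → ℝ≥0∞) : ℝ≥0∞ := (∑' a, f a ^ 2) ^ (1 / 2 : ℝ)

lemma l2Norm_sq (f : α → ℝ≥0∞) : l2Norm f ^ 2 = ∑' a, f a ^ 2 := by
  rw [l2Norm, ← ENNReal.rpow_natCast, ← ENNReal.rpow_mul]
  norm_num

lemma l2Norm_le_iff {f : α → ℝ≥0∞} {A : ℝ≥0∞} : l2Norm f ≤ A ↔ ∑' a, f a ^ 2 ≤ A ^ 2 := by
  rw [← l2Norm_sq, ENNReal.pow_le_pow_left_iff two_ne_zero]

lemma l2Norm_mono {f g : α → ℝ≥0∞} (h : ∀ a, f a ≤ g a) : l2Norm f ≤ l2Norm g :=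
  l2Norm_le_iff.2 <| (l2Norm_sq g).symm ▸ ENNReal.tsum_le_tsum fun a => by gcongr; exact h a

lemma l2Norm_comp_le {e : α → β} (he : Function.Injective e) (f : β → ℝ≥0∞) :
    l2Norm (fun a => f (e a)) ≤ l2Norm f :=
  l2Norm_le_iff.2 <| (l2Norm_sq f).symm ▸
    ENNReal.tsum_comp_le_tsum_of_injective he fun b => f b ^ 2

lemma tsum_mul_le_l2Norm_mul_l2Norm (f g : α → ℝ≥0∞) :
    ∑' a, f a * g a ≤ l2Norm f * l2Norm g := by
  let _ : MeasurableSpace α := ⊤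
  have h := ENNReal.lintegral_mul_le_Lp_mul_Lq (Measure.count : Measure α)
    Real.HolderConjugate.two_two (f := f) (g := g)
    measurable_from_top.aemeasurable measurable_from_top.aemeasurable
  simpa only [Pi.mul_apply, lintegral_count, ENNReal.rpow_two, l2Norm] using h

lemma tsum_pi_fin_prod (d : ℕ) (g : Fin d → α → ℝ≥0∞) :
    ∑' b : Fin d → α, ∏ i, g i (b i) = ∏ i, ∑' a, g i a := by
  induction d with
  | zero => simp
  | succ d ih =>
    rw [← (Fin.consEquiv fun _ : Fin (d + 1) => α).tsum_eq, ENNReal.tsum_prod',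
      Fin.prod_univ_succ]
    simp only [Fin.consEquiv_apply, Fin.prod_univ_succ, Fin.cons_zero, Fin.cons_succ]
    simp_rw [ENNReal.tsum_mul_left, ENNReal.tsum_mul_right]
    rw [ih fun i => g i.succ]

lemma tsum_pi_prod {ι : Type*} [Fintype ι] (g : ι → α → ℝ≥0∞) :
    ∑' b : ι → α, ∏ i, g i (b i) = ∏ i, ∑' a, g i a := by
  let e := Fintype.equivFin ι
  rw [← (Equiv.arrowCongr e.symm (Equiv.refl α)).tsum_eq, ← Equiv.prod_comp e.symm,
    ← tsum_pi_fin_prod _ fun i => g (e.symm i)]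
  refine tsum_congr fun b => ?_
  rw [← Equiv.prod_comp e.symm]
  simp

lemma l2Norm_pi_prod {ι : Type*} [Fintype ι] (g : ι → α → ℝ≥0∞) :
    l2Norm (fun b : ι → α => ∏ i, g i (b i)) = ∏ i, l2Norm (g i) := by
  simp_rw [l2Norm, ← Finset.prod_pow, tsum_pi_prod fun i a => g i a ^ 2]
  exact (ENNReal.prod_rpow_of_nonneg (by norm_num)).symm

lemma l2Norm_fst_mul_le {K : ℝ≥0∞} (f : α → ℝ≥0∞) (w : α → β → ℝ≥0∞)
    (hw : ∀ a, ∑' b, w a b ^ 2 ≤ K) :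
    l2Norm (fun z : α × β => f z.1 * w z.1 z.2) ≤ K ^ (1 / 2 : ℝ) * l2Norm f := by
  rw [l2Norm, l2Norm, ← ENNReal.mul_rpow_of_nonneg _ _ (by norm_num),
    ENNReal.tsum_prod (f := fun a b => (f a * w a b) ^ 2)]
  gcongr
  simp_rw [mul_pow, ENNReal.tsum_mul_left]
  calc ∑' a, f a ^ 2 * ∑' b, w a b ^ 2 ≤ ∑' a, f a ^ 2 * K := by gcongr with a; exact hw a
    _ = K * ∑' a, f a ^ 2 := by rw [ENNReal.tsum_mul_right, mul_comm]

lemma tsum_tsum_mul_mul_le {K : ℝ≥0∞} (f : α → ℝ≥0∞) (g : β → ℝ≥0∞) (w v : α → β → ℝ≥0∞)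
    (hw : ∀ b, ∑' a, w a b ^ 2 ≤ K) (hv : ∀ a, ∑' b, v a b ^ 2 ≤ K) :
    ∑' a, ∑' b, f a * g b * (w a b * v a b) ≤ K * (l2Norm f * l2Norm g) := by
  have hg : l2Norm (fun z : α × β => g z.2 * w z.1 z.2) ≤ K ^ (1 / 2 : ℝ) * l2Norm g :=
    (l2Norm_comp_le Prod.swap_injective _).trans (l2Norm_fst_mul_le g (fun b a => w a b) hw)
  have hK : K ^ (1 / 2 : ℝ) * K ^ (1 / 2 : ℝ) = K := by
    rw [← ENNReal.rpow_add_of_nonneg _ _ (by norm_num) (by norm_num)]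
    norm_num
  calc ∑' a, ∑' b, f a * g b * (w a b * v a b)
      = ∑' z : α × β, f z.1 * v z.1 z.2 * (g z.2 * w z.1 z.2) := by
        rw [ENNReal.tsum_prod (f := fun a b => f a * v a b * (g b * w a b))]
        exact tsum_congr fun a => tsum_congr fun b => by ring
    _ ≤ K ^ (1 / 2 : ℝ) * l2Norm f * (K ^ (1 / 2 : ℝ) * l2Norm g) :=
        (tsum_mul_le_l2Norm_mul_l2Norm _ _).trans (mul_le_mul' (l2Norm_fst_mul_le f v hv) hg)
    _ = K * (l2Norm f * l2Norm g) := by rw [mul_mul_mul_comm, hK]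

end l2Norm

/-! ### Power weights on `ℤ` -/

section decayWeight

/-- The weight `⟨z⟩⁻ˢ`, with the bracket `⟨z⟩ = max 1 |z|`. -/
def decayWeight (s : ℝ) (z : ℤ) : ℝ≥0∞ := ((max 1 z.natAbs : ℕ) : ℝ≥0∞) ^ (-s)

lemma one_le_cast_max_one (n : ℕ) : (1 : ℝ≥0∞) ≤ (max 1 n : ℕ) :=
  mod_cast le_max_left 1 n

lemma decayWeight_add (s t : ℝ) (z : ℤ) :
    decayWeight (s + t) z = decayWeight s z * decayWeight t z := by
  rw [decayWeight, neg_add, ENNReal.rpow_add _ _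
    (one_pos.trans_le (one_le_cast_max_one z.natAbs)).ne' (ENNReal.natCast_ne_top _)]
  rfl

lemma decayWeight_antitone (z : ℤ) : Antitone fun s => decayWeight s z := fun _ _ h =>
  ENNReal.rpow_le_rpow_of_exponent_le (one_le_cast_max_one _) (neg_le_neg h)

lemma decayWeight_le_one {s : ℝ} (hs : 0 ≤ s) (z : ℤ) : decayWeight s z ≤ 1 :=
  (decayWeight_antitone z hs).trans_eq (by simp [decayWeight])

lemma tsum_decayWeight_ne_top {s : ℝ} (hs : 1 < s) : ∑' z, decayWeight s z ≠ ⊤ := by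
  have hsum : Summable fun z : ℤ => ((max 1 z.natAbs : ℕ) : ℝ) ^ (-s) := by
    refine (Real.summable_abs_int_rpow hs).congr_cofinite ?_
    filter_upwards [(Set.finite_singleton (0 : ℤ)).compl_mem_cofinite] with z hz
    rw [max_eq_right (Int.natAbs_pos.2 hz), Nat.cast_natAbs, Int.cast_abs]
  convert hsum.tsum_ofReal_ne_top using 4 with z
  rw [decayWeight, ← ENNReal.ofReal_rpow_of_pos (by positivity), ENNReal.ofReal_natCast]

lemma decayWeight_le_mul_of_sq_le {s : ℝ} {c : ℕ} {x z : ℤ} (hs : 0 ≤ s)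
    (h : max 1 |x| ^ 2 ≤ c * max 1 |z|) :
    decayWeight s z ≤ (c : ℝ≥0∞) ^ s * decayWeight (2 * s) x := by
  have hpow : ((max 1 x.natAbs : ℕ) : ℝ≥0∞) ^ (2 * s)
      ≤ (c : ℝ≥0∞) ^ s * ((max 1 z.natAbs : ℕ) : ℝ≥0∞) ^ s := by
    rw [ENNReal.rpow_mul, ← ENNReal.mul_rpow_of_nonneg _ _ hs, ENNReal.rpow_two]
    gcongr
    rw [← Int.natCast_natAbs, ← Int.natCast_natAbs] at h
    exact_mod_cast h
  have hne : ∀ (n : ℕ) (t : ℝ), ((max 1 n : ℕ) : ℝ≥0∞) ^ t ≠ 0 := fun n t =>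
    (ENNReal.rpow_pos (one_pos.trans_le (one_le_cast_max_one n)) (ENNReal.natCast_ne_top _)).ne'
  have hne_top : ∀ (n : ℕ) (t : ℝ), 0 ≤ t → ((max 1 n : ℕ) : ℝ≥0∞) ^ t ≠ ⊤ := fun n t ht =>
    ENNReal.rpow_ne_top_of_nonneg ht (ENNReal.natCast_ne_top _)
  rw [decayWeight, decayWeight, ENNReal.rpow_neg, ENNReal.rpow_neg, ← div_eq_mul_inv,
    ENNReal.le_div_iff_mul_le (.inl (hne _ _)) (.inl (hne_top _ _ (by positivity))),
    ENNReal.inv_mul_le_iff (hne _ _) (hne_top _ _ hs)]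
  exact hpow.trans_eq (mul_comm _ _)

end decayWeight

/-! ### Sums over the momentum hyperplane -/

section momentumSum

variable {ι κ : Type*} [Fintype ι] [Fintype κ]

lemma signedPowerSum_sumElim (σ : ι ⊕ κ → ℤˣ) (j : ℕ) (x : ι → ℤ) (y : κ → ℤ) :
    signedPowerSum σ j (Sum.elim x y)
      = signedPowerSum (σ ∘ Sum.inl) j x + signedPowerSum (σ ∘ Sum.inr) j y := by
  simp [signedPowerSum]

lemma signedPowerSum_comp_equiv (e : κ ≃ ι) (σ : ι → ℤˣ) (j : ℕ) (n : ι → ℤ) :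
    signedPowerSum (σ ∘ e) j (n ∘ e) = signedPowerSum σ j n :=
  e.sum_comp fun i => (σ i : ℤ) * n i ^ j

/-- The sum of `G` over all frequency vectors `n` of total signed momentum `∑ σᵢ nᵢ = m`. -/
def momentumSum (σ : ι → ℤˣ) (m : ℤ) (G : (ι → ℤ) → ℝ≥0∞) : ℝ≥0∞ :=
  ∑' n, if signedPowerSum σ 1 n = m then G n else 0

lemma momentumSum_mono {σ : ι → ℤˣ} {m : ℤ} {G H : (ι → ℤ) → ℝ≥0∞}
    (h : ∀ n, signedPowerSum σ 1 n = m → G n ≤ H n) : momentumSum σ m G ≤ momentumSum σ m H := by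
  refine ENNReal.tsum_le_tsum fun n => ?_
  split_ifs with hn
  exacts [h n hn, le_rfl]

lemma momentumSum_mul_right (σ : ι → ℤˣ) (m : ℤ) (G : (ι → ℤ) → ℝ≥0∞) (c : ℝ≥0∞) :
    momentumSum σ m (fun n => G n * c) = momentumSum σ m G * c := by
  simp_rw [momentumSum, ← ENNReal.tsum_mul_right, ite_mul, zero_mul]

lemma momentumSum_comp_equiv (e : κ ≃ ι) (σ : ι → ℤˣ) (m : ℤ) (G : (ι → ℤ) → ℝ≥0∞) :
    momentumSum (σ ∘ e) m (fun n => G (n ∘ e.symm)) = momentumSum σ m G := by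
  rw [momentumSum, ← (e.symm.arrowCongr (Equiv.refl ℤ)).tsum_eq]
  refine tsum_congr fun n => ?_
  have he : e.symm.arrowCongr (Equiv.refl ℤ) n = n ∘ e := rfl
  rw [he, signedPowerSum_comp_equiv, Function.comp_assoc, Equiv.self_comp_symm, Function.comp_id]

lemma momentumSum_sum (σ : ι ⊕ κ → ℤˣ) (m : ℤ) (G : (ι ⊕ κ → ℤ) → ℝ≥0∞) :
    momentumSum σ m G = ∑' y : κ → ℤ,
      momentumSum (σ ∘ Sum.inl) (m - signedPowerSum (σ ∘ Sum.inr) 1 y)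
        (fun x => G (Sum.elim x y)) := by
  simp_rw [momentumSum]
  rw [← (Equiv.sumArrowEquivProdArrow ι κ ℤ).symm.tsum_eq, ENNReal.tsum_prod', ENNReal.tsum_comm]
  refine tsum_congr fun y => tsum_congr fun x => ?_
  have hxy : (Equiv.sumArrowEquivProdArrow ι κ ℤ).symm (x, y) = Sum.elim x y := rfl
  rw [hxy, signedPowerSum_sumElim]
  simp only [eq_sub_iff_add_eq]

lemma momentumSum_fin_two (σ : Fin 2 → ℤˣ) (m : ℤ) (G : (Fin 2 → ℤ) → ℝ≥0∞) :
    momentumSum σ m G = ∑' a : ℤ, G ![a, σ 1 * (m - σ 0 * a)] := by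
  rw [momentumSum, ← (finTwoArrowEquiv ℤ).symm.tsum_eq, ENNReal.tsum_prod']
  refine tsum_congr fun a => ?_
  rw [← tsum_ite_eq (σ 1 * (m - σ 0 * a)) fun b => G ![a, b]]
  refine tsum_congr fun b => if_congr ?_ rfl rfl
  simp only [signedPowerSum, Fin.sum_univ_two, finTwoArrowEquiv_symm_apply, pow_one,
    Matrix.cons_val_zero, Matrix.cons_val_one]
  rcases Int.units_eq_one_or (σ 1) with h | h <;> simp only [h, Units.val_one, Units.val_neg] <;>
    constructor <;> intro <;> linarith

lemma momentumSum_fin_two_prod_le (σ : Fin 2 → ℤˣ) (m : ℤ) (g : Fin 2 → ℤ → ℝ≥0∞) :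
    momentumSum σ m (fun n => ∏ i, g i (n i)) ≤ ∏ i, l2Norm (g i) := by
  have hinj : Function.Injective fun a : ℤ => (σ 1 * (m - σ 0 * a) : ℤ) := fun a b h => by
    simpa using h
  simp only [momentumSum_fin_two, Fin.prod_univ_two, Matrix.cons_val_zero, Matrix.cons_val_one]
  exact (tsum_mul_le_l2Norm_mul_l2Norm _ _).trans (mul_le_mul' le_rfl (l2Norm_comp_le hinj (g 1)))

lemma momentumSum_prod_comp_equiv (e : κ ≃ ι) (σ : ι → ℤˣ) (m : ℤ) (g : ι → ℤ → ℝ≥0∞)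
    (W : ℤ → ℝ≥0∞) :
    momentumSum (σ ∘ e) m (fun n => (∏ i, g (e i) (n i)) * W (signedPowerSum (σ ∘ e) 2 n))
      = momentumSum σ m (fun n => (∏ i, g i (n i)) * W (signedPowerSum σ 2 n)) := by
  rw [← momentumSum_comp_equiv e]
  refine congrArg _ (funext fun n => ?_)
  rw [← signedPowerSum_comp_equiv e, ← e.prod_comp, Function.comp_assoc, e.symm_comp_self]
  simp

lemma momentumSum_sum_prod_le (σ : ι ⊕ κ → ℤˣ) (g : ι ⊕ κ → ℤ → ℝ≥0∞) (W : ℤ → ℝ≥0∞)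
    {B : ℝ≥0∞} (hB : ∀ m l, momentumSum (σ ∘ Sum.inl) m (fun x =>
      (∏ i, g (Sum.inl i) (x i)) * W (signedPowerSum (σ ∘ Sum.inl) 2 x + l)) ≤ B) (m : ℤ) :
    momentumSum σ m (fun n => (∏ i, g i (n i)) * W (signedPowerSum σ 2 n))
      ≤ B * ∏ j, ∑' a, g (Sum.inr j) a := by
  rw [momentumSum_sum, ← tsum_pi_prod, ← ENNReal.tsum_mul_left]
  refine ENNReal.tsum_le_tsum fun y => ?_
  refine le_of_eq_of_le ?_ (mul_le_mul' (hB (m - signedPowerSum (σ ∘ Sum.inr) 1 y)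
    (signedPowerSum (σ ∘ Sum.inr) 2 y)) le_rfl)
  rw [← momentumSum_mul_right]
  simp only [Fintype.prod_sum_type, Sum.elim_inl, Sum.elim_inr, signedPowerSum_sumElim,
    mul_right_comm]

lemma momentumSum_prod_le {f : κ → ι} (hf : Function.Injective f) (σ : ι → ℤˣ)
    (g : ι → ℤ → ℝ≥0∞) (W : ℤ → ℝ≥0∞) {B L : ℝ≥0∞} (hL : 1 ≤ L)
    (hg : ∀ i ∉ Set.range f, ∑' a, g i a ≤ L)
    (hB : ∀ m l, momentumSum (σ ∘ f) m (fun x =>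
      (∏ j, g (f j) (x j)) * W (signedPowerSum (σ ∘ f) 2 x + l)) ≤ B) (m : ℤ) :
    momentumSum σ m (fun n => (∏ i, g i (n i)) * W (signedPowerSum σ 2 n))
      ≤ B * L ^ Fintype.card ι := by
  classical
  let e : κ ⊕ ↥(Set.range f)ᶜ ≃ ι :=
    ((Equiv.ofInjective f hf).sumCongr (Equiv.refl _)).trans (Equiv.Set.sumCompl _)
  have h := momentumSum_sum_prod_le (σ ∘ e) (g ∘ e) W hB m
  rw [← momentumSum_prod_comp_equiv e]
  calc _ ≤ B * ∏ j : ↥(Set.range f)ᶜ, ∑' a, g j a := h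
    _ ≤ B * L ^ Fintype.card ι := by
        gcongr
        refine (Finset.prod_le_pow_card Finset.univ _ L fun j _ => hg _ j.2).trans ?_
        exact pow_le_pow_right₀ hL (Fintype.card_subtype_le _)

end momentumSum

/-! ### The quadrilinear resonance estimate -/

section quadrilinear

lemma max_one_sq_le_of_nonneg {a r : ℕ} (hra : r * r ≤ a) (har : a < (r + 1) * (r + 1)) {d : ℤ}
    (hd : 0 ≤ d) : max 1 |d - r| ^ 2 ≤ 4 * max 1 |d ^ 2 - a| := by
  zify at hra har
  have hone := le_max_left 1 |d ^ 2 - a|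
  have habs := le_max_right 1 |d ^ 2 - a|
  suffices h : |d - r| ^ 2 ≤ 4 * max 1 |d ^ 2 - a| by
    rcases max_cases 1 |d - r| with ⟨h', -⟩ | ⟨h', -⟩ <;> rw [h'] <;> linarith
  rw [sq_abs]
  rcases le_or_gt d r with h | h
  · have hsq : (r - d) ^ 2 ≤ |d ^ 2 - a| := le_trans (by nlinarith) (neg_le_abs _)
    nlinarith
  · have hsq : (d - r - 1) ^ 2 ≤ |d ^ 2 - a| := le_trans (by nlinarith) (le_abs_self _)
    nlinarith [sq_nonneg (d - r - 2)]

lemma exists_max_one_sq_le (A : ℤ) : ∃ r : ℤ, ∀ d : ℤ,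
    max 1 |d - r| ^ 2 ≤ 4 * max 1 |d ^ 2 + A| ∨ max 1 |d + r| ^ 2 ≤ 4 * max 1 |d ^ 2 + A| := by
  rcases le_or_gt 0 A with hA | hA
  · refine ⟨0, fun d => Or.inl ?_⟩
    have h := max_one_sq_le_of_nonneg (a := 0) (r := 0) le_rfl one_pos (abs_nonneg d)
    simp only [Nat.cast_zero, sub_zero, abs_abs, sq_abs] at h ⊢
    refine h.trans ?_
    gcongr
    exact le_add_of_nonneg_right hA
  · obtain ⟨a, rfl⟩ : ∃ a : ℕ, A = -a := ⟨A.natAbs, by omega⟩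
    have main : ∀ d : ℤ, 0 ≤ d → _ := fun d =>
      max_one_sq_le_of_nonneg (Nat.sqrt_le a) (Nat.lt_succ_sqrt a)
    refine ⟨a.sqrt, fun d => ?_⟩
    rcases le_or_gt 0 d with h | h
    · exact Or.inl (main d h)
    · refine Or.inr ?_
      have hneg := main (-d) (by linarith)
      rwa [← neg_add', abs_neg, neg_sq] at hneg

/-- The constant of the level-set estimates for the quadratic resonance function. -/
def resonanceConst : ℝ≥0∞ := 16 * ∑' z, decayWeight (5 / 4) z

lemma resonanceConst_ne_top : resonanceConst ≠ ⊤ :=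
  ENNReal.mul_ne_top (by norm_num) (tsum_decayWeight_ne_top (by norm_num))

variable {σ : Fin 2 → ℤˣ}

lemma decayWeight_three_quarters_le {x z : ℤ} (h : max 1 |x| ^ 2 ≤ 8 * max 1 |z|) :
    decayWeight (3 / 4) z ≤ 8 * decayWeight (5 / 4) x := by
  refine (decayWeight_le_mul_of_sq_le (c := 8) (by norm_num) (mod_cast h)).trans ?_
  gcongr
  · exact (ENNReal.rpow_le_rpow_of_exponent_le (by norm_num) (by norm_num : (3 / 4 : ℝ) ≤ 1)).trans
      (by simp)
  · exact decayWeight_antitone x (by norm_num)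

lemma abs_sq_add_eq_two_mul_abs (s : ℤˣ) (a m l : ℤ) :
    |(2 * a - s * m) ^ 2 + (m ^ 2 + 2 * s * l)|
      = 2 * |(s * a ^ 2 + s * (s * (m - s * a)) ^ 2 + l : ℤ)| := by
  rw [← abs_two, ← abs_mul]
  rcases Int.units_eq_one_or s with rfl | rfl
  · simp only [Units.val_one]
    ring_nf
  · rw [← abs_neg]
    simp only [Units.val_neg, Units.val_one]
    ring_nf

lemma momentumSum_decayWeight_le_of_eq (h : σ 0 = σ 1) (m l : ℤ) :
    momentumSum σ m (fun n => decayWeight (3 / 4) (signedPowerSum σ 2 n + l))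
      ≤ resonanceConst := by
  simp only [momentumSum_fin_two, signedPowerSum, Fin.sum_univ_two, Matrix.cons_val_zero,
    Matrix.cons_val_one, ← h]
  generalize σ 0 = s
  obtain ⟨r, hr⟩ := exists_max_one_sq_le (m ^ 2 + 2 * s * l)
  set q : ℤ → ℤ := fun a => s * a ^ 2 + s * (s * (m - s * a)) ^ 2 + l
  have hmax : ∀ a, max 1 (2 * |q a|) ≤ 2 * max 1 |q a| := fun a =>
    max_le (by linarith [le_max_left 1 |q a|]) (by linarith [le_max_right 1 |q a|])
  have hle : ∀ a, decayWeight (3 / 4) (q a)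
      ≤ 8 * decayWeight (5 / 4) (2 * a - s * m - r) + 8 * decayWeight (5 / 4) (2 * a - s * m + r) :=
    fun a => by
      rcases hr (2 * a - s * m) with hr | hr <;> rw [abs_sq_add_eq_two_mul_abs] at hr
      · exact (decayWeight_three_quarters_le (by linarith [hmax a])).trans le_self_add
      · exact (decayWeight_three_quarters_le (by linarith [hmax a])).trans le_add_self
  have hshift : ∀ c, ∑' a, decayWeight (5 / 4) (2 * a - s * m + c) ≤ ∑' z, decayWeight (5 / 4) z :=
    fun c => ENNReal.tsum_comp_le_tsum_of_injective (f := fun a : ℤ => 2 * a - s * m + c)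
      (fun a b hab => by simpa using hab) _
  calc ∑' a, decayWeight (3 / 4) (q a)
      ≤ 8 * ∑' a, decayWeight (5 / 4) (2 * a - s * m - r)
        + 8 * ∑' a, decayWeight (5 / 4) (2 * a - s * m + r) := by
        rw [← ENNReal.tsum_mul_left, ← ENNReal.tsum_mul_left, ← ENNReal.tsum_add]
        exact ENNReal.tsum_le_tsum hle
    _ ≤ 8 * ∑' z, decayWeight (5 / 4) z + 8 * ∑' z, decayWeight (5 / 4) z :=
        add_le_add (mul_le_mul' le_rfl (hshift (-r))) (mul_le_mul' le_rfl (hshift r))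
    _ = resonanceConst := by rw [← add_mul, resonanceConst]; norm_num

/-- On the line `σ(a - b) = m` the resonance function is affine in `a` with slope `± 2m`. -/
lemma momentumSum_decayWeight_le_of_ne (h : σ 0 ≠ σ 1) {m : ℤ} (hm : m ≠ 0) (l : ℤ) :
    momentumSum σ m (fun n => decayWeight (5 / 4) (signedPowerSum σ 2 n + l))
      ≤ resonanceConst := by
  simp only [momentumSum_fin_two, signedPowerSum, Fin.sum_univ_two, Matrix.cons_val_zero,
    Matrix.cons_val_one]
  have hinj : Function.Injective fun a : ℤ =>
      (σ 0 * a ^ 2 + σ 1 * (σ 1 * (m - σ 0 * a)) ^ 2 + l : ℤ) := fun a b hab => by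
    refine mul_left_cancel₀ hm ?_
    rcases Int.units_eq_one_or (σ 0) with h₀ | h₀ <;>
      rcases Int.units_eq_one_or (σ 1) with h₁ | h₁ <;>
      simp only [h₀, h₁, Units.val_neg, Units.val_one, ne_eq, not_true_eq_false] at h hab ⊢ <;>
      linarith
  exact (ENNReal.tsum_comp_le_tsum_of_injective hinj _).trans
    (le_mul_of_one_le_left' (by norm_num))

lemma momentumSum_decayWeight_le {m : ℤ} (hm : σ 0 ≠ σ 1 → m ≠ 0) (l : ℤ) :
    momentumSum σ m (fun n => decayWeight (5 / 4) (signedPowerSum σ 2 n + l))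
      ≤ resonanceConst := by
  by_cases h : σ 0 = σ 1
  · refine le_trans ?_ (momentumSum_decayWeight_le_of_eq h m l)
    exact momentumSum_mono fun n _ => decayWeight_antitone _ (by norm_num)
  · exact momentumSum_decayWeight_le_of_ne h (hm h) l

lemma decayWeight_sq (s : ℝ) (z : ℤ) : decayWeight s z ^ 2 = decayWeight (2 * s) z := by
  rw [two_mul, decayWeight_add, sq]

lemma tsum_resonant_le (σ τ : Fin 2 → ℤˣ) (m l : ℤ) (f g : Fin 2 → ℤ → ℝ≥0∞) :
    ∑' y : Fin 2 → ℤ, (if signedPowerSum τ 1 y = 0 then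
      momentumSum σ (m - signedPowerSum τ 1 y) (fun x => (∏ i, f i (x i)) * (∏ i, g i (y i))
        * decayWeight 1 (signedPowerSum σ 2 x + signedPowerSum τ 2 y + l)) else 0)
      ≤ (∏ i, l2Norm (f i)) * ∏ i, l2Norm (g i) :=
  calc _ ≤ ∑' y : Fin 2 → ℤ, momentumSum σ m (fun x => ∏ i, f i (x i))
          * if signedPowerSum τ 1 y = 0 then ∏ i, g i (y i) else 0 := by
        refine ENNReal.tsum_le_tsum fun y => ?_
        split_ifs with hy
        · rw [hy, sub_zero, ← momentumSum_mul_right]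
          exact momentumSum_mono fun x _ =>
            mul_le_of_le_one_right' (decayWeight_le_one zero_le_one _)
        · exact zero_le
    _ = momentumSum σ m (fun x => ∏ i, f i (x i)) * momentumSum τ 0 (fun y => ∏ i, g i (y i)) :=
        ENNReal.tsum_mul_left
    _ ≤ _ := mul_le_mul' (momentumSum_fin_two_prod_le σ m f) (momentumSum_fin_two_prod_le τ 0 g)

lemma tsum_nonresonant_decayWeight_sq_le (σ : Fin 2 → ℤˣ) (m l : ℤ) :
    ∑' n : Fin 2 → ℤ, (if signedPowerSum σ 1 n = m ∧ (σ 0 ≠ σ 1 → signedPowerSum σ 1 n ≠ 0) then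
      decayWeight (5 / 8) (signedPowerSum σ 2 n + l) else 0) ^ 2 ≤ resonanceConst := by
  by_cases hm : σ 0 ≠ σ 1 → m ≠ 0
  · refine le_trans (ENNReal.tsum_le_tsum fun n => ?_) (momentumSum_decayWeight_le hm l)
    by_cases hn : signedPowerSum σ 1 n = m
    · rw [if_pos ⟨hn, hn ▸ hm⟩, if_pos hn, decayWeight_sq]
      exact decayWeight_antitone _ (by norm_num)
    · simp [hn]
  · refine le_of_eq_of_le (ENNReal.tsum_eq_zero.2 fun n => ?_) zero_le
    rw [if_neg fun ⟨hn, hresonant⟩ => hm (hn ▸ hresonant), sq, zero_mul]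

/-- Schur's test, with the weight `⟨Ω⟩⁻¹` distributed as `⟨Ω⟩^(-3/8) ⟨Ω⟩^(-5/8)`: for fixed `y` the
resonance function is quadratic in `x`, for fixed `x` it is quadratic or affine in `y`. -/
lemma tsum_nonresonant_le (h : σ 0 = σ 1) (τ : Fin 2 → ℤˣ) (m l : ℤ)
    (f g : (Fin 2 → ℤ) → ℝ≥0∞) :
    ∑' y : Fin 2 → ℤ, (if τ 0 ≠ τ 1 → signedPowerSum τ 1 y ≠ 0 then
      momentumSum σ (m - signedPowerSum τ 1 y) (fun x => f x * g y
        * decayWeight 1 (signedPowerSum σ 2 x + signedPowerSum τ 2 y + l)) else 0)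
      ≤ resonanceConst * (l2Norm f * l2Norm g) := by
  set Q : (Fin 2 → ℤ) → (Fin 2 → ℤ) → ℤ :=
    fun y x => signedPowerSum σ 2 x + signedPowerSum τ 2 y + l
  let w : (Fin 2 → ℤ) → (Fin 2 → ℤ) → ℝ≥0∞ := fun y x =>
    if signedPowerSum τ 1 y = m - signedPowerSum σ 1 x ∧ (τ 0 ≠ τ 1 → signedPowerSum τ 1 y ≠ 0)
    then decayWeight (5 / 8) (Q y x) else 0
  let v : (Fin 2 → ℤ) → (Fin 2 → ℤ) → ℝ≥0∞ := fun y x =>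
    if signedPowerSum σ 1 x = m - signedPowerSum τ 1 y then decayWeight (3 / 8) (Q y x) else 0
  have hw : ∀ x, ∑' y, w y x ^ 2 ≤ resonanceConst := fun x => by
    refine le_of_eq_of_le (tsum_congr fun y => ?_)
      (tsum_nonresonant_decayWeight_sq_le τ (m - signedPowerSum σ 1 x) (signedPowerSum σ 2 x + l))
    simp only [w, Q, add_assoc, add_left_comm]
  have hv : ∀ y, ∑' x, v y x ^ 2 ≤ resonanceConst := fun y => by
    refine le_of_eq_of_le (tsum_congr fun x => ?_)
      (momentumSum_decayWeight_le_of_eq h (m - signedPowerSum τ 1 y) (signedPowerSum τ 2 y + l))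
    simp only [v, Q, ite_pow, decayWeight_sq, add_assoc]
    norm_num
  rw [mul_comm (l2Norm f)]
  refine le_trans (ENNReal.tsum_le_tsum fun y => ?_) (tsum_tsum_mul_mul_le g f w v hw hv)
  split_ifs with hy
  · refine ENNReal.tsum_le_tsum fun x => ?_
    split_ifs with hx
    · have hx' : signedPowerSum τ 1 y = m - signedPowerSum σ 1 x := by linarith
      simp only [w, v]
      rw [if_pos hx, if_pos ⟨hx', hy⟩, ← decayWeight_add, mul_comm (g y)]
      norm_num [Q]
    · exact zero_le
  · exact zero_le

lemma momentumSum_sum_quadrilinear_le {σ : Fin 2 ⊕ Fin 2 → ℤˣ}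
    (h : σ (Sum.inl 0) = σ (Sum.inl 1)) (m l : ℤ) (g : Fin 2 ⊕ Fin 2 → ℤ → ℝ≥0∞) :
    momentumSum σ m (fun n => (∏ i, g i (n i)) * decayWeight 1 (signedPowerSum σ 2 n + l))
      ≤ (1 + resonanceConst) * ∏ i, l2Norm (g i) := by
  have hres := tsum_resonant_le (σ ∘ Sum.inl) (σ ∘ Sum.inr) m l (g ∘ Sum.inl) (g ∘ Sum.inr)
  have hnonres := tsum_nonresonant_le (σ := σ ∘ Sum.inl) h (σ ∘ Sum.inr) m l
    (fun x => ∏ i, g (Sum.inl i) (x i)) (fun y => ∏ i, g (Sum.inr i) (y i))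
  rw [l2Norm_pi_prod, l2Norm_pi_prod] at hnonres
  rw [momentumSum_sum, add_mul, one_mul, Fintype.prod_sum_type]
  simp only [Fintype.prod_sum_type, Sum.elim_inl, Sum.elim_inr, signedPowerSum_sumElim]
  refine le_trans ?_ (add_le_add hres hnonres)
  rw [← ENNReal.tsum_add]
  refine ENNReal.tsum_le_tsum fun y => ?_
  by_cases hy : signedPowerSum (σ ∘ Sum.inr) 1 y = 0
  · rw [if_pos hy]
    exact le_self_add
  · rw [if_pos (fun _ => hy : (σ ∘ Sum.inr) 0 ≠ (σ ∘ Sum.inr) 1 → _)]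
    exact le_add_self

lemma exists_equiv_eq (σ : Fin 4 → ℤˣ) :
    ∃ e : Fin 2 ⊕ Fin 2 ≃ Fin 4, σ (e (Sum.inl 0)) = σ (e (Sum.inl 1)) := by
  have key : σ 0 = σ 1 ∨ σ 0 = σ 2 ∨ σ 2 = σ 1 := by
    rcases Int.units_eq_one_or (σ 0) with h₀ | h₀ <;>
      rcases Int.units_eq_one_or (σ 1) with h₁ | h₁ <;>
      rcases Int.units_eq_one_or (σ 2) with h₂ | h₂ <;> simp [h₀, h₁, h₂]
  let e : Fin 2 ⊕ Fin 2 ≃ Fin 4 := finSumFinEquiv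
  rcases key with h | h | h
  · exact ⟨e, h⟩
  · exact ⟨e.trans (Equiv.swap 1 2), h⟩
  · exact ⟨e.trans (Equiv.swap 0 2), h⟩

lemma momentumSum_quadrilinear_le (σ : Fin 4 → ℤˣ) (m l : ℤ) (g : Fin 4 → ℤ → ℝ≥0∞) :
    momentumSum σ m (fun n => (∏ i, g i (n i)) * decayWeight 1 (signedPowerSum σ 2 n + l))
      ≤ (1 + resonanceConst) * ∏ i, l2Norm (g i) := by
  obtain ⟨e, he⟩ := exists_equiv_eq σ
  have h := momentumSum_sum_quadrilinear_le (σ := σ ∘ e) he m l fun i => g (e i)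
  rwa [momentumSum_prod_comp_equiv e σ m g fun z => decayWeight 1 (z + l),
    e.prod_comp fun i => l2Norm (g i)] at h

end quadrilinear

/-! ### Multilinear forms on the zero-momentum hyperplane -/

section weighted

variable {ι κ : Type*} [Fintype ι] [Fintype κ]

lemma momentumSum_weighted_le {f : κ → ι} (hf : Function.Injective f) (σ : ι → ℤˣ)
    (w : κ → ℤ → ℝ≥0∞) (v : ι → ℤ → ℝ≥0∞) (W : ℤ → ℝ≥0∞) {B L : ℝ≥0∞} (hL : 1 ≤ L)
    (hv : ∀ i ∉ Set.range f, ∑' a, v i a ≤ L)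
    (hB : ∀ m l, momentumSum (σ ∘ f) m (fun x =>
      (∏ j, w j (x j) * v (f j) (x j)) * W (signedPowerSum (σ ∘ f) 2 x + l)) ≤ B) (m : ℤ) :
    momentumSum σ m (fun n =>
      (∏ j, w j (n (f j))) * (∏ i, v i (n i)) * W (signedPowerSum σ 2 n))
      ≤ B * L ^ Fintype.card ι := by
  have hext : ∀ i ∉ Set.range f, Function.extend f w 1 i = 1 := fun i hi =>
    Function.extend_apply' _ _ _ hi
  have h := momentumSum_prod_le (g := fun i a => Function.extend f w 1 i a * v i a) hf σ W hL
    (fun i hi => by simpa [hext i hi] using hv i hi)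
    (by simpa only [hf.extend_apply] using hB) m
  refine le_of_eq_of_le (congrArg _ (funext fun n => ?_)) h
  rw [Finset.prod_mul_distrib, Fintype.prod_of_injective f hf (fun j => w j (n (f j)))
    (fun i => Function.extend f w 1 i (n i)) (fun i hi => by simp [hext i hi])
    fun j => by rw [hf.extend_apply]]

lemma momentumSum_bilinear_weighted_le {f : Fin 2 → ι} (hf : Function.Injective f) (σ : ι → ℤˣ)
    (w : Fin 2 → ℤ → ℝ≥0∞) (v : ι → ℤ → ℝ≥0∞) {L : ℝ≥0∞} (hL : 1 ≤ L)
    (hv : ∀ i ∉ Set.range f, ∑' a, v i a ≤ L) (m : ℤ) :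
    momentumSum σ m (fun n => (∏ j, w j (n (f j))) * ∏ i, v i (n i))
      ≤ (∏ j, l2Norm fun a => w j a * v (f j) a) * L ^ Fintype.card ι := by
  simpa only [mul_one] using momentumSum_weighted_le hf σ w v (fun _ => 1) hL hv
    (fun m _ => by simpa only [mul_one] using momentumSum_fin_two_prod_le (σ ∘ f) m _) m

lemma momentumSum_quadrilinear_weighted_le {f : Fin 4 → ι} (hf : Function.Injective f)
    (σ : ι → ℤˣ) (w : Fin 4 → ℤ → ℝ≥0∞) (v : ι → ℤ → ℝ≥0∞) {L : ℝ≥0∞} (hL : 1 ≤ L)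
    (hv : ∀ i ∉ Set.range f, ∑' a, v i a ≤ L) (m : ℤ) :
    momentumSum σ m (fun n =>
      (∏ j, w j (n (f j))) * (∏ i, v i (n i)) * decayWeight 1 (signedPowerSum σ 2 n))
      ≤ (1 + resonanceConst) * (∏ j, l2Norm fun a => w j a * v (f j) a) * L ^ Fintype.card ι :=
  momentumSum_weighted_le hf σ w v (decayWeight 1) hL hv
    (fun m l => momentumSum_quadrilinear_le (σ ∘ f) m l _) m

end weighted

section symbols

variable {ι : Type*} [Fintype ι]

/-- The weight `|a|ˢ` of the homogeneous Sobolev seminorm of order `s`. -/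
def freqWeight (s : ℕ) (a : ℤ) : ℝ≥0∞ := (a.natAbs : ℝ≥0∞) ^ s

lemma freqWeight_eq_ofReal (s : ℕ) (a : ℤ) : freqWeight s a = ENNReal.ofReal (|(a : ℝ)| ^ s) := by
  rw [freqWeight, ENNReal.ofReal_pow (abs_nonneg _), ← Int.cast_abs, Int.abs_eq_natAbs,
    Int.cast_natCast, ENNReal.ofReal_natCast]

lemma decayWeight_one_eq_ofReal (z : ℤ) :
    decayWeight 1 z = ENNReal.ofReal (max 1 |(z : ℝ)|)⁻¹ := by
  rw [decayWeight, ENNReal.rpow_neg_one, ENNReal.ofReal_inv_of_pos (by positivity),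
    ← ENNReal.ofReal_natCast]
  push_cast [Nat.cast_natAbs]
  rfl

/-- The bounds on the Fourier coefficients `c` used in the multilinear estimates: the Wiener
norm and the homogeneous `H¹` seminorm are at most `L`, the `Hᵏ` seminorm is at most `L H`. -/
structure SobolevBound (k : ℕ) (c : ℤ → ℂ) (L H : ℝ≥0∞) : Prop where
  wiener : ∑' a, ‖c a‖ₑ ≤ L
  one : l2Norm (fun a => freqWeight 1 a * ‖c a‖ₑ) ≤ L
  high : l2Norm (fun a => freqWeight k a * ‖c a‖ₑ) ≤ L * H

/-- The symbol `∑ σᵢ nᵢ²ᵏ` divided by the resonance function `∑ σᵢ nᵢ²`; it vanishes on the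
resonant set because division by zero returns zero. -/
def normalFormSymbol (k : ℕ) (σ : ι → ℤˣ) (n : ι → ℤ) : ℂ :=
  signedPowerSum σ (2 * k) n / signedPowerSum σ 2 n

/-- The restriction of the symbol `∑ σᵢ nᵢ²ᵏ` to the resonant set `∑ σᵢ nᵢ² = 0`. -/
def resonantSymbol (k : ℕ) (σ : ι → ℤˣ) (n : ι → ℤ) : ℂ :=
  if signedPowerSum σ 2 n = 0 then signedPowerSum σ (2 * k) n else 0

/-- The symbol bound under which the multilinear form of `μ` is controlled by two factors in
`Hᵏ`, up to factors in `H¹` and in the Wiener algebra. -/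
def SymbolBound (k : ℕ) (σ : ι → ℤˣ) (K : ℝ≥0∞) (μ : (ι → ℤ) → ℂ) : Prop :=
  ∀ n, signedPowerSum σ 1 n = 0 → ∃ f : Fin 4 → ι, Function.Injective f ∧
    ‖μ n‖ₑ ≤ K * (freqWeight k (n (f 0)) * freqWeight k (n (f 1)) *
      (1 + freqWeight 1 (n (f 2)) * freqWeight 1 (n (f 3)) * decayWeight 1 (signedPowerSum σ 2 n)))

lemma norm_normalFormSymbol_le {k : ℕ} {σ : ι → ℤˣ} {n : ι → ℤ} {C a b : ℝ} (hC : 0 ≤ C)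
    (ha : 0 ≤ a) (hb : 0 ≤ b)
    (h : |(signedPowerSum σ (2 * k) n : ℝ)| ≤ C * (a * (|(signedPowerSum σ 2 n : ℝ)| + b))) :
    ‖normalFormSymbol k σ n‖ ≤ C * (a * (1 + b * (max 1 |(signedPowerSum σ 2 n : ℝ)|)⁻¹)) := by
  rw [normalFormSymbol, norm_div, Complex.norm_intCast, Complex.norm_intCast]
  by_cases h₀ : signedPowerSum σ 2 n = 0
  · simp only [h₀, Int.cast_zero, abs_zero, div_zero]
    positivity
  · have hone : (1 : ℝ) ≤ |(signedPowerSum σ 2 n : ℝ)| := mod_cast Int.one_le_abs h₀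
    have hpos : 0 < |(signedPowerSum σ 2 n : ℝ)| := by linarith
    rw [max_eq_right hone, div_le_iff₀ hpos]
    refine h.trans_eq ?_
    field_simp

lemma norm_resonantSymbol_le {k : ℕ} {σ : ι → ℤˣ} {n : ι → ℤ} {C a b : ℝ} (hC : 0 ≤ C)
    (ha : 0 ≤ a) (hb : 0 ≤ b)
    (h : |(signedPowerSum σ (2 * k) n : ℝ)| ≤ C * (a * (|(signedPowerSum σ 2 n : ℝ)| + b))) :
    ‖resonantSymbol k σ n‖ ≤ C * (a * (1 + b * (max 1 |(signedPowerSum σ 2 n : ℝ)|)⁻¹)) := by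
  rw [resonantSymbol]
  split_ifs with h₀
  · rw [Complex.norm_intCast]
    refine h.trans ?_
    simp only [h₀, Int.cast_zero, abs_zero, zero_add, max_eq_left zero_le_one, inv_one, mul_one]
    gcongr
    linarith
  · rw [norm_zero]
    positivity

lemma exists_symbolBound (k : ℕ) (hι : 4 ≤ Fintype.card ι) : ∃ K : ℝ≥0∞, K ≠ ⊤ ∧
    ∀ σ : ι → ℤˣ, SymbolBound k σ K (normalFormSymbol (k + 1) σ) ∧
      SymbolBound k σ K (resonantSymbol (k + 1) σ) := by
  obtain ⟨C, hC, h⟩ := exists_abs_signedPowerSum_le k hι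
  have hofReal : ∀ {z : ℂ} {a b c d Ω : ℝ}, 0 ≤ a → 0 ≤ b → 0 ≤ c → 0 ≤ d →
      ‖z‖ ≤ C * (a * b * (1 + c * d * (max 1 Ω)⁻¹)) →
      ‖z‖ₑ ≤ ENNReal.ofReal C * (ENNReal.ofReal a * ENNReal.ofReal b *
        (1 + ENNReal.ofReal c * ENNReal.ofReal d * ENNReal.ofReal (max 1 Ω)⁻¹)) := by
    intro z a b c d Ω ha hb hc hd hz
    rw [← ofReal_norm, ← ENNReal.ofReal_one, ← ENNReal.ofReal_mul hc,
      ← ENNReal.ofReal_mul (mul_nonneg hc hd), ← ENNReal.ofReal_add zero_le_one (by positivity),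
      ← ENNReal.ofReal_mul ha, ← ENNReal.ofReal_mul (mul_nonneg ha hb), ← ENNReal.ofReal_mul hC]
    exact ENNReal.ofReal_le_ofReal hz
  refine ⟨ENNReal.ofReal C, ENNReal.ofReal_ne_top, fun σ => ⟨fun n hn => ?_, fun n hn => ?_⟩⟩
  all_goals
    obtain ⟨f, hf, hn⟩ := h σ n hn
    refine ⟨f, hf, ?_⟩
    simp only [freqWeight_eq_ofReal, decayWeight_one_eq_ofReal, pow_one]
    refine hofReal (by positivity) (by positivity) (abs_nonneg _) (abs_nonneg _) ?_
  · exact norm_normalFormSymbol_le hC (by positivity) (by positivity) hn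
  · exact norm_resonantSymbol_le hC (by positivity) (by positivity) hn

/-- The summand at `n` of the multilinear form with symbol `μ` on the hyperplane of frequency
vectors of zero momentum. -/
def momentumTerm (σ : ι → ℤˣ) (μ : (ι → ℤ) → ℂ) (v : ι → ℤ → ℂ) (n : ι → ℤ) : ℂ :=
  if signedPowerSum σ 1 n = 0 then μ n * ∏ i, v i (n i) else 0

lemma tsum_enorm_momentumTerm (σ : ι → ℤˣ) (μ : (ι → ℤ) → ℂ) (v : ι → ℤ → ℂ) :
    ∑' n, ‖momentumTerm σ μ v n‖ₑ = momentumSum σ 0 (fun n => ‖μ n‖ₑ * ∏ i, ‖v i (n i)‖ₑ) := by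
  refine tsum_congr fun n => ?_
  rw [momentumTerm, apply_ite enorm, enorm_zero, enorm_mul]
  simp only [enorm_eq_nnnorm, nnnorm_prod, ENNReal.ofNNReal_finsetProd]

lemma momentumSum_add (σ : ι → ℤˣ) (m : ℤ) (G H : (ι → ℤ) → ℝ≥0∞) :
    momentumSum σ m (fun n => G n + H n) = momentumSum σ m G + momentumSum σ m H := by
  simp_rw [momentumSum, ← ENNReal.tsum_add]
  exact tsum_congr fun n => by split_ifs <;> simp

lemma momentumSum_mul_left (σ : ι → ℤˣ) (m : ℤ) (c : ℝ≥0∞) (G : (ι → ℤ) → ℝ≥0∞) :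
    momentumSum σ m (fun n => c * G n) = c * momentumSum σ m G := by
  simp_rw [mul_comm c, momentumSum_mul_right]

lemma momentumSum_finsetSum {α : Type*} (s : Finset α) (σ : ι → ℤˣ) (m : ℤ)
    (G : α → (ι → ℤ) → ℝ≥0∞) :
    momentumSum σ m (fun n => ∑ a ∈ s, G a n) = ∑ a ∈ s, momentumSum σ m (G a) := by
  simp_rw [momentumSum, ← Summable.tsum_finsetSum fun _ _ => ENNReal.summable]
  exact tsum_congr fun n => by split_ifs <;> simp

lemma momentumSum_symbol_le {k : ℕ} {σ : ι → ℤˣ} {v : ι → ℤ → ℂ} {L H : ℝ≥0∞} (hL : 1 ≤ L)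
    (hv : ∀ i, SobolevBound k (v i) L H) {f : Fin 4 → ι} (hf : Function.Injective f) :
    momentumSum σ 0 (fun n => freqWeight k (n (f 0)) * freqWeight k (n (f 1)) *
      (1 + freqWeight 1 (n (f 2)) * freqWeight 1 (n (f 3)) * decayWeight 1 (signedPowerSum σ 2 n))
        * ∏ i, ‖v i (n i)‖ₑ)
      ≤ (2 + resonanceConst) * L ^ (Fintype.card ι + 4) * H ^ 2 := by
  have hbi := momentumSum_bilinear_weighted_le (hf.comp (Fin.castAdd_injective 2 2)) σ
    (fun _ => freqWeight k) (fun i a => ‖v i a‖ₑ) hL (fun i _ => (hv i).wiener) 0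
  have hquad := momentumSum_quadrilinear_weighted_le hf σ
    ![freqWeight k, freqWeight k, freqWeight 1, freqWeight 1] (fun i a => ‖v i a‖ₑ) hL
    (fun i _ => (hv i).wiener) 0
  simp only [Fin.prod_univ_two, Function.comp_apply, show Fin.castAdd 2 (0 : Fin 2) = 0 from rfl,
    show Fin.castAdd 2 (1 : Fin 2) = 1 from rfl] at hbi
  simp only [Fin.prod_univ_four, Matrix.cons_val] at hquad
  calc _ = _ := by
        rw [← momentumSum_add]
        refine congrArg _ (funext fun n => ?_)
        ring
    _ ≤ _ := add_le_add hbi hquad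
    _ ≤ L * H * (L * H) * L ^ Fintype.card ι
        + (1 + resonanceConst) * (L * H * (L * H) * L * L) * L ^ Fintype.card ι := by
        gcongr
        exacts [(hv _).high, (hv _).high, (hv _).high, (hv _).high, (hv _).one, (hv _).one]
    _ = L ^ (Fintype.card ι + 2) * H ^ 2
        + (1 + resonanceConst) * L ^ (Fintype.card ι + 4) * H ^ 2 := by ring
    _ ≤ L ^ (Fintype.card ι + 4) * H ^ 2
        + (1 + resonanceConst) * L ^ (Fintype.card ι + 4) * H ^ 2 := by
        gcongr
        norm_num
    _ = (2 + resonanceConst) * L ^ (Fintype.card ι + 4) * H ^ 2 := by ring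

lemma tsum_enorm_momentumTerm_le {k : ℕ} {σ : ι → ℤˣ} {K : ℝ≥0∞}
    {μ : (ι → ℤ) → ℂ} (hμ : SymbolBound k σ K μ) {v : ι → ℤ → ℂ} {L H : ℝ≥0∞} (hL : 1 ≤ L)
    (hv : ∀ i, SobolevBound k (v i) L H) :
    ∑' n, ‖momentumTerm σ μ v n‖ₑ ≤ Fintype.card ι ^ 4 * (K * (2 + resonanceConst))
      * L ^ (Fintype.card ι + 4) * H ^ 2 := by
  classical
  let X : (Fin 4 → ι) → (ι → ℤ) → ℝ≥0∞ := fun f n =>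
    freqWeight k (n (f 0)) * freqWeight k (n (f 1)) *
      (1 + freqWeight 1 (n (f 2)) * freqWeight 1 (n (f 3)) * decayWeight 1 (signedPowerSum σ 2 n))
        * ∏ i, ‖v i (n i)‖ₑ
  let S : Finset (Fin 4 → ι) := {f | Function.Injective f}
  rw [tsum_enorm_momentumTerm]
  calc _ ≤ momentumSum σ 0 (fun n => ∑ f ∈ S, K * X f n) := by
        refine momentumSum_mono fun n hn => ?_
        obtain ⟨f, hf, hn⟩ := hμ n hn
        have hfS : f ∈ S := by simpa [S] using hf
        refine le_trans ?_ (Finset.single_le_sum (fun _ _ => zero_le) hfS)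
        exact (mul_le_mul' hn le_rfl).trans_eq (mul_assoc _ _ _)
    _ ≤ ∑ f ∈ S, K * ((2 + resonanceConst) * L ^ (Fintype.card ι + 4) * H ^ 2) := by
        simp_rw [momentumSum_finsetSum, momentumSum_mul_left]
        gcongr with f hf
        exact momentumSum_symbol_le hL hv (by simpa [S] using hf)
    _ ≤ Fintype.card ι ^ 4 * (K * ((2 + resonanceConst) * L ^ (Fintype.card ι + 4) * H ^ 2)) := by
        rw [Finset.sum_const, nsmul_eq_mul]
        gcongr
        have hcard := Finset.card_le_univ S
        rw [Fintype.card_fun, Fintype.card_fin] at hcard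
        exact_mod_cast hcard
    _ = _ := by ring

end symbols

/-! ### Convolutions -/

section convolution

variable {ι : Type*} [Fintype ι] [DecidableEq ι]

lemma prod_update {α M : Type*} [CommMonoid M] (j : ι) (x : ι → α → M) (h : α → M) (m : ι → α) :
    ∏ i, Function.update x j h i (m i) = h (m j) * ∏ i ∈ Finset.univ.erase j, x i (m i) := by
  rw [← Finset.mul_prod_erase _ _ (Finset.mem_univ j), Function.update_self]
  exact congrArg _ (Finset.prod_congr rfl fun i hi => by
    rw [Function.update_of_ne (Finset.ne_of_mem_erase hi)])

/-- The multilinear convolution of the sequences `x i` over `i ≠ j`: the sum of `∏ xᵢ(mᵢ)` over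
all zero-momentum vectors `m` with `m j = n`. -/
def slotConv (σ : ι → ℤˣ) (j : ι) (x : ι → ℤ → ℝ≥0∞) (n : ℤ) : ℝ≥0∞ :=
  momentumSum σ 0 fun m => ∏ i, Function.update x j (Pi.single n 1) i (m i)

lemma tsum_mul_slotConv (σ : ι → ℤˣ) (j : ι) (x : ι → ℤ → ℝ≥0∞) (g : ℤ → ℝ≥0∞) :
    ∑' n, g n * slotConv σ j x n = momentumSum σ 0 fun m => ∏ i, Function.update x j g i (m i) := by
  simp_rw [slotConv, momentumSum, ← ENNReal.tsum_mul_left]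
  rw [ENNReal.tsum_comm]
  refine tsum_congr fun m => ?_
  split_ifs
  · simp_rw [prod_update]
    rw [tsum_eq_single (m j) fun n hn => by simp [Pi.single_eq_of_ne hn.symm]]
    simp
  · simp

lemma momentumSum_unit_one_le (σ : Unit → ℤˣ) (m : ℤ) : momentumSum σ m (fun _ => 1) ≤ 1 := by
  rw [momentumSum, ← (Equiv.funUnique Unit ℤ).symm.tsum_eq,
    tsum_eq_single (σ () * m : ℤ) fun n hn => if_neg fun h => hn ?_]
  · split_ifs <;> simp
  · rw [← h]
    simp [signedPowerSum, ← mul_assoc, ← Units.val_mul, Int.units_mul_self]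

lemma tsum_slotConv_le (σ : ι → ℤˣ) (j : ι) {x : ι → ℤ → ℝ≥0∞} {L : ℝ≥0∞} (hL : 1 ≤ L)
    (hx : ∀ i, ∑' a, x i a ≤ L) : ∑' n, slotConv σ j x n ≤ L ^ Fintype.card ι := by
  have hpair := tsum_mul_slotConv σ j x 1
  have h := momentumSum_prod_le (f := fun _ : Unit => j) (Function.injective_of_subsingleton _) σ
    (Function.update x j 1) (fun _ => 1) hL
    (fun i hi => by
      rw [Function.update_of_ne fun h => hi ⟨(), h.symm⟩]
      exact hx i)
    (fun m _ => by simpa using momentumSum_unit_one_le (σ ∘ fun _ => j) m) 0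
  simpa only [Pi.one_apply, one_mul, mul_one, ← hpair] using h

lemma l2Norm_le_of_forall_tsum_mul_le {α : Type*} {y : α → ℝ≥0∞} {K : ℝ≥0∞} (hy : ∀ a, y a ≠ ⊤)
    (h : ∀ g : α → ℝ≥0∞, ∑' a, y a * g a ≤ K * l2Norm g) : l2Norm y ≤ K := by
  classical
  rw [l2Norm_le_iff, ENNReal.tsum_eq_iSup_sum]
  refine iSup_le fun S => ?_
  let g : α → ℝ≥0∞ := fun a => if a ∈ S then y a else 0
  have hsum : ∀ z : α → ℝ≥0∞, (∀ a ∉ S, z a = 0) → (∀ a ∈ S, z a = y a ^ 2) →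
      ∑' a, z a = ∑ a ∈ S, y a ^ 2 := fun z hz hz' =>
    (tsum_eq_sum fun a ha => hz a ha).trans (Finset.sum_congr rfl hz')
  have hg : l2Norm g ^ 2 = ∑ a ∈ S, y a ^ 2 := by
    rw [l2Norm_sq]
    exact hsum _ (fun a ha => by simp [g, ha]) fun a ha => by simp [g, ha]
  have hyg : ∑' a, y a * g a = l2Norm g ^ 2 :=
    hg ▸ hsum _ (fun a ha => by simp [g, ha]) fun a ha => by simp [g, ha, sq]
  have hg_top : l2Norm g ≠ ⊤ := fun htop => by
    have hfin := ENNReal.sum_ne_top.2 fun a (_ : a ∈ S) => ENNReal.pow_ne_top (n := 2) (hy a)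
    exact hfin (by rw [← hg, htop, ENNReal.top_pow two_ne_zero])
  rw [← hg]
  obtain h0 | h0 := eq_or_ne (l2Norm g) 0
  · simp [h0]
  · have hle := hyg ▸ h g
    rw [sq] at hle
    gcongr
    exact (ENNReal.mul_le_mul_iff_left h0 hg_top).1 hle

lemma freqWeight_le_sum_erase {σ : ι → ℤˣ} (j : ι) {m : ι → ℤ} (h : signedPowerSum σ 1 m = 0)
    (hι : 2 ≤ Fintype.card ι) (s : ℕ) :
    freqWeight s (m j) ≤ Fintype.card ι ^ s * ∑ i ∈ Finset.univ.erase j, freqWeight s (m i) := by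
  have hne : (Finset.univ.erase j).Nonempty := by
    rw [← Finset.card_pos, Finset.card_erase_of_mem (Finset.mem_univ j), Finset.card_univ]
    lia
  obtain ⟨i₀, hi₀, hmax⟩ := Finset.exists_max_image _ (fun i => (m i).natAbs) hne
  have hsign : ∀ i, (σ i * m i : ℤ).natAbs = (m i).natAbs := fun i => by
    rw [Int.natAbs_mul, Int.units_natAbs, one_mul]
  have hle : (m j).natAbs ≤ Fintype.card ι * (m i₀).natAbs := by
    simp only [signedPowerSum, pow_one] at h
    rw [← Finset.add_sum_erase _ _ (Finset.mem_univ j), add_eq_zero_iff_eq_neg] at h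
    rw [← hsign j, h, Int.natAbs_neg]
    refine (Int.natAbs_sum_le _ _).trans ((Finset.sum_le_card_nsmul _ _ _ fun i hi =>
      (hsign i).trans_le (hmax i hi)).trans ?_)
    exact Nat.mul_le_mul_right _ (Finset.card_le_univ _)
  calc freqWeight s (m j) ≤ Fintype.card ι ^ s * freqWeight s (m i₀) := by
        rw [freqWeight, freqWeight, ← mul_pow]
        gcongr
        exact_mod_cast hle
    _ ≤ _ := by
        gcongr
        exact Finset.single_le_sum (f := fun i => freqWeight s (m i)) (fun _ _ => zero_le) hi₀

lemma momentumSum_update_weighted_le (σ : ι → ℤˣ) {i j : ι} (hij : i ≠ j) {x : ι → ℤ → ℝ≥0∞}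
    {s : ℕ} {A L : ℝ≥0∞} (hL : 1 ≤ L) (hx : ∀ i, ∑' a, x i a ≤ L)
    (hA : l2Norm (fun a => freqWeight s a * x i a) ≤ A) (g : ℤ → ℝ≥0∞) :
    momentumSum σ 0 (fun m => freqWeight s (m i) * ∏ l, Function.update x j g l (m l))
      ≤ A * l2Norm g * L ^ Fintype.card ι := by
  have hinj : Function.Injective ![i, j] := by
    rw [Function.Injective]
    simp [Fin.forall_fin_two, hij, hij.symm]
  have h := momentumSum_bilinear_weighted_le hinj σ ![freqWeight s, 1] (Function.update x j g) hL
    (fun l hl => by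
      rw [Function.update_of_ne fun h => hl ⟨1, by simp [h]⟩]
      exact hx l) 0
  simp only [Fin.prod_univ_two, Matrix.cons_val_zero, Matrix.cons_val_one, Function.update_self,
    Function.update_of_ne hij, Pi.one_apply, mul_one, one_mul] at h
  exact h.trans (by gcongr)

lemma l2Norm_freqWeight_mul_slotConv_le (σ : ι → ℤˣ) (j : ι) (hι : 2 ≤ Fintype.card ι)
    {x : ι → ℤ → ℝ≥0∞} {s : ℕ} {A L : ℝ≥0∞} (hL : 1 ≤ L) (hL_top : L ≠ ⊤)
    (hx : ∀ i, ∑' a, x i a ≤ L) (hA : ∀ i, l2Norm (fun a => freqWeight s a * x i a) ≤ A) :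
    l2Norm (fun n => freqWeight s n * slotConv σ j x n)
      ≤ Fintype.card ι ^ (s + 1) * A * L ^ Fintype.card ι := by
  set D := Fintype.card ι
  have hconv : ∀ n, slotConv σ j x n ≠ ⊤ := fun n => ne_top_of_le_ne_top
    (ENNReal.pow_ne_top hL_top) ((ENNReal.le_tsum n).trans (tsum_slotConv_le σ j hL hx))
  refine l2Norm_le_of_forall_tsum_mul_le
    (fun n => ENNReal.mul_ne_top (by simp [freqWeight]) (hconv n)) fun g => ?_
  calc _ = momentumSum σ 0 fun m =>
          ∏ i, Function.update x j (fun n => freqWeight s n * g n) i (m i) := by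
        rw [← tsum_mul_slotConv]
        exact tsum_congr fun n => mul_right_comm _ _ _
    _ ≤ momentumSum σ 0 fun m => ∑ i ∈ Finset.univ.erase j,
          D ^ s * (freqWeight s (m i) * ∏ l, Function.update x j g l (m l)) := by
        refine momentumSum_mono fun m hm => ?_
        rw [← Finset.mul_sum, ← Finset.sum_mul, prod_update, prod_update, mul_assoc,
          ← mul_assoc _ (∑ _ ∈ _, _)]
        gcongr
        exact freqWeight_le_sum_erase j hm hι s
    _ ≤ ∑ _ ∈ Finset.univ.erase j, D ^ s * (A * l2Norm g * L ^ D) := by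
        simp_rw [momentumSum_finsetSum, momentumSum_mul_left]
        gcongr with i hi
        exact momentumSum_update_weighted_le σ (Finset.ne_of_mem_erase hi) hL hx (hA i) g
    _ ≤ D * (D ^ s * (A * l2Norm g * L ^ D)) := by
        rw [Finset.sum_const, nsmul_eq_mul]
        gcongr
        exact Finset.card_le_univ _
    _ = _ := by ring

lemma momentumSum_weight_mul_prod_le {κ : Type*} [Fintype κ] (σ : κ → ℤˣ) (i : κ)
    {y : κ → ℤ → ℝ≥0∞} {w : ℤ → ℝ≥0∞} {A L : ℝ≥0∞} (hL : 1 ≤ L)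
    (hy : ∀ l ≠ i, ∑' a, y l a ≤ L) (hA : ∀ a, w a * y i a ≤ A) :
    momentumSum σ 0 (fun m => w (m i) * ∏ l, y l (m l)) ≤ A * L ^ Fintype.card κ := by
  classical
  have h := momentumSum_prod_le (f := fun _ : Unit => i) (Function.injective_of_subsingleton _) σ
    (Function.update y i fun a => w a * y i a) (fun _ => 1) hL (B := A)
    (fun l hl => by simpa [show l ≠ i by simpa [eq_comm] using hl] using hy l (by simp_all))
    (fun m _ => ?_) 0
  · simpa only [prod_update, mul_one, mul_assoc, Finset.mul_prod_erase _ (fun l => y l (_ : ℤ))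
      (Finset.mem_univ i)] using h
  · calc _ ≤ momentumSum (σ ∘ fun _ : Unit => i) m fun _ => 1 * A := by
          refine momentumSum_mono fun a _ => ?_
          simpa using hA (a ())
      _ ≤ A := by
          rw [momentumSum_mul_right]
          exact mul_le_of_le_one_left' (momentumSum_unit_one_le _ m)

lemma freqWeight_mul_slotConv_le (σ : ι → ℤˣ) (j : ι) (hι : 2 ≤ Fintype.card ι)
    {x : ι → ℤ → ℝ≥0∞} {s : ℕ} {A L : ℝ≥0∞} (hL : 1 ≤ L) (hx : ∀ i, ∑' a, x i a ≤ L)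
    (hA : ∀ i a, freqWeight s a * x i a ≤ A) (n : ℤ) :
    freqWeight s n * slotConv σ j x n ≤ Fintype.card ι ^ (s + 1) * A * L ^ Fintype.card ι := by
  set D := Fintype.card ι
  let y := Function.update x j (Pi.single n 1)
  have hy : ∀ i, ∑' a, y i a ≤ L := fun i => by
    obtain rfl | hij := eq_or_ne i j
    · simpa [y] using hL
    · simpa [y, hij] using hx i
  calc _ = momentumSum σ 0 fun m => freqWeight s n * ∏ i, y i (m i) :=
        (momentumSum_mul_left ..).symm
    _ ≤ momentumSum σ 0 fun m => ∑ i ∈ Finset.univ.erase j,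
          D ^ s * (freqWeight s (m i) * ∏ l, y l (m l)) := by
        refine momentumSum_mono fun m hm => ?_
        rw [← Finset.mul_sum, ← Finset.sum_mul, ← mul_assoc]
        obtain hmn | hmn := eq_or_ne (m j) n
        · gcongr
          exact hmn ▸ freqWeight_le_sum_erase j hm hι s
        · simp [y, prod_update, hmn]
    _ ≤ ∑ _ ∈ Finset.univ.erase j, D ^ s * (A * L ^ D) := by
        simp_rw [momentumSum_finsetSum, momentumSum_mul_left]
        gcongr with i hi
        exact momentumSum_weight_mul_prod_le σ i hL (fun l _ => hy l)
          fun a => by simpa [y, Finset.ne_of_mem_erase hi] using hA i a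
    _ ≤ D * (D ^ s * (A * L ^ D)) := by
        rw [Finset.sum_const, nsmul_eq_mul]
        gcongr
        exact Finset.card_le_univ _
    _ = _ := by ring

end convolution

/-! ### Fourier series of smooth periodic functions -/

section decay

/-- Polynomial decay of order `Q` of the sequence `c`, with constant `K`. -/
def HasDecay (Q : ℕ) (K : ℝ) (c : ℤ → ℂ) : Prop := ∀ n : ℤ, (1 + |(n : ℝ)|) ^ Q * ‖c n‖ ≤ K

/-- Decay of the sequence `c` faster than any power. -/
def RapidDecay (c : ℤ → ℂ) : Prop := ∀ Q, ∃ K, HasDecay Q K c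

lemma summable_inv_one_add_abs_sq : Summable fun n : ℤ => ((1 + |(n : ℝ)|) ^ 2)⁻¹ := by
  refine Summable.of_norm_bounded_eventually (Real.summable_abs_int_rpow one_lt_two) ?_
  filter_upwards [(Set.finite_singleton (0 : ℤ)).compl_mem_cofinite] with n hn
  have hpos : 0 < |(n : ℝ)| := abs_pos.2 (Int.cast_ne_zero.2 hn)
  rw [Real.norm_of_nonneg (by positivity), Real.rpow_neg hpos.le, Real.rpow_two]
  gcongr
  linarith

lemma HasDecay.nonneg {Q : ℕ} {K : ℝ} {c : ℤ → ℂ} (h : HasDecay Q K c) : 0 ≤ K :=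
  (by positivity : (0 : ℝ) ≤ (1 + |((0 : ℤ) : ℝ)|) ^ Q * ‖c 0‖).trans (h 0)

lemma HasDecay.pow_mul_norm_le {s : ℕ} {K : ℝ} {c : ℤ → ℂ} (h : HasDecay (s + 2) K c) (n : ℤ) :
    (1 + |(n : ℝ)|) ^ s * ‖c n‖ ≤ K * ((1 + |(n : ℝ)|) ^ 2)⁻¹ := by
  rw [← div_eq_mul_inv, le_div_iff₀ (by positivity)]
  exact le_of_eq_of_le (by ring) (h n)

lemma HasDecay.summable_pow_mul_norm {s : ℕ} {K : ℝ} {c : ℤ → ℂ} (h : HasDecay (s + 2) K c) :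
    Summable fun n : ℤ => (1 + |(n : ℝ)|) ^ s * ‖c n‖ :=
  .of_nonneg_of_le (fun n => by positivity) h.pow_mul_norm_le
    (summable_inv_one_add_abs_sq.mul_left K)

lemma RapidDecay.summable_norm {c : ℤ → ℂ} (h : RapidDecay c) : Summable fun n => ‖c n‖ := by
  obtain ⟨K, hK⟩ := h 2
  simpa using HasDecay.summable_pow_mul_norm (s := 0) hK

end decay

section fourierSeries

/-- The Fourier mode `exp (i n x)`. -/
def mode (n : ℤ) (x : ℝ) : ℂ := Complex.exp (n * Complex.I * x)

lemma norm_mode (n : ℤ) (x : ℝ) : ‖mode n x‖ = 1 := by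
  rw [mode, mul_right_comm, ← Complex.ofReal_intCast, ← Complex.ofReal_mul,
    Complex.norm_exp_ofReal_mul_I]

lemma conj_mode (n : ℤ) (x : ℝ) : (starRingEnd ℂ) (mode n x) = mode (-n) x := by
  rw [mode, mode, ← Complex.exp_conj]
  simp

lemma continuous_mode (n : ℤ) : Continuous (mode n) := by
  unfold mode
  fun_prop

lemma mode_sum {α : Type*} (s : Finset α) (f : α → ℤ) (x : ℝ) :
    mode (∑ i ∈ s, f i) x = ∏ i ∈ s, mode (f i) x := by
  simp_rw [mode, ← Complex.exp_sum, Int.cast_sum, Finset.sum_mul]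

lemma integral_mode (n : ℤ) :
    ∫ x in (0 : ℝ)..(2 * π), mode n x = if n = 0 then (2 * π : ℂ) else 0 := by
  split_ifs with hn
  · simp [hn, mode]
  · have hexp : Complex.exp (n * Complex.I * (2 * π)) = 1 := by
      rw [show (n * Complex.I * (2 * π) : ℂ) = n * (2 * π * Complex.I) by ring]
      exact Complex.exp_int_mul_two_pi_mul_I n
    simp only [mode]
    rw [integral_exp_mul_complex (by simp [hn])]
    simp [hexp]

lemma fourier_eq_mode (n : ℤ) (x : ℝ) : fourier n (x : AddCircle (2 * π)) = mode n x := by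
  rw [fourier_coe_apply, mode]
  congr 1
  push_cast
  field_simp

/-- The Fourier coefficients of the restriction of `f` to `[0, 2π]`. -/
def coeff (f : ℝ → ℂ) : ℤ → ℂ := fourierCoeffOn Real.two_pi_pos f

lemma coeff_eq_integral (f : ℝ → ℂ) (n : ℤ) :
    coeff f n = (2 * π : ℂ)⁻¹ * ∫ x in (0 : ℝ)..(2 * π), mode (-n) x * f x := by
  rw [coeff, fourierCoeffOn_eq_integral, Complex.real_smul]
  congr 1
  · push_cast
    simp
  · refine intervalIntegral.integral_congr fun x _ => ?_
    simp only [smul_eq_mul, ← fourier_eq_mode]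
    rw [fourier_coe_apply, fourier_coe_apply, sub_zero]

lemma norm_coeff_le {f : ℝ → ℂ} {K : ℝ} (hf : ∀ x, ‖f x‖ ≤ K) (n : ℤ) : ‖coeff f n‖ ≤ K := by
  have h := intervalIntegral.norm_integral_le_of_norm_le_const (a := 0) (b := 2 * π) (C := K)
    (f := fun x => mode (-n) x * f x) fun x _ => by simpa [norm_mode] using hf x
  have hnorm : ‖(2 * π : ℂ)⁻¹‖ = (2 * π)⁻¹ := by simp [abs_of_pos Real.pi_pos]
  rw [coeff_eq_integral, norm_mul, hnorm, inv_mul_le_iff₀ Real.two_pi_pos]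
  rw [sub_zero, abs_of_pos Real.two_pi_pos] at h
  exact h.trans_eq (mul_comm _ _)

/-- Smooth `2π`-periodic functions, i.e. smooth functions on the torus. -/
structure SmoothPeriodic (f : ℝ → ℂ) : Prop where
  contDiff : ContDiff ℝ (⊤ : ℕ∞) f
  periodic : Function.Periodic f (2 * π)

namespace SmoothPeriodic

variable {f : ℝ → ℂ}

lemma deriv (hf : SmoothPeriodic f) : SmoothPeriodic (deriv f) where
  contDiff := by simpa using hf.contDiff.iterate_deriv 1
  periodic x := by
    rw [← deriv_comp_add_const, show (fun y => f (y + 2 * π)) = f from funext hf.periodic]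

lemma iteratedDeriv (hf : SmoothPeriodic f) (m : ℕ) : SmoothPeriodic (iteratedDeriv m f) := by
  induction m with
  | zero => simpa using hf
  | succ m ih =>
    rw [iteratedDeriv_succ]
    exact ih.deriv

lemma exists_norm_le (hf : SmoothPeriodic f) : ∃ K, ∀ x, ‖f x‖ ≤ K := by
  obtain ⟨K, hK⟩ := isCompact_Icc.exists_bound_of_continuousOn
    (hf.contDiff.continuous.continuousOn (s := Set.Icc 0 (2 * π)))
  refine ⟨K, fun x => ?_⟩
  obtain ⟨y, hy, hxy⟩ := hf.periodic.exists_mem_Ico₀ Real.two_pi_pos x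
  exact hxy ▸ hK y ⟨hy.1, hy.2.le⟩

lemma coeff_deriv (hf : SmoothPeriodic f) (n : ℤ) :
    coeff (_root_.deriv f) n = Complex.I * n * coeff f n := by
  have hderiv : ∀ x, HasDerivAt f (_root_.deriv f x) x := fun x =>
    (hf.contDiff.differentiable (by simp) x).hasDerivAt
  have hderiv_int := hf.deriv.contDiff.continuous.intervalIntegrable (μ := volume) 0 (2 * π)
  have hends : f (2 * π) = f 0 := by simpa using hf.periodic 0
  obtain rfl | hn := eq_or_ne n 0
  · rw [coeff_eq_integral]
    simp [mode, hends,
      intervalIntegral.integral_eq_sub_of_hasDerivAt (fun x _ => hderiv x) hderiv_int]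
  · have h := fourierCoeffOn_of_hasDerivAt Real.two_pi_pos hn (fun x _ => hderiv x) hderiv_int
    rw [hends, sub_self, mul_zero, zero_sub] at h
    have hn' : (n : ℂ) ≠ 0 := Int.cast_ne_zero.2 hn
    rw [coeff, coeff, h]
    push_cast
    field_simp
    simp [mul_assoc]

lemma coeff_iteratedDeriv (hf : SmoothPeriodic f) (m : ℕ) (n : ℤ) :
    coeff (_root_.iteratedDeriv m f) n = (Complex.I * n) ^ m * coeff f n := by
  induction m with
  | zero => simp
  | succ m ih =>
    rw [iteratedDeriv_succ, (hf.iteratedDeriv m).coeff_deriv, ih]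
    ring

lemma norm_coeff_iteratedDeriv (hf : SmoothPeriodic f) (m : ℕ) (n : ℤ) :
    ‖coeff (_root_.iteratedDeriv m f) n‖ = |(n : ℝ)| ^ m * ‖coeff f n‖ := by
  rw [hf.coeff_iteratedDeriv, norm_mul, norm_pow, norm_mul, Complex.norm_I, one_mul,
    Complex.norm_intCast]

lemma rapidDecay (hf : SmoothPeriodic f) : RapidDecay (coeff f) := fun Q => by
  obtain ⟨K₀, hK₀⟩ := hf.exists_norm_le
  obtain ⟨K, hK⟩ := (hf.iteratedDeriv Q).exists_norm_le
  refine ⟨2 ^ (Q - 1) * (K₀ + K), fun n => ?_⟩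
  calc _ ≤ 2 ^ (Q - 1) * (1 ^ Q + |(n : ℝ)| ^ Q) * ‖coeff f n‖ := by
        gcongr
        exact add_pow_le zero_le_one (abs_nonneg _) Q
    _ = 2 ^ (Q - 1) * (‖coeff f n‖ + ‖coeff (_root_.iteratedDeriv Q f) n‖) := by
        rw [hf.norm_coeff_iteratedDeriv]
        ring
    _ ≤ _ := by
        gcongr
        exacts [norm_coeff_le hK₀ n, norm_coeff_le hK n]

lemma hasSum_coeff_mul_mode (hf : SmoothPeriodic f) (x : ℝ) :
    HasSum (fun n => coeff f n * mode n x) (f x) := by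
  have : Fact (0 < 2 * π) := ⟨Real.two_pi_pos⟩
  let F : C(AddCircle (2 * π), ℂ) :=
    ⟨hf.periodic.lift, continuous_coinduced_dom.2 hf.contDiff.continuous⟩
  have hF : ∀ y : ℝ, F y = f y := hf.periodic.lift_coe
  have hcoeff : fourierCoeff F = coeff f := funext fun n => by
    rw [fourierCoeff_eq_intervalIntegral _ n 0, zero_add, coeff_eq_integral, Complex.real_smul]
    simp only [fourier_eq_mode, hF, smul_eq_mul]
    simp
  have h := has_pointwise_sum_fourier_series_of_summable
    (hcoeff ▸ hf.rapidDecay.summable_norm.of_norm) (x : AddCircle (2 * π))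
  simpa only [hcoeff, hF, fourier_eq_mode, smul_eq_mul] using h

lemma tsum_norm_coeff_sq (hf : SmoothPeriodic f) : ∑' n, ‖coeff f n‖ ^ 2 = (2 * π)⁻¹ * L2sq f := by
  obtain ⟨K, hK⟩ := hf.exists_norm_le
  have hmem : MemLp f 2 (volume.restrict (Set.Ioc 0 (2 * π))) :=
    .of_bound hf.contDiff.continuous.aestronglyMeasurable K (.of_forall hK)
  simpa [L2sq, coeff] using (hasSum_sq_fourierCoeffOn Real.two_pi_pos hmem).tsum_eq

end SmoothPeriodic

/-- The squared homogeneous Sobolev seminorm `∑ |n|²ᵏ |cₙ|²`. -/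
def sobolevSq (k : ℕ) (c : ℤ → ℂ) : ℝ := ∑' n : ℤ, |(n : ℝ)| ^ (2 * k) * ‖c n‖ ^ 2

lemma SmoothPeriodic.L2sq_pD {f : ℝ → ℂ} (hf : SmoothPeriodic f) (k : ℕ) :
    L2sq (pD k f) = 2 * π * sobolevSq k (coeff f) := by
  rw [← inv_mul_eq_iff_eq_mul₀ Real.two_pi_pos.ne', pD,
    ← (hf.iteratedDeriv k).tsum_norm_coeff_sq, sobolevSq]
  refine tsum_congr fun n => ?_
  rw [hf.norm_coeff_iteratedDeriv, mul_pow, ← pow_mul, mul_comm k]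

end fourierSeries

/-! ### Multilinear Fourier sums -/

section multilinear

variable {ι : Type*} [Fintype ι]

lemma summable_norm_pi_prod {α 𝕜 : Type*} [NormedField 𝕜] {v : ι → α → 𝕜}
    (hv : ∀ i, Summable fun a => ‖v i a‖) :
    Summable fun b : ι → α => ‖∏ i, v i (b i)‖ := by
  have hne : ∑' b : ι → α, ‖∏ i, v i (b i)‖ₑ ≠ ⊤ := by
    simp only [enorm_eq_nnnorm, nnnorm_prod, ENNReal.ofNNReal_finsetProd]
    rw [tsum_pi_prod fun i a => (‖v i a‖₊ : ℝ≥0∞)]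
    exact ENNReal.prod_ne_top fun i _ => ENNReal.tsum_coe_ne_top_iff_summable_coe.2 (hv i)
  exact ENNReal.tsum_coe_ne_top_iff_summable_coe.1 hne

lemma tsum_pi_fin_prod_complex {α : Type*} (d : ℕ) {v : Fin d → α → ℂ}
    (hv : ∀ i, Summable fun a => ‖v i a‖) :
    ∑' b : Fin d → α, ∏ i, v i (b i) = ∏ i, ∑' a, v i a := by
  induction d with
  | zero => simp
  | succ d ih =>
    have htail : Summable fun b : Fin d → α => ‖∏ i, v i.succ (b i)‖ :=
      summable_norm_pi_prod (v := fun i : Fin d => v i.succ) fun i => hv i.succ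
    rw [Fin.prod_univ_succ, ← ih fun i => hv i.succ, ← (Fin.consEquiv fun _ => α).tsum_eq,
      tsum_mul_tsum_of_summable_norm (hv 0) htail]
    exact tsum_congr fun z => by simp [Fin.prod_univ_succ, Fin.consEquiv_apply]

lemma hasSum_pi_prod {α : Type*} {v : ι → α → ℂ} {f : ι → ℂ}
    (hv : ∀ i, Summable fun a => ‖v i a‖) (hf : ∀ i, HasSum (v i) (f i)) :
    HasSum (fun b : ι → α => ∏ i, v i (b i)) (∏ i, f i) := by
  let e := Fintype.equivFin ι
  simp_rw [← fun i => (hf i).tsum_eq]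
  rw [(summable_norm_pi_prod hv).of_norm.hasSum_iff,
    ← (Equiv.arrowCongr e.symm (Equiv.refl α)).tsum_eq, ← Equiv.prod_comp e.symm,
    ← tsum_pi_fin_prod_complex _ fun i => hv (e.symm i)]
  refine tsum_congr fun b => ?_
  rw [← Equiv.prod_comp e.symm]
  simp

lemma hasSum_mul_integral_mode_mul {α : Type*} [Countable α] {a : α → ℂ}
    (ha : Summable fun n => ‖a n‖) {φ : α → ℤ} {g h : ℝ → ℂ} (hh : Continuous h)
    (hg : ∀ x, HasSum (fun n => a n * mode (φ n) x) (g x)) :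
    HasSum (fun n => a n * ∫ x in (0 : ℝ)..(2 * π), mode (φ n) x * h x)
      (∫ x in (0 : ℝ)..(2 * π), g x * h x) := by
  simp_rw [← intervalIntegral.integral_const_mul, ← mul_assoc]
  refine intervalIntegral.hasSum_integral_of_dominated_convergence (fun n x => ‖a n‖ * ‖h x‖)
    (fun n => ?_) (fun n => .of_forall fun x _ => ?_) (.of_forall fun x _ => ha.mul_right _) ?_
    (.of_forall fun x _ => (hg x).mul_right _)
  · exact ((continuous_const.mul (continuous_mode _)).mul hh).aestronglyMeasurable
  · rw [norm_mul, norm_mul, norm_mode, mul_one]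
  · simp_rw [tsum_mul_right]
    exact (continuous_const.mul hh.norm).intervalIntegrable _ _

lemma hasSum_momentumTerm_one {σ : ι → ℤˣ} {v : ι → ℤ → ℂ} {f : ι → ℝ → ℂ}
    (hv : ∀ i, Summable fun n => ‖v i n‖)
    (hf : ∀ i x, HasSum (fun n => v i n * mode (σ i * n) x) (f i x)) :
    HasSum (momentumTerm σ 1 v) ((2 * π : ℂ)⁻¹ * ∫ x in (0 : ℝ)..(2 * π), ∏ i, f i x) := by
  have hprod : ∀ x, HasSum (fun n : ι → ℤ => (∏ i, v i (n i)) * mode (signedPowerSum σ 1 n) x)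
      (∏ i, f i x) := fun x => by
    simp_rw [signedPowerSum, pow_one, mode_sum, ← Finset.prod_mul_distrib]
    exact hasSum_pi_prod (v := fun i n => v i n * mode (σ i * n) x)
      (fun i => by simpa [norm_mode] using hv i) fun i => hf i x
  have h := (hasSum_mul_integral_mode_mul (summable_norm_pi_prod hv) (h := 1) continuous_const
    hprod).mul_left (2 * π : ℂ)⁻¹
  simp only [Pi.one_apply, mul_one, integral_mode] at h
  refine h.congr_fun fun n => ?_
  unfold momentumTerm
  split_ifs
  · field_simp
    simp
  · simp

end multilinear

/-! ### The nonlinearity in Fourier variables -/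

section nonlinearity

/-- The identity of `ℂ` for the sign `1`, complex conjugation for the sign `-1`. -/
def signConj (s : ℤˣ) : ℂ ≃ₗᵢ[ℝ] ℂ := if s = 1 then .refl ℝ ℂ else Complex.conjLIE

@[simp] lemma signConj_one (z : ℂ) : signConj 1 z = z := rfl

@[simp] lemma signConj_neg_one (z : ℂ) : signConj (-1) z = (starRingEnd ℂ) z := by
  rw [signConj, if_neg (by decide)]
  rfl

lemma signConj_mul (s : ℤˣ) (z w : ℂ) : signConj s (z * w) = signConj s z * signConj s w := by
  obtain rfl | rfl := Int.units_eq_one_or s <;> simp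

lemma signConj_ofReal (s : ℤˣ) (r : ℝ) : signConj s r = r := by
  obtain rfl | rfl := Int.units_eq_one_or s <;> simp

lemma signConj_mode (s : ℤˣ) (n : ℤ) (x : ℝ) : signConj s (mode n x) = mode (s * n) x := by
  obtain rfl | rfl := Int.units_eq_one_or s <;> simp [conj_mode]

lemma signConj_mul_signConj_neg (s : ℤˣ) (z : ℂ) :
    signConj s z * signConj (-s) z = ((‖z‖ ^ 2 : ℝ) : ℂ) := by
  obtain rfl | rfl := Int.units_eq_one_or s <;>
    simp [Complex.mul_conj, Complex.conj_mul', Complex.normSq_eq_norm_sq]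

lemma signConj_coeff (s : ℤˣ) (f : ℝ → ℂ) (n : ℤ) :
    signConj s (coeff f n) =
      (2 * π : ℂ)⁻¹ * ∫ x in (0 : ℝ)..(2 * π), mode (-s * n) x * signConj s (f x) := by
  obtain rfl | rfl := Int.units_eq_one_or s
  · simp [coeff_eq_integral]
  · simp only [signConj_neg_one, coeff_eq_integral, map_mul, map_inv₀, map_ofNat,
      Complex.conj_ofReal, intervalIntegral.integral_of_le Real.two_pi_pos.le]
    rw [← integral_conj]
    simp [conj_mode]

/-- The nonlinearity `u |u|²ᵖ`. -/
def nonlinearity (p : ℕ) (f : ℝ → ℂ) (x : ℝ) : ℂ := f x * (‖f x‖ : ℂ) ^ (2 * p)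

lemma SmoothPeriodic.nonlinearity {f : ℝ → ℂ} (hf : SmoothPeriodic f) (p : ℕ) :
    SmoothPeriodic (nonlinearity p f) where
  contDiff := by
    have hconj : ContDiff ℝ (⊤ : ℕ∞) fun x => Complex.conjCLE (f x) :=
      Complex.conjCLE.contDiff.comp hf.contDiff
    have heq : NLS.nonlinearity p f = fun x => f x * (f x * Complex.conjCLE (f x)) ^ p := by
      ext x
      simp [NLS.nonlinearity, pow_mul, Complex.mul_conj']
    rw [heq]
    exact hf.contDiff.mul ((hf.contDiff.mul hconj).pow p)
  periodic x := by rw [NLS.nonlinearity, NLS.nonlinearity, hf.periodic]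

/-- The factors of `|u|²ᵖ⁺²`: `p + 1` copies of `u` and `p + 1` copies of its conjugate. -/
abbrev Slot (p : ℕ) : Type := Fin (p + 1) ⊕ Fin (p + 1)

/-- The sign of a factor of `|u|²ᵖ⁺²`, negative for the conjugated ones. -/
def slotSign (p : ℕ) : Slot p → ℤˣ := Sum.elim (fun _ => 1) fun _ => -1

/-- The Fourier coefficients `c` in the slots of the multilinear forms, conjugated where the sign
of the slot is negative. -/
def slotCoeff (p : ℕ) (c : ℤ → ℂ) (i : Slot p) (n : ℤ) : ℂ := signConj (slotSign p i) (c n)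

variable {p : ℕ}

@[simp] lemma slotSign_inl (i : Fin (p + 1)) : slotSign p (.inl i) = 1 := rfl

@[simp] lemma slotSign_inr (i : Fin (p + 1)) : slotSign p (.inr i) = -1 := rfl

lemma norm_slotCoeff (c : ℤ → ℂ) (i : Slot p) (n : ℤ) : ‖slotCoeff p c i n‖ = ‖c n‖ :=
  (signConj _).norm_map _

lemma prod_signConj_slotSign (z : ℂ) :
    ∏ i, signConj (slotSign p i) z = ((‖z‖ ^ 2) ^ (p + 1) : ℝ) := by
  simp [← mul_pow, Complex.mul_conj']

lemma prod_erase_signConj_slotSign (z : ℂ) (j : Slot p) :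
    ∏ i ∈ Finset.univ.erase j, signConj (slotSign p i) z =
      signConj (-slotSign p j) (z * (‖z‖ : ℂ) ^ (2 * p)) := by
  obtain rfl | hz := eq_or_ne z 0
  · obtain ⟨i, hi⟩ : (Finset.univ.erase j).Nonempty :=
      Finset.card_pos.1 (by simp [Finset.card_erase_of_mem])
    rw [Finset.prod_eq_zero hi (map_zero _), zero_mul, map_zero]
  · refine mul_left_cancel₀ ((map_ne_zero_iff _ (signConj (slotSign p j)).injective).2 hz) ?_
    rw [Finset.mul_prod_erase _ (fun i => signConj (slotSign p i) z) (Finset.mem_univ j),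
      prod_signConj_slotSign, signConj_mul, ← mul_assoc, signConj_mul_signConj_neg,
      ← Complex.ofReal_pow, signConj_ofReal]
    push_cast
    ring

/-- The operator bound for the nonlinearity, acting on functions with Wiener norm at most `L`, in
the supremum norm with weight `(1 + |n|) ^ Q` on Fourier coefficients. -/
def nonlinearityConst (p Q : ℕ) (L : ℝ) : ℝ :=
  2 ^ (Q + 1) * Fintype.card (Slot p) ^ (Q + 1) * L ^ Fintype.card (Slot p)

section pairing

variable {f : ℝ → ℂ} (hf : SmoothPeriodic f)
include hf

lemma SmoothPeriodic.hasSum_slotCoeff_mul_mode (i : Slot p) (x : ℝ) :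
    HasSum (fun n => slotCoeff p (coeff f) i n * mode (slotSign p i * n) x)
      (signConj (slotSign p i) (f x)) := by
  simpa only [signConj_mul, signConj_mode, slotCoeff, Function.comp_def] using
    (hf.hasSum_coeff_mul_mode x).map (signConj (slotSign p i)) (signConj _).continuous

lemma SmoothPeriodic.tsum_mul_signConj_coeff_nonlinearity (j : Slot p) {g : ℤ → ℂ}
    (hg : Summable fun n => ‖g n‖) :
    ∑' n, g n * signConj (-slotSign p j) (coeff (NLS.nonlinearity p f) n) =
      ∑' m, momentumTerm (slotSign p) 1 (Function.update (slotCoeff p (coeff f)) j g) m := by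
  have hgsum : ∀ x, HasSum (fun n => g n * mode (slotSign p j * n) x)
      (∑' n, g n * mode (slotSign p j * n) x) := fun x =>
    (Summable.of_norm (by simpa [norm_mode] using hg)).hasSum
  set G : ℝ → ℂ := fun x => ∑' n, g n * mode (slotSign p j * n) x
  let factor : Slot p → ℝ → ℂ := Function.update (fun i x => signConj (slotSign p i) (f x)) j G
  have hprod : ∀ x, ∏ i, factor i x = G x * signConj (-slotSign p j) (NLS.nonlinearity p f x) :=
    fun x => (prod_update j _ G fun _ => x).trans (by rw [prod_erase_signConj_slotSign]; rfl)
  have hform := hasSum_momentumTerm_one (σ := slotSign p)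
    (v := Function.update (slotCoeff p (coeff f)) j g) (f := factor)
    (fun i => by
      obtain rfl | hij := eq_or_ne i j
      · simpa using hg
      · simpa [hij, norm_slotCoeff] using hf.rapidDecay.summable_norm)
    (fun i x => by
      obtain rfl | hij := eq_or_ne i j
      · simpa [factor] using hgsum x
      · simpa [factor, hij] using hf.hasSum_slotCoeff_mul_mode i x)
  have hintegral := (hasSum_mul_integral_mode_mul hg
    ((signConj (-slotSign p j)).continuous.comp (hf.nonlinearity p).contDiff.continuous)
    hgsum).mul_left (2 * π : ℂ)⁻¹
  simp_rw [hform.tsum_eq, hprod]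
  refine (tsum_congr fun n => ?_).trans hintegral.tsum_eq
  rw [signConj_coeff, Units.val_neg, neg_neg, mul_left_comm]
  rfl

lemma SmoothPeriodic.enorm_coeff_nonlinearity_le (j : Slot p) (n : ℤ) :
    ‖coeff (NLS.nonlinearity p f) n‖ₑ ≤ slotConv (slotSign p) j (fun _ a => ‖coeff f a‖ₑ) n := by
  have hpair := hf.tsum_mul_signConj_coeff_nonlinearity j (g := Pi.single n 1)
    (summable_of_ne_finset_zero (s := {n}) fun a ha => by simp_all)
  rw [tsum_eq_single n fun a ha => by simp [ha], Pi.single_eq_same, one_mul] at hpair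
  calc _ = ‖signConj (-slotSign p j) (coeff (NLS.nonlinearity p f) n)‖ₑ := by
        rw [← ofReal_norm, ← ofReal_norm, LinearIsometryEquiv.norm_map]
    _ ≤ _ := hpair ▸ enorm_tsum_le_tsum_enorm
    _ = _ := by
        rw [tsum_enorm_momentumTerm, slotConv]
        refine congrArg _ (funext fun m => ?_)
        rw [Pi.one_apply, enorm_one, one_mul]
        refine Finset.prod_congr rfl fun i _ => ?_
        obtain rfl | hij := eq_or_ne i j
        · obtain hm | hm := eq_or_ne (m i) n <;> simp [hm]
        · simp [hij, ← ofReal_norm, norm_slotCoeff]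

lemma SmoothPeriodic.tsum_enorm_coeff_nonlinearity_le {L : ℝ≥0∞} (hL : 1 ≤ L)
    (hfL : ∑' a, ‖coeff f a‖ₑ ≤ L) :
    ∑' n, ‖coeff (NLS.nonlinearity p f) n‖ₑ ≤ L ^ Fintype.card (Slot p) :=
  (ENNReal.tsum_le_tsum (hf.enorm_coeff_nonlinearity_le (.inl 0))).trans
    (tsum_slotConv_le _ _ hL fun _ => hfL)

lemma SmoothPeriodic.l2Norm_freqWeight_mul_coeff_nonlinearity_le (s : ℕ) {A L : ℝ≥0∞} (hL : 1 ≤ L)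
    (hL_top : L ≠ ⊤) (hfL : ∑' a, ‖coeff f a‖ₑ ≤ L)
    (hfA : l2Norm (fun a => freqWeight s a * ‖coeff f a‖ₑ) ≤ A) :
    l2Norm (fun n => freqWeight s n * ‖coeff (NLS.nonlinearity p f) n‖ₑ) ≤
      Fintype.card (Slot p) ^ (s + 1) * A * L ^ Fintype.card (Slot p) := by
  refine le_trans ?_ (l2Norm_freqWeight_mul_slotConv_le (slotSign p) (.inl 0) (by simp; lia) hL
    hL_top (fun _ => hfL) fun _ => hfA)
  exact l2Norm_mono fun n => by gcongr; exact hf.enorm_coeff_nonlinearity_le _ n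

lemma SmoothPeriodic.freqWeight_mul_enorm_coeff_nonlinearity_le (s : ℕ) {A L : ℝ≥0∞} (hL : 1 ≤ L)
    (hfL : ∑' a, ‖coeff f a‖ₑ ≤ L) (hfA : ∀ a, freqWeight s a * ‖coeff f a‖ₑ ≤ A) (n : ℤ) :
    freqWeight s n * ‖coeff (NLS.nonlinearity p f) n‖ₑ ≤
      Fintype.card (Slot p) ^ (s + 1) * A * L ^ Fintype.card (Slot p) :=
  (mul_le_mul_right (hf.enorm_coeff_nonlinearity_le (.inl 0) n) _).trans
    (freqWeight_mul_slotConv_le (slotSign p) (.inl 0) (by simp; lia) hL (fun _ => hfL)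
      (fun _ => hfA) n)

lemma SmoothPeriodic.abs_pow_mul_norm_coeff_nonlinearity_le (s : ℕ) {K L : ℝ} (hL : 1 ≤ L)
    (hfL : ∑' a, ‖coeff f a‖ ≤ L) (hfK : ∀ a : ℤ, |(a : ℝ)| ^ s * ‖coeff f a‖ ≤ K) (n : ℤ) :
    |(n : ℝ)| ^ s * ‖coeff (NLS.nonlinearity p f) n‖ ≤
      Fintype.card (Slot p) ^ (s + 1) * K * L ^ Fintype.card (Slot p) := by
  have hK : 0 ≤ K := (by positivity : (0 : ℝ) ≤ |((0 : ℤ) : ℝ)| ^ s * ‖coeff f 0‖).trans (hfK 0)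
  have h := hf.freqWeight_mul_enorm_coeff_nonlinearity_le (p := p) s (A := .ofReal K)
    (L := .ofReal L) (by simpa using hL)
    (by
      simp_rw [← ofReal_norm]
      rw [← ENNReal.ofReal_tsum_of_nonneg (fun _ => norm_nonneg _) hf.rapidDecay.summable_norm]
      exact ENNReal.ofReal_le_ofReal hfL)
    (fun a => by
      rw [freqWeight_eq_ofReal, ← ofReal_norm, ← ENNReal.ofReal_mul (by positivity)]
      exact ENNReal.ofReal_le_ofReal (hfK a)) n
  rw [freqWeight_eq_ofReal, ← ofReal_norm, ← ENNReal.ofReal_mul (by positivity),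
    ← ENNReal.ofReal_natCast, ← ENNReal.ofReal_pow (by positivity),
    ← ENNReal.ofReal_mul (by positivity), ← ENNReal.ofReal_pow (by positivity),
    ← ENNReal.ofReal_mul (by positivity), ENNReal.ofReal_le_ofReal_iff (by positivity)] at h
  exact h

lemma SmoothPeriodic.hasDecay_coeff_nonlinearity {Q : ℕ} {K L : ℝ} (hL : 1 ≤ L)
    (hfL : ∑' a, ‖coeff f a‖ ≤ L) (hfK : HasDecay Q K (coeff f)) :
    HasDecay Q (nonlinearityConst p Q L * K) (coeff (NLS.nonlinearity p f)) := fun n => by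
  have hK := hfK.nonneg
  have hcard : (1 : ℝ) ≤ Fintype.card (Slot p) := by exact_mod_cast Fintype.card_pos
  have hlow := hf.abs_pow_mul_norm_coeff_nonlinearity_le (p := p) 0 hL hfL (K := K)
    (fun a => (mul_le_mul_of_nonneg_right
      (by simpa using one_le_pow₀ (by simp)) (norm_nonneg _)).trans (hfK a)) n
  have hhigh := hf.abs_pow_mul_norm_coeff_nonlinearity_le (p := p) Q hL hfL (K := K)
    (fun a => (mul_le_mul_of_nonneg_right (by gcongr; simp) (norm_nonneg _)).trans (hfK a)) n
  calc (1 + |(n : ℝ)|) ^ Q * ‖coeff (NLS.nonlinearity p f) n‖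
      ≤ 2 ^ Q * (|(n : ℝ)| ^ 0 * ‖coeff (NLS.nonlinearity p f) n‖
          + |(n : ℝ)| ^ Q * ‖coeff (NLS.nonlinearity p f) n‖) := by
        rw [← add_mul, ← mul_assoc]
        gcongr
        calc _ ≤ 2 ^ (Q - 1) * (1 ^ Q + |(n : ℝ)| ^ Q) := add_pow_le zero_le_one (abs_nonneg _) Q
          _ ≤ 2 ^ Q * (|(n : ℝ)| ^ 0 + |(n : ℝ)| ^ Q) := by
              rw [one_pow, pow_zero]
              gcongr <;> simp
    _ ≤ 2 ^ Q * (Fintype.card (Slot p) ^ (Q + 1) * K * L ^ Fintype.card (Slot p)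
          + Fintype.card (Slot p) ^ (Q + 1) * K * L ^ Fintype.card (Slot p)) := by
        refine mul_le_mul_of_nonneg_left (add_le_add (hlow.trans ?_) hhigh) (by positivity)
        gcongr
        exact Q.zero_le
    _ = _ := by rw [nonlinearityConst]; ring

end pairing

end nonlinearity

/-! ### Zero-momentum multilinear forms and their derivatives in time -/

section form

lemma HasDecay.mono {Q Q' : ℕ} {K K' : ℝ} {c : ℤ → ℂ} (h : HasDecay Q K c) (hQ : Q' ≤ Q)
    (hK : K ≤ K') : HasDecay Q' K' c := fun n =>
  (mul_le_mul_of_nonneg_right (pow_le_pow_right₀ (by simp) hQ) (norm_nonneg _)).trans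
    ((h n).trans hK)

variable {ι : Type*} [Fintype ι] {q : ℕ} {C : ℝ} {σ : ι → ℤˣ} {μ : (ι → ℤ) → ℂ}

/-- The multilinear form with symbol `μ`, restricted to frequencies of vanishing signed sum. -/
def momentumForm (σ : ι → ℤˣ) (μ : (ι → ℤ) → ℂ) (v : ι → ℤ → ℂ) : ℂ :=
  ∑' n, momentumTerm σ μ v n

/-- Polynomial growth of order `q` of the symbol `μ` in each frequency. -/
def HasGrowth (q : ℕ) (C : ℝ) (μ : (ι → ℤ) → ℂ) : Prop :=
  ∀ n, ‖μ n‖ ≤ C * ∏ i, (1 + |(n i : ℝ)|) ^ q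

lemma HasGrowth.nonneg (hμ : HasGrowth q C μ) : 0 ≤ C := by
  simpa using (norm_nonneg _).trans (hμ 0)

lemma hasGrowth_one : HasGrowth q 1 (1 : (ι → ℤ) → ℂ) := fun n => by
  simpa using Finset.one_le_prod fun i _ => one_le_pow₀ (by simp)

lemma norm_momentumTerm_le {K : ι → ℝ} {v : ι → ℤ → ℂ} (hμ : HasGrowth q C μ)
    (hv : ∀ i, HasDecay (q + 2) (K i) (v i)) (n : ι → ℤ) :
    ‖momentumTerm σ μ v n‖ ≤ C * ∏ i, K i * ((1 + |(n i : ℝ)|) ^ 2)⁻¹ := by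
  have hC := hμ.nonneg
  have hK := fun i => (hv i).nonneg
  rw [momentumTerm]
  split_ifs
  · calc _ ≤ C * (∏ i, (1 + |(n i : ℝ)|) ^ q) * ∏ i, ‖v i (n i)‖ := by
          rw [norm_mul, norm_prod]
          gcongr
          exact hμ n
      _ = C * ∏ i, (1 + |(n i : ℝ)|) ^ q * ‖v i (n i)‖ := by
          rw [mul_assoc, ← Finset.prod_mul_distrib]
      _ ≤ _ := mul_le_mul_of_nonneg_left (Finset.prod_le_prod (fun i _ => by positivity)
          fun i _ => (hv i).pow_mul_norm_le (n i)) hC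
  · rw [norm_zero]
    exact mul_nonneg hC (Finset.prod_nonneg fun i _ => mul_nonneg (hK i) (by positivity))

lemma summable_prod_mul_inv_one_add_abs_sq (K : ι → ℝ) :
    Summable fun n : ι → ℤ => ∏ i, K i * ((1 + |(n i : ℝ)|) ^ 2)⁻¹ :=
  .of_norm <| summable_norm_pi_prod (v := fun i (a : ℤ) => K i * ((1 + |(a : ℝ)|) ^ 2)⁻¹)
    fun i => (summable_inv_one_add_abs_sq.mul_left (K i)).norm

lemma summable_momentumTerm {K : ι → ℝ} {v : ι → ℤ → ℂ} (hμ : HasGrowth q C μ)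
    (hv : ∀ i, HasDecay (q + 2) (K i) (v i)) : Summable (momentumTerm σ μ v) :=
  .of_norm_bounded ((summable_prod_mul_inv_one_add_abs_sq K).mul_left C)
    (norm_momentumTerm_le hμ hv)

lemma hasDerivAt_tsum_of_eventually {α E : Type*} [NormedAddCommGroup E] [NormedSpace ℝ E]
    [CompleteSpace E] {g g' : α → ℝ → E} {b : α → ℝ} {t : ℝ}
    (hb : Summable b) (hg : ∀ᶠ s in 𝓝 t, ∀ n, HasDerivAt (g n) (g' n s) s ∧ ‖g' n s‖ ≤ b n)
    (ht : Summable fun n => g n t) :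
    HasDerivAt (fun s => ∑' n, g n s) (∑' n, g' n t) t := by
  obtain ⟨r, hr, hball⟩ := Metric.eventually_nhds_iff_ball.1 hg
  exact hasDerivAt_tsum_of_isPreconnected hb Metric.isOpen_ball (convex_ball t r).isPreconnected
    (fun n s hs => (hball s hs n).1) (fun n s hs => (hball s hs n).2) (Metric.mem_ball_self hr) ht
    (Metric.mem_ball_self hr)

/-- Differentiability in time of every term of the time-dependent sequence `c`, near the time `t`,
with derivative `c'` and with decay of order `Q` of `c` and `c'` that is uniform in time. -/
def HasDecayingDeriv (Q : ℕ) (c c' : ℝ → ℤ → ℂ) (t : ℝ) : Prop :=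
  ∃ K, ∀ᶠ s in 𝓝 t,
    HasDecay Q K (c s) ∧ HasDecay Q K (c' s) ∧ ∀ n, HasDerivAt (fun r => c r n) (c' s n) s

lemma hasDerivAt_momentumTerm [DecidableEq ι] {c c' : ι → ℝ → ℤ → ℂ} {t : ℝ} {n : ι → ℤ}
    (hc : ∀ i, HasDerivAt (fun s => c i s (n i)) (c' i t (n i)) t) :
    HasDerivAt (fun s => momentumTerm σ μ (fun i => c i s) n)
      (∑ j, momentumTerm σ μ (Function.update (fun i => c i t) j (c' j t)) n) t := by
  simp only [momentumTerm]
  split_ifs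
  · rw [← Finset.mul_sum]
    refine (HasDerivAt.fun_finsetProd fun i _ => hc i).const_mul (μ n) |>.congr_deriv ?_
    refine congrArg _ (Finset.sum_congr rfl fun j _ => ?_)
    rw [prod_update, smul_eq_mul, mul_comm]
  · simpa using hasDerivAt_const t (0 : ℂ)

lemma hasDerivAt_momentumForm [DecidableEq ι] {c c' : ι → ℝ → ℤ → ℂ} {t : ℝ} (hμ : HasGrowth q C μ)
    (hc : ∀ i, HasDecayingDeriv (q + 2) (c i) (c' i) t) :
    HasDerivAt (fun s => momentumForm σ μ fun i => c i s)
      (∑ j, momentumForm σ μ (Function.update (fun i => c i t) j (c' j t))) t := by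
  choose K hK using hc
  have hnear := Filter.eventually_all.2 hK
  have hdecay : ∀ {s : ℝ}, (∀ i, HasDecay (q + 2) (K i) (c i s) ∧ HasDecay (q + 2) (K i) (c' i s) ∧
      ∀ n, HasDerivAt (fun r => c i r n) (c' i s n) s) → ∀ j i,
      HasDecay (q + 2) (K i) (Function.update (fun i => c i s) j (c' j s) i) := fun h j =>
    (Function.forall_update_iff _ fun i => HasDecay (q + 2) (K i)).2 ⟨(h j).2.1, fun i _ => (h i).1⟩
  simp_rw [momentumForm]
  rw [← Summable.tsum_finsetSum fun j _ =>
    summable_momentumTerm hμ (hdecay hnear.self_of_nhds j)]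
  refine hasDerivAt_tsum_of_eventually
    (((summable_prod_mul_inv_one_add_abs_sq K).mul_left C).mul_left (Fintype.card ι : ℝ))
    (hnear.mono fun s hs n => ⟨hasDerivAt_momentumTerm fun i => (hs i).2.2 (n i), ?_⟩)
    (summable_momentumTerm hμ fun i => (hnear.self_of_nhds i).1)
  calc _ ≤ ∑ _ : ι, C * ∏ i, K i * ((1 + |(n i : ℝ)|) ^ 2)⁻¹ :=
        norm_sum_le_of_le _ fun j _ => norm_momentumTerm_le hμ (hdecay hs j) n
    _ = _ := by rw [Finset.sum_const, nsmul_eq_mul, Finset.card_univ]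

lemma RapidDecay.summable_momentumTerm {v : ι → ℤ → ℂ} (hv : ∀ i, RapidDecay (v i))
    (hμ : HasGrowth q C μ) : Summable (momentumTerm σ μ v) := by
  choose K hK using fun i => hv i (q + 2)
  exact NLS.summable_momentumTerm hμ hK

lemma momentumTerm_mul_symbol [DecidableEq ι] (σ : ι → ℤˣ) (μ : (ι → ℤ) → ℂ) (v : ι → ℤ → ℂ) (j : ι)
    (a : ℤ → ℂ) : momentumTerm σ (fun n => a (n j) * μ n) v =
      momentumTerm σ μ (Function.update v j fun n => a n * v j n) := by
  ext n
  simp only [momentumTerm]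
  split_ifs
  · rw [prod_update, ← Finset.mul_prod_erase _ (fun i => v i (n i)) (Finset.mem_univ j)]
    ring
  · rfl

lemma HasGrowth.pow_mul (hμ : HasGrowth q C μ) (j : ι) (m : ℕ) :
    HasGrowth (m + q) C fun n => n j ^ m * μ n := fun n => by
  classical
  have hfactor : |(n j : ℝ)| ^ m ≤ ∏ i, (1 + |(n i : ℝ)|) ^ m := by
    rw [← Finset.mul_prod_erase _ _ (Finset.mem_univ j)]
    calc |(n j : ℝ)| ^ m ≤ (1 + |(n j : ℝ)|) ^ m := by gcongr; simp
      _ ≤ _ := le_mul_of_one_le_right (by positivity)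
        (Finset.one_le_prod fun i _ => one_le_pow₀ (by simp))
  calc ‖(n j : ℂ) ^ m * μ n‖ = |(n j : ℝ)| ^ m * ‖μ n‖ := by
        rw [norm_mul, norm_pow, Complex.norm_intCast]
    _ ≤ (∏ i, (1 + |(n i : ℝ)|) ^ m) * (C * ∏ i, (1 + |(n i : ℝ)|) ^ q) := by
        gcongr
        exact hμ n
    _ = _ := by simp_rw [pow_add, Finset.prod_mul_distrib]; ring

lemma momentumForm_signedPowerSum_mul {v : ι → ℤ → ℂ} (hv : ∀ i, RapidDecay (v i))
    (hμ : HasGrowth q C μ) (m : ℕ) :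
    momentumForm σ (fun n => signedPowerSum σ m n * μ n) v =
      ∑ j, (σ j : ℂ) * momentumForm σ (fun n => n j ^ m * μ n) v := by
  simp_rw [momentumForm, ← tsum_mul_left]
  rw [← Summable.tsum_finsetSum fun j _ =>
    (RapidDecay.summable_momentumTerm hv (hμ.pow_mul j m)).mul_left _]
  refine tsum_congr fun n => ?_
  simp only [momentumTerm]
  split_ifs
  · rw [signedPowerSum]
    push_cast
    simp_rw [← mul_assoc, ← Finset.sum_mul]
  · simp

lemma norm_signedPowerSum_le (σ : ι → ℤˣ) (m : ℕ) (n : ι → ℤ) :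
    ‖(signedPowerSum σ m n : ℂ)‖ ≤ Fintype.card ι * ∏ i, (1 + |(n i : ℝ)|) ^ m := by
  rw [signedPowerSum, Int.cast_sum]
  refine (norm_sum_le_of_le _ fun j _ => ?_).trans
    (by rw [Finset.sum_const, nsmul_eq_mul, Finset.card_univ])
  simpa [abs_cast_sign] using (hasGrowth_one (q := 0)).pow_mul j m n

lemma HasGrowth.signedPowerSum_mul (hμ : HasGrowth q C μ) (σ : ι → ℤˣ) (m : ℕ) :
    HasGrowth (m + q) (Fintype.card ι * C) fun n => signedPowerSum σ m n * μ n := fun n => by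
  calc ‖(signedPowerSum σ m n : ℂ) * μ n‖
      ≤ Fintype.card ι * (∏ i, (1 + |(n i : ℝ)|) ^ m) * (C * ∏ i, (1 + |(n i : ℝ)|) ^ q) := by
        rw [norm_mul]
        gcongr
        exacts [norm_signedPowerSum_le σ m n, hμ n]
    _ = _ := by
        simp_rw [pow_add, Finset.prod_mul_distrib]
        ring

lemma hasGrowth_normalFormSymbol (k : ℕ) (σ : ι → ℤˣ) :
    HasGrowth (2 * k) (Fintype.card ι) (normalFormSymbol k σ) := fun n => by
  refine le_trans ?_ (norm_signedPowerSum_le σ (2 * k) n)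
  rw [normalFormSymbol, norm_div]
  obtain h | h := eq_or_ne (signedPowerSum σ 2 n) 0
  · simp [h]
  · exact div_le_self (norm_nonneg _) (by
      rw [Complex.norm_intCast]
      exact_mod_cast Int.one_le_abs h)

lemma signedPowerSum_eq_add_resonantSymbol (k : ℕ) (σ : ι → ℤˣ) (n : ι → ℤ) :
    (signedPowerSum σ (2 * k) n : ℂ) =
      signedPowerSum σ 2 n * normalFormSymbol k σ n + resonantSymbol k σ n := by
  rw [normalFormSymbol, resonantSymbol]
  split_ifs with h
  · simp [h]
  · rw [add_zero, mul_div_cancel₀ _ (by exact_mod_cast h)]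

lemma abs_pow_mul_norm_mul_norm_le {k Q : ℕ} {K : ℝ} {c c' : ℤ → ℂ} (hk : k + 1 ≤ Q)
    (hc : HasDecay Q K c) (hc' : HasDecay Q K c') (n : ℤ) :
    |(n : ℝ)| ^ (2 * k) * (‖c n‖ * ‖c' n‖) ≤ K ^ 2 * ((1 + |(n : ℝ)|) ^ 2)⁻¹ := by
  have h := mul_le_mul (hc.mono hk le_rfl n) (hc'.mono hk le_rfl n) (by positivity) hc.nonneg
  rw [← div_eq_mul_inv, le_div_iff₀ (by positivity)]
  calc _ ≤ (1 + |(n : ℝ)|) ^ (2 * k) * (‖c n‖ * ‖c' n‖) * (1 + |(n : ℝ)|) ^ 2 := by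
        gcongr
        simp
    _ ≤ K ^ 2 := by
        rw [← sq] at h
        exact le_of_eq_of_le (by ring) h

lemma summable_sobolevSq {k Q : ℕ} {K : ℝ} {c : ℤ → ℂ} (hk : k + 1 ≤ Q) (hc : HasDecay Q K c) :
    Summable fun n : ℤ => |(n : ℝ)| ^ (2 * k) * ‖c n‖ ^ 2 :=
  .of_nonneg_of_le (fun n => by positivity)
    (fun n => by simpa only [sq] using abs_pow_mul_norm_mul_norm_le hk hc hc n)
    (summable_inv_one_add_abs_sq.mul_left (K ^ 2))

lemma hasDerivAt_sobolevSq {k Q : ℕ} {c c' : ℝ → ℤ → ℂ} {t : ℝ} (hk : k + 1 ≤ Q)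
    (hc : HasDecayingDeriv Q c c' t) :
    HasDerivAt (fun s => sobolevSq k (c s))
      (∑' n : ℤ, |(n : ℝ)| ^ (2 * k) * (2 * inner ℝ (c t n) (c' t n))) t := by
  obtain ⟨K, hK⟩ := hc
  refine hasDerivAt_tsum_of_eventually ((summable_inv_one_add_abs_sq.mul_left (K ^ 2)).mul_left 2)
    (hK.mono fun s hs n => ⟨(hs.2.2 n).norm_sq.const_mul _, ?_⟩)
    (summable_sobolevSq hk hK.self_of_nhds.1)
  calc _ = |(n : ℝ)| ^ (2 * k) * (2 * ‖inner ℝ (c s n) (c' s n)‖) := by simp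
    _ ≤ |(n : ℝ)| ^ (2 * k) * (2 * (‖c s n‖ * ‖c' s n‖)) := by
        gcongr
        exact norm_inner_le_norm _ _
    _ = 2 * (|(n : ℝ)| ^ (2 * k) * (‖c s n‖ * ‖c' s n‖)) := by ring
    _ ≤ _ := mul_le_mul_of_nonneg_left (abs_pow_mul_norm_mul_norm_le hk hs.1 hs.2.1 n) zero_le_two

end form

/-! ### The evolution equation in Fourier space -/

section evolution

variable {p q : ℕ} {C : ℝ} {μ : (Slot p → ℤ) → ℂ} {f : ℝ → ℂ}

/-- The time derivative that the equation prescribes for the Fourier coefficients of `f`. -/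
def velocity (p : ℕ) (f : ℝ → ℂ) (n : ℤ) : ℂ :=
  -Complex.I * (n ^ 2 * coeff f n + coeff (nonlinearity p f) n)

/-- The part of the time derivative of the form with symbol `μ` due to the nonlinearity. -/
def nonlinearContribution (p : ℕ) (μ : (Slot p → ℤ) → ℂ) (f : ℝ → ℂ) : ℂ :=
  ∑ j, (slotSign p j : ℂ) * momentumForm (slotSign p) μ
    (Function.update (slotCoeff p (coeff f)) j (slotCoeff p (coeff (nonlinearity p f)) j))

/-- The pairing of `(-∂²)ᵏ f` with the nonlinearity, on the Fourier side. -/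
def nonlinearPairing (p k : ℕ) (f : ℝ → ℂ) : ℂ :=
  ∑' n : ℤ, n ^ (2 * k) * (coeff f n * (starRingEnd ℂ) (coeff (nonlinearity p f) n))

lemma RapidDecay.slotCoeff {c : ℤ → ℂ} (hc : RapidDecay c) (i : Slot p) :
    RapidDecay (slotCoeff p c i) := fun Q =>
  (hc Q).imp fun _ hK n => by simpa only [norm_slotCoeff] using hK n

lemma inner_coeff_velocity (n : ℤ) : inner ℝ (coeff f n) (velocity p f n) =
    -(coeff f n * (starRingEnd ℂ) (coeff (nonlinearity p f) n)).im := by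
  have hsq : (n ^ 2 : ℂ) = ((n ^ 2 : ℝ) : ℂ) := by push_cast; rfl
  rw [Complex.inner, velocity, hsq]
  simp only [neg_mul, Complex.neg_re, Complex.mul_re, Complex.I_re, Complex.add_re,
    Complex.ofReal_re, Complex.ofReal_im, Complex.I_im, Complex.add_im, Complex.mul_im,
    Complex.conj_re, Complex.conj_im]
  ring

lemma signConj_neg_I_mul (s : ℤˣ) (z : ℂ) :
    signConj s (-Complex.I * z) = -Complex.I * (s * signConj s z) := by
  obtain rfl | rfl := Int.units_eq_one_or s <;> simp

lemma slotCoeff_velocity (j : Slot p) (n : ℤ) :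
    slotCoeff p (velocity p f) j n = -Complex.I * (slotSign p j * (n ^ 2 * slotCoeff p (coeff f) j n
      + slotCoeff p (coeff (nonlinearity p f)) j n)) := by
  have hsq : (n ^ 2 : ℂ) = ((n ^ 2 : ℝ) : ℂ) := by push_cast; rfl
  rw [slotCoeff, velocity, signConj_neg_I_mul, map_add, signConj_mul, hsq, signConj_ofReal]
  rfl

lemma momentumTerm_update_velocity (n : Slot p → ℤ) (j : Slot p) :
    momentumTerm (slotSign p) μ
        (Function.update (slotCoeff p (coeff f)) j (slotCoeff p (velocity p f) j)) n =
      -Complex.I * (slotSign p j *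
        (momentumTerm (slotSign p) (fun m => m j ^ 2 * μ m) (slotCoeff p (coeff f)) n
          + momentumTerm (slotSign p) μ (Function.update (slotCoeff p (coeff f)) j
            (slotCoeff p (coeff (nonlinearity p f)) j)) n)) := by
  simp_rw [momentumTerm_mul_symbol _ _ _ j fun a => (a : ℂ) ^ 2, momentumTerm]
  split_ifs
  · simp_rw [prod_update, slotCoeff_velocity]
    ring
  · simp

lemma HasDecay.velocity {Q : ℕ} {K K' : ℝ} (hf : HasDecay (Q + 2) K (coeff f))
    (hF : HasDecay Q K' (coeff (nonlinearity p f))) :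
    HasDecay Q (K + K') (velocity p f) := fun n => by
  calc (1 + |(n : ℝ)|) ^ Q * ‖NLS.velocity p f n‖
      ≤ (1 + |(n : ℝ)|) ^ Q * ((1 + |(n : ℝ)|) ^ 2 * ‖coeff f n‖
          + ‖coeff (nonlinearity p f) n‖) := by
        gcongr
        refine (norm_mul_le _ _).trans ?_
        rw [norm_neg, Complex.norm_I, one_mul]
        refine (norm_add_le _ _).trans ?_
        rw [norm_mul, norm_pow, Complex.norm_intCast]
        gcongr
        simp
    _ = (1 + |(n : ℝ)|) ^ (Q + 2) * ‖coeff f n‖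
          + (1 + |(n : ℝ)|) ^ Q * ‖coeff (nonlinearity p f) n‖ := by ring
    _ ≤ K + K' := add_le_add (hf n) (hF n)

namespace SmoothPeriodic

variable (hf : SmoothPeriodic f)
include hf

lemma rapidDecay_slotCoeff (i : Slot p) : RapidDecay (slotCoeff p (coeff f) i) :=
  hf.rapidDecay.slotCoeff i

lemma rapidDecay_update_slotCoeff (j i : Slot p) :
    RapidDecay (Function.update (slotCoeff p (coeff f)) j
      (slotCoeff p (coeff (NLS.nonlinearity p f)) j) i) :=
  (Function.forall_update_iff _ fun _ => RapidDecay).2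
    ⟨(hf.nonlinearity p).rapidDecay.slotCoeff j, fun i _ => hf.rapidDecay_slotCoeff i⟩ i

lemma sum_momentumForm_update_velocity (hμ : HasGrowth q C μ) :
    ∑ j, momentumForm (slotSign p) μ
        (Function.update (slotCoeff p (coeff f)) j (slotCoeff p (velocity p f) j)) =
      -Complex.I * (momentumForm (slotSign p) (fun n => signedPowerSum (slotSign p) 2 n * μ n)
        (slotCoeff p (coeff f)) + nonlinearContribution p μ f) := by
  rw [momentumForm_signedPowerSum_mul hf.rapidDecay_slotCoeff hμ, nonlinearContribution,
    ← Finset.sum_add_distrib, Finset.mul_sum]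
  refine Finset.sum_congr rfl fun j _ => ?_
  simp_rw [momentumForm, momentumTerm_update_velocity, tsum_mul_left]
  rw [Summable.tsum_add
    (RapidDecay.summable_momentumTerm hf.rapidDecay_slotCoeff (hμ.pow_mul j 2))
    (RapidDecay.summable_momentumTerm (hf.rapidDecay_update_slotCoeff j) hμ), mul_add]

lemma summable_pow_mul_norm_coeff (m : ℕ) :
    Summable fun n : ℤ => |(n : ℝ)| ^ m * ‖coeff f n‖ := by
  obtain ⟨K, hK⟩ := hf.rapidDecay (m + 2)
  refine .of_nonneg_of_le (fun n => by positivity) (fun n => ?_) hK.summable_pow_mul_norm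
  gcongr
  simp

lemma momentumForm_pow (j : Slot p) (k : ℕ) :
    momentumForm (slotSign p) (fun n => n j ^ (2 * k) * 1) (slotCoeff p (coeff f)) =
      signConj (slotSign p j) (nonlinearPairing p k f) := by
  have hsum : Summable fun n : ℤ => ‖(n : ℂ) ^ (2 * k) * slotCoeff p (coeff f) j n‖ := by
    simpa [norm_slotCoeff] using hf.summable_pow_mul_norm_coeff (2 * k)
  rw [momentumForm, momentumTerm_mul_symbol _ (fun _ => 1) _ j fun a => (a : ℂ) ^ (2 * k)]
  refine (hf.tsum_mul_signConj_coeff_nonlinearity j hsum).symm.trans ?_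
  refine .trans ?_ (signConj (slotSign p j)).toContinuousLinearEquiv.map_tsum.symm
  refine tsum_congr fun n => ?_
  obtain h | h := Int.units_eq_one_or (slotSign p j) <;> simp [slotCoeff, h, mul_assoc]

lemma momentumForm_signedPowerSum (k : ℕ) :
    momentumForm (slotSign p) (fun n => signedPowerSum (slotSign p) (2 * k) n)
        (slotCoeff p (coeff f)) =
      (p + 1) * (2 * (nonlinearPairing p k f).im * Complex.I) := by
  have h := momentumForm_signedPowerSum_mul (σ := slotSign p) hf.rapidDecay_slotCoeff
    (hasGrowth_one (q := 0)) (2 * k)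
  simp only [Pi.one_apply, hf.momentumForm_pow] at h
  rw [← Complex.ofReal_ofNat, ← Complex.ofReal_mul, ← Complex.sub_conj]
  simpa [mul_add, sub_eq_add_neg] using h

lemma tsum_inner_coeff_velocity (k : ℕ) :
    ∑' n : ℤ, |(n : ℝ)| ^ (2 * k) * (2 * inner ℝ (coeff f n) (velocity p f n)) =
      (Complex.I * momentumForm (slotSign p) (fun n => signedPowerSum (slotSign p) (2 * k) n)
        (slotCoeff p (coeff f))).re / (p + 1) := by
  obtain ⟨K, hK⟩ := (hf.nonlinearity p).rapidDecay 0
  have hsum : Summable fun n : ℤ =>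
      (n : ℂ) ^ (2 * k) * (coeff f n * (starRingEnd ℂ) (coeff (NLS.nonlinearity p f) n)) := by
    refine .of_norm_bounded ((hf.summable_pow_mul_norm_coeff (2 * k)).mul_right K) fun n => ?_
    rw [norm_mul, norm_mul, norm_pow, Complex.norm_intCast, RCLike.norm_conj, ← mul_assoc]
    gcongr
    simpa using hK n
  have hterm : ∀ n : ℤ, |(n : ℝ)| ^ (2 * k) * (2 * inner ℝ (coeff f n) (velocity p f n)) =
      -2 * ((n : ℂ) ^ (2 * k) *
        (coeff f n * (starRingEnd ℂ) (coeff (NLS.nonlinearity p f) n))).im := fun n => by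
    have hpow : (n : ℂ) ^ (2 * k) = ((|(n : ℝ)| ^ (2 * k) : ℝ) : ℂ) := by
      rw [pow_mul |(n : ℝ)|, sq_abs, ← pow_mul]
      push_cast
      rfl
    rw [hpow, Complex.im_ofReal_mul, inner_coeff_velocity]
    ring
  simp_rw [hterm, tsum_mul_left, ← Complex.im_tsum hsum, hf.momentumForm_signedPowerSum]
  have hreal : ∀ x : ℝ,
      Complex.I * ((p + 1) * (2 * x * Complex.I)) = ((-2 * x * (p + 1) : ℝ) : ℂ) := fun x => by
    push_cast
    linear_combination 2 * x * (p + 1) * Complex.I_mul_I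
  rw [hreal, Complex.ofReal_re, mul_div_cancel_right₀ _ (by positivity), nonlinearPairing]

lemma nonlinearContribution_one : nonlinearContribution p 1 f = 0 := by
  have hform : ∀ j : Slot p, momentumForm (slotSign p) 1 (Function.update (slotCoeff p (coeff f)) j
      (slotCoeff p (coeff (NLS.nonlinearity p f)) j)) =
        ∑' n, (‖coeff (NLS.nonlinearity p f) n‖ ^ 2 : ℂ) := fun j => by
    rw [momentumForm, ← hf.tsum_mul_signConj_coeff_nonlinearity j
      ((hf.nonlinearity p).rapidDecay.slotCoeff j).summable_norm]
    exact tsum_congr fun n => by rw [slotCoeff, signConj_mul_signConj_neg, Complex.ofReal_pow]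
  simp_rw [nonlinearContribution, hform, ← Finset.sum_mul]
  simp

lemma momentumForm_one_slotCoeff :
    momentumForm (slotSign p) 1 (slotCoeff p (coeff f)) =
      (((2 * π)⁻¹ * ∫ x in (0 : ℝ)..(2 * π), (‖f x‖ ^ 2) ^ (p + 1) : ℝ) : ℂ) := by
  rw [momentumForm, (hasSum_momentumTerm_one
    (fun i => (hf.rapidDecay_slotCoeff i).summable_norm) hf.hasSum_slotCoeff_mul_mode).tsum_eq]
  simp_rw [prod_signConj_slotSign, intervalIntegral.integral_ofReal]
  push_cast
  rfl

end SmoothPeriodic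

/-- The homogeneous `Hᵏ` energy, corrected by the real part of the form with symbol `ν`. -/
def correctedEnergy (p k : ℕ) (ν : (Slot p → ℤ) → ℂ) (f : ℝ → ℂ) : ℝ :=
  sobolevSq k (coeff f)
    + (momentumForm (slotSign p) ν (slotCoeff p (coeff f))).re / (p + 1)

/-- The symbol of the form by which `correctedEnergy p k ν` fails to be conserved, apart from the
contribution of the nonlinearity to the derivative of the correction. -/
def remainderSymbol (p k : ℕ) (ν : (Slot p → ℤ) → ℂ) (n : Slot p → ℤ) : ℂ :=
  signedPowerSum (slotSign p) (2 * k) n - signedPowerSum (slotSign p) 2 n * ν n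

lemma HasDecayingDeriv.mono {Q Q' : ℕ} {c c' : ℝ → ℤ → ℂ} {t : ℝ} (h : HasDecayingDeriv Q c c' t)
    (hQ : Q' ≤ Q) : HasDecayingDeriv Q' c c' t :=
  h.imp fun _ hK => hK.mono fun _ hs => ⟨hs.1.mono hQ le_rfl, hs.2.1.mono hQ le_rfl, hs.2.2⟩

lemma HasDecayingDeriv.slotCoeff {Q : ℕ} {c c' : ℝ → ℤ → ℂ} {t : ℝ}
    (h : HasDecayingDeriv Q c c' t) (i : Slot p) :
    HasDecayingDeriv Q (fun s => slotCoeff p (c s) i) (fun s => slotCoeff p (c' s) i) t :=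
  h.imp fun _ hK => hK.mono fun s hs =>
    ⟨fun n => by simpa only [norm_slotCoeff] using hs.1 n,
      fun n => by simpa only [norm_slotCoeff] using hs.2.1 n,
      fun n => (signConj (slotSign p i)).toContinuousLinearEquiv.hasFDerivAt.comp_hasDerivAt s
        (hs.2.2 n)⟩

lemma momentumForm_remainderSymbol (hf : SmoothPeriodic f) (hμ : HasGrowth q C μ) (k : ℕ) :
    momentumForm (slotSign p) (remainderSymbol p k μ) (slotCoeff p (coeff f)) =
      momentumForm (slotSign p) (fun n => signedPowerSum (slotSign p) (2 * k) n)
          (slotCoeff p (coeff f))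
        - momentumForm (slotSign p) (fun n => signedPowerSum (slotSign p) 2 n * μ n)
          (slotCoeff p (coeff f)) := by
  rw [momentumForm, momentumForm, momentumForm, ← Summable.tsum_sub
    (RapidDecay.summable_momentumTerm hf.rapidDecay_slotCoeff (norm_signedPowerSum_le _ _))
    (RapidDecay.summable_momentumTerm hf.rapidDecay_slotCoeff (hμ.signedPowerSum_mul _ 2))]
  refine tsum_congr fun n => ?_
  simp only [momentumTerm, remainderSymbol]
  split_ifs <;> ring

lemma hasDerivAt_correctedEnergy {u : ℝ → ℝ → ℂ} {k Q : ℕ} {t : ℝ} (hkQ : k + 1 ≤ Q)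
    (hqQ : q + 2 ≤ Q) (hμ : HasGrowth q C μ) (hf : SmoothPeriodic (u t))
    (hu : HasDecayingDeriv Q (fun s => coeff (u s)) (fun s => velocity p (u s)) t) :
    HasDerivAt (fun s => correctedEnergy p k μ (u s))
      ((Complex.I * (momentumForm (slotSign p) (remainderSymbol p k μ) (slotCoeff p (coeff (u t)))
        - nonlinearContribution p μ (u t))).re / (p + 1)) t := by
  have hform := hasDerivAt_momentumForm (σ := slotSign p) hμ fun i => (hu.mono hqQ).slotCoeff i
  rw [hf.sum_momentumForm_update_velocity hμ] at hform
  refine ((hasDerivAt_sobolevSq hkQ hu).add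
    ((Complex.reCLM.hasFDerivAt.comp_hasDerivAt t hform).div_const (p + 1 : ℝ))).congr_deriv ?_
  rw [hf.tsum_inner_coeff_velocity, momentumForm_remainderSymbol hf hμ, ← add_div,
    Complex.reCLM_apply, ← Complex.add_re]
  ring_nf

end evolution

/-! ### Mass, energy and the Wiener norm -/

section conserved

/-- `∑ (1 + |n|)⁻²`, the factor by which a second order decay constant bounds the `ℓ¹` norm. -/
def decaySum : ℝ := ∑' n : ℤ, ((1 + |(n : ℝ)|) ^ 2)⁻¹

lemma decaySum_nonneg : 0 ≤ decaySum := tsum_nonneg fun _ => by positivity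

lemma HasDecay.tsum_norm_le {K : ℝ} {c : ℤ → ℂ} (h : HasDecay 2 K c) :
    ∑' n, ‖c n‖ ≤ K * decaySum := by
  rw [decaySum, ← tsum_mul_left]
  exact Summable.tsum_le_tsum (fun n => by simpa using HasDecay.pow_mul_norm_le (s := 0) h n)
    (by simpa using HasDecay.summable_pow_mul_norm (s := 0) h)
    (summable_inv_one_add_abs_sq.mul_left K)

lemma sobolevSq_nonneg (k : ℕ) (c : ℤ → ℂ) : 0 ≤ sobolevSq k c :=
  tsum_nonneg fun _ => by positivity

lemma HasDecay.sobolevSq_le {k Q : ℕ} {K : ℝ} {c : ℤ → ℂ} (hk : k + 1 ≤ Q) (h : HasDecay Q K c) :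
    sobolevSq k c ≤ K ^ 2 * decaySum := by
  rw [decaySum, ← tsum_mul_left]
  exact (summable_sobolevSq hk h).tsum_le_tsum
    (fun n => by simpa only [sq] using abs_pow_mul_norm_mul_norm_le hk h h n)
    (summable_inv_one_add_abs_sq.mul_left _)

/-- The conserved energy of the equation, up to the normalization of the measure on the torus. -/
def energy (p : ℕ) (f : ℝ → ℂ) : ℝ := correctedEnergy p 1 1 f

/-- The sum of the conserved mass and of the conserved energy. -/
def massEnergy (p : ℕ) (f : ℝ → ℂ) : ℝ := sobolevSq 0 (coeff f) + energy p f

/-- A bound for the Wiener norm when mass plus energy is at most `V`. -/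
def wienerBound (V : ℝ) : ℝ := 1 + decaySum + V

/-- A bound for `massEnergy` when the squared `H¹` norm is at most `M`. -/
def massEnergyBound (p : ℕ) (M : ℝ) : ℝ := M + wienerBound M ^ (2 * (p + 1))

lemma one_le_wienerBound {V : ℝ} (hV : 0 ≤ V) : 1 ≤ wienerBound V := by
  rw [wienerBound]
  linarith [decaySum_nonneg]

lemma massEnergyBound_nonneg (p : ℕ) {M : ℝ} (hM : 0 ≤ M) : 0 ≤ massEnergyBound p M :=
  add_nonneg hM (pow_nonneg (zero_le_one.trans (one_le_wienerBound hM)) _)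

lemma le_inv_add_mul_sq {w : ℝ} (hw : 0 < w) (a : ℝ) : 2 * a ≤ w⁻¹ + w * a ^ 2 := by
  have h := mul_nonneg (inv_nonneg.2 hw.le) (sq_nonneg (1 - w * a))
  have : w⁻¹ * (1 - w * a) ^ 2 = w⁻¹ - 2 * a + w * a ^ 2 := by
    field_simp
    ring
  linarith

namespace SmoothPeriodic

variable {p : ℕ} {f : ℝ → ℂ} (hf : SmoothPeriodic f)
include hf

lemma norm_le_tsum_norm_coeff (x : ℝ) : ‖f x‖ ≤ ∑' n, ‖coeff f n‖ := by
  rw [← (hf.hasSum_coeff_mul_mode x).tsum_eq]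
  have hnorm : ∀ n, ‖coeff f n * mode n x‖ = ‖coeff f n‖ := fun n => by
    rw [norm_mul, norm_mode, mul_one]
  refine (norm_tsum_le_tsum_norm ?_).trans_eq (tsum_congr hnorm)
  simpa only [hnorm] using hf.rapidDecay.summable_norm

lemma norm_le_of_hasDecay {K : ℝ} (h : HasDecay 2 K (coeff f)) (x : ℝ) : ‖f x‖ ≤ K * decaySum :=
  (hf.norm_le_tsum_norm_coeff x).trans h.tsum_norm_le

lemma summable_sobolevSq (k : ℕ) : Summable fun n : ℤ => |(n : ℝ)| ^ (2 * k) * ‖coeff f n‖ ^ 2 :=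
  (hf.rapidDecay (k + 1)).elim fun _ hK => NLS.summable_sobolevSq le_rfl hK

lemma tsum_norm_coeff_le :
    ∑' n, ‖coeff f n‖ ≤ decaySum + (sobolevSq 0 (coeff f) + sobolevSq 1 (coeff f)) := by
  have hsum := (hf.summable_sobolevSq 0).add (hf.summable_sobolevSq 1)
  rw [decaySum, sobolevSq, sobolevSq,
    ← (hf.summable_sobolevSq 0).tsum_add (hf.summable_sobolevSq 1),
    ← summable_inv_one_add_abs_sq.tsum_add hsum]
  refine hf.rapidDecay.summable_norm.tsum_le_tsum (fun n => ?_)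
    (summable_inv_one_add_abs_sq.add hsum)
  have hamgm := le_inv_add_mul_sq (w := (1 + |(n : ℝ)|) ^ 2) (by positivity) ‖coeff f n‖
  have hweight : (1 + |(n : ℝ)|) ^ 2 * ‖coeff f n‖ ^ 2
      ≤ 2 * (1 + |(n : ℝ)| ^ 2) * ‖coeff f n‖ ^ 2 := by
    gcongr
    nlinarith [sq_nonneg (1 - |(n : ℝ)|)]
  have hinv : 0 ≤ ((1 + |(n : ℝ)|) ^ 2)⁻¹ := by positivity
  simp only [mul_zero, pow_zero, mul_one]
  linarith

lemma potential_nonneg : 0 ≤ (momentumForm (slotSign p) 1 (slotCoeff p (coeff f))).re := by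
  rw [hf.momentumForm_one_slotCoeff, Complex.ofReal_re]
  exact mul_nonneg (by positivity)
    (intervalIntegral.integral_nonneg (by positivity) fun _ _ => by positivity)

lemma potential_le {L : ℝ} (hL : ∑' n, ‖coeff f n‖ ≤ L) :
    (momentumForm (slotSign p) 1 (slotCoeff p (coeff f))).re ≤ L ^ (2 * (p + 1)) := by
  have hintegral := intervalIntegral.norm_integral_le_of_norm_le_const (a := 0) (b := 2 * π)
    (f := fun x => (‖f x‖ ^ 2) ^ (p + 1)) (C := L ^ (2 * (p + 1))) fun x _ => by
      rw [← pow_mul, norm_pow, norm_norm]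
      gcongr
      exact (hf.norm_le_tsum_norm_coeff x).trans hL
  rw [sub_zero, abs_of_pos Real.two_pi_pos] at hintegral
  rw [hf.momentumForm_one_slotCoeff, Complex.ofReal_re, inv_mul_le_iff₀ Real.two_pi_pos]
  exact ((Real.le_norm_self _).trans hintegral).trans_eq (mul_comm _ _)

lemma sobolevSq_one_le_energy : sobolevSq 1 (coeff f) ≤ energy p f :=
  le_add_of_nonneg_right (div_nonneg hf.potential_nonneg (by positivity))

lemma massEnergy_nonneg : 0 ≤ massEnergy p f :=
  add_nonneg (sobolevSq_nonneg _ _) ((sobolevSq_nonneg _ _).trans hf.sobolevSq_one_le_energy)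

lemma tsum_norm_coeff_le_wienerBound {V : ℝ} (hV : massEnergy p f ≤ V) :
    ∑' n, ‖coeff f n‖ ≤ wienerBound V := by
  rw [massEnergy] at hV
  rw [wienerBound]
  linarith [hf.tsum_norm_coeff_le, hf.sobolevSq_one_le_energy (p := p)]

lemma massEnergy_le {M : ℝ} (hM : sobolevSq 0 (coeff f) + sobolevSq 1 (coeff f) ≤ M) :
    massEnergy p f ≤ massEnergyBound p M := by
  have hpot := hf.potential_le (p := p) (L := wienerBound M) (by
    rw [wienerBound]
    linarith [hf.tsum_norm_coeff_le])
  have hdiv := div_le_self (hf.potential_nonneg (p := p)) (b := (p + 1 : ℝ)) (by simp)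
  rw [massEnergy, energy, correctedEnergy, massEnergyBound]
  linarith

end SmoothPeriodic

end conserved

/-! ### Time regularity of the Fourier coefficients -/

section timeRegularity

lemma nonlinearityConst_pos (p Q : ℕ) {L : ℝ} (hL : 1 ≤ L) : 0 < nonlinearityConst p Q L := by
  unfold nonlinearityConst
  positivity

lemma HasDecay.coeff_iteratedDeriv {Q m : ℕ} {K : ℝ} {f : ℝ → ℂ} (hf : SmoothPeriodic f)
    (h : HasDecay (Q + m) K (coeff f)) : HasDecay Q K (coeff (iteratedDeriv m f)) := fun n => by
  rw [hf.norm_coeff_iteratedDeriv, ← mul_assoc]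
  refine le_trans ?_ (h n)
  rw [pow_add]
  gcongr
  simp

lemma coeff_const_mul_sub (a : ℂ) {f g : ℝ → ℂ} (hf : Continuous f) (hg : Continuous g) (n : ℤ) :
    coeff (fun x => a * (f x - g x)) n = a * (coeff f n - coeff g n) := by
  have hintegral : ∀ {h : ℝ → ℂ}, Continuous h →
      IntervalIntegrable (fun x => mode (-n) x * h x) volume 0 (2 * π) := fun hh =>
    ((continuous_mode _).mul hh).intervalIntegrable _ _
  simp_rw [coeff_eq_integral, mul_left_comm _ a, mul_sub, intervalIntegral.integral_sub
    ((hintegral hf).const_mul a) ((hintegral hg).const_mul a), intervalIntegral.integral_const_mul]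
  ring

lemma coeff_conj (f : ℝ → ℂ) (n : ℤ) :
    coeff (fun x => (starRingEnd ℂ) (f x)) n = (starRingEnd ℂ) (coeff f (-n)) := by
  have h := signConj_coeff (-1) f (-n)
  rw [signConj_neg_one] at h
  rw [h, coeff_eq_integral]
  simp

lemma HasDecay.coeff_conj {Q : ℕ} {K : ℝ} {f : ℝ → ℂ} (h : HasDecay Q K (coeff f)) :
    HasDecay Q K (coeff fun x => (starRingEnd ℂ) (f x)) := fun n => by
  simpa [NLS.coeff_conj] using h (-n)

lemma SmoothPeriodic.conj {f : ℝ → ℂ} (hf : SmoothPeriodic f) :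
    SmoothPeriodic fun x => (starRingEnd ℂ) (f x) where
  contDiff := Complex.conjCLE.contDiff.comp hf.contDiff
  periodic x := congrArg _ (hf.periodic x)

lemma SmoothPeriodic.norm_iteratedDeriv_two_sub_nonlinearity_le {f : ℝ → ℂ} {K : ℝ}
    (hf : SmoothPeriodic f) (p : ℕ) (h : HasDecay 4 K (coeff f)) (x : ℝ) :
    ‖_root_.iteratedDeriv 2 f x - NLS.nonlinearity p f x‖ ≤
      K * decaySum + K * decaySum * (K * decaySum) ^ (2 * p) := by
  have hsup := hf.norm_le_of_hasDecay (h.mono (by norm_num) le_rfl) x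
  refine (norm_sub_le _ _).trans (add_le_add
    ((hf.iteratedDeriv 2).norm_le_of_hasDecay (.coeff_iteratedDeriv hf h) x) ?_)
  rw [NLS.nonlinearity, norm_mul, norm_pow, Complex.norm_real, norm_norm]
  exact mul_le_mul hsup (pow_le_pow_left₀ (norm_nonneg _) hsup _) (by positivity)
    ((norm_nonneg _).trans hsup)

/-- A classical solution of the equation on the whole time axis, with the time derivative solved
for. -/
structure Solution (p : ℕ) (u : ℝ → ℝ → ℂ) : Prop where
  smoothPeriodic : ∀ t, SmoothPeriodic (u t)
  hasDerivAt : ∀ x t, HasDerivAt (fun s => u s x)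
    (Complex.I * (iteratedDeriv 2 (u t) x - nonlinearity p (u t) x)) t

lemma solution_of_isNLS {p : ℕ} {u : ℝ → ℝ → ℂ} (h : IsNLS p Set.univ u) : Solution p u where
  smoothPeriodic t := ⟨h.smooth t trivial, h.periodic t trivial⟩
  hasDerivAt x t := by
    refine (h.tdiff x t trivial).hasDerivAt.congr_deriv ?_
    rw [nonlinearity, ← h.eqn t trivial x, pD]
    linear_combination deriv (fun s => u s x) t * Complex.I_mul_I

/-- The Fourier coefficients of `u s` decay to order `Q`, uniformly for `s` near `t`. -/
def LocallyHasDecay (Q : ℕ) (u : ℝ → ℝ → ℂ) (t : ℝ) : Prop :=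
  ∃ K, ∀ᶠ s in 𝓝 t, HasDecay Q K (coeff (u s))

lemma LocallyHasDecay.mono {Q Q' : ℕ} {u : ℝ → ℝ → ℂ} {t : ℝ} (h : LocallyHasDecay Q u t)
    (hQ : Q' ≤ Q) : LocallyHasDecay Q' u t :=
  h.imp fun _ hK => hK.mono fun _ hs => hs.mono hQ le_rfl

lemma isOpen_locallyHasDecay (Q : ℕ) (u : ℝ → ℝ → ℂ) : IsOpen {t | LocallyHasDecay Q u t} :=
  isOpen_iff_mem_nhds.2 fun _ ⟨K, hK⟩ => hK.eventually_nhds.mono fun _ hs => ⟨K, hs⟩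

lemma exists_hasDecay_of_isCompact {Q : ℕ} {u : ℝ → ℝ → ℂ} {S : Set ℝ} (hS : IsCompact S)
    (h : ∀ s ∈ S, LocallyHasDecay Q u s) : ∃ K, ∀ s ∈ S, HasDecay Q K (coeff (u s)) := by
  refine hS.induction_on (p := fun T => ∃ K, ∀ s ∈ T, HasDecay Q K (coeff (u s))) ⟨0, by simp⟩
    (fun _ _ hST ⟨K, hK⟩ => ⟨K, fun s hs => hK s (hST hs)⟩) ?_ fun s hs => ?_
  · rintro T T' ⟨K, hK⟩ ⟨K', hK'⟩
    exact ⟨max K K', fun s hs => hs.elim (fun hs => (hK s hs).mono le_rfl (le_max_left _ _))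
      fun hs => (hK' s hs).mono le_rfl (le_max_right _ _)⟩
  · obtain ⟨K, hK⟩ := h s hs
    exact ⟨_, mem_nhdsWithin_of_mem_nhds hK, K, fun _ hr => hr⟩

namespace Solution

variable {p Q : ℕ} {u : ℝ → ℝ → ℂ} (hu : Solution p u)
include hu

lemma continuous_time (x : ℝ) : Continuous fun t => u t x :=
  continuous_iff_continuousAt.2 fun t => (hu.hasDerivAt x t).continuousAt

lemma timeReversal : Solution p fun t x => (starRingEnd ℂ) (u (-t) x) where
  smoothPeriodic t := (hu.smoothPeriodic (-t)).conj
  hasDerivAt x t := by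
    have h := ((hu.hasDerivAt x (-t)).scomp t (hasDerivAt_neg t)).star
    have hderiv : iteratedDeriv 2 (fun y => (starRingEnd ℂ) (u (-t) y)) x =
        (starRingEnd ℂ) (iteratedDeriv 2 (u (-t)) x) := by
      simp_rw [iteratedDeriv_succ, iteratedDeriv_zero, starRingEnd_apply, deriv.star']
    refine h.congr_deriv ?_
    simp [hderiv, nonlinearity]

lemma continuousOn_coeff {S : Set ℝ} {B : ℝ} (hB : ∀ t ∈ S, ∀ x, ‖u t x‖ ≤ B) (n : ℤ) :
    ContinuousOn (fun t => coeff (u t) n) S := fun t _ => by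
  simp_rw [coeff_eq_integral]
  refine continuousWithinAt_const.mul
    (intervalIntegral.continuousWithinAt_of_dominated_interval (bound := fun _ => B)
      (.of_forall fun s => ?_) ?_ intervalIntegrable_const (.of_forall fun x _ => ?_))
  · exact ((continuous_mode _).mul (hu.smoothPeriodic s).contDiff.continuous).aestronglyMeasurable
  · filter_upwards [self_mem_nhdsWithin] with s hs
    exact .of_forall fun x _ => by simpa [norm_mode] using hB s hs x
  · exact continuousWithinAt_const.mul (hu.continuous_time x).continuousWithinAt

lemma isClosed_hasDecay (hQ : 2 ≤ Q) (K : ℝ) : IsClosed {t | HasDecay Q K (coeff (u t))} := by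
  set B := {t | ∀ x, ‖u t x‖ ≤ K * decaySum} with hB
  have hBclosed : IsClosed B := by
    simp only [hB, Set.ofPred_forall]
    exact isClosed_iInter fun x => isClosed_le (hu.continuous_time x).norm continuous_const
  have hcont := hu.continuousOn_coeff (S := B) fun t ht => ht
  have heq : {t | HasDecay Q K (coeff (u t))} =
      ⋂ n : ℤ, B ∩ (fun t => (1 + |(n : ℝ)|) ^ Q * ‖coeff (u t) n‖) ⁻¹' Set.Iic K := by
    ext t
    simp only [Set.mem_ofPred_eq, Set.mem_iInter, Set.mem_inter_iff, Set.mem_preimage, Set.mem_Iic]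
    exact ⟨fun h n => ⟨(hu.smoothPeriodic t).norm_le_of_hasDecay (h.mono hQ le_rfl), h n⟩,
      fun h n => (h n).2⟩
  rw [heq]
  exact isClosed_iInter fun n =>
    (continuousOn_const.mul (hcont n).norm).preimage_isClosed_of_isClosed hBclosed isClosed_Iic

lemma hasDerivAt_coeff {t : ℝ} (h : LocallyHasDecay 4 u t) (n : ℤ) :
    HasDerivAt (fun s => coeff (u s) n) (velocity p (u t) n) t := by
  obtain ⟨K, hK⟩ := h
  set B := K * decaySum
  have hsmooth := hu.smoothPeriodic
  have hlin := ((hsmooth t).iteratedDeriv 2).contDiff.continuous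
  have hnonlin := ((hsmooth t).nonlinearity p).contDiff.continuous
  have hmode : ∀ s, Continuous fun x => mode (-n) x * u s x := fun s =>
    (continuous_mode _).mul (hsmooth s).contDiff.continuous
  have hintegral := (intervalIntegral.hasDerivAt_integral_of_dominated_loc_of_deriv_le (μ := volume)
    (a := 0) (b := 2 * π) (bound := fun _ => B + B * B ^ (2 * p))
    (F := fun s x => mode (-n) x * u s x) (F' := fun s x => mode (-n) x *
      (Complex.I * (iteratedDeriv 2 (u s) x - nonlinearity p (u s) x))) hK
    (.of_forall fun s => (hmode s).aestronglyMeasurable) ((hmode t).intervalIntegrable _ _)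
    ((continuous_mode _).mul (continuous_const.mul (hlin.sub hnonlin))).aestronglyMeasurable
    (.of_forall fun x _ s hs => by
      simpa [norm_mode] using (hsmooth s).norm_iteratedDeriv_two_sub_nonlinearity_le p hs x)
    intervalIntegrable_const (.of_forall fun x _ s _ => (hu.hasDerivAt x s).const_mul _)).2
  simp_rw [coeff_eq_integral (u _)]
  refine (hintegral.const_mul (2 * π : ℂ)⁻¹).congr_deriv ?_
  rw [← coeff_eq_integral, coeff_const_mul_sub _ hlin hnonlin, (hsmooth t).coeff_iteratedDeriv,
    velocity, mul_pow, Complex.I_sq]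
  ring

lemma hasDecayingDeriv (hQ : 2 ≤ Q) {t : ℝ} (h : LocallyHasDecay (Q + 2) u t) :
    HasDecayingDeriv Q (fun s => coeff (u s)) (fun s => velocity p (u s)) t := by
  obtain ⟨K, hK⟩ := h
  set L := max 1 (K * decaySum)
  have hconst := (nonlinearityConst_pos p Q (le_max_left 1 (K * decaySum))).le
  refine ⟨K + nonlinearityConst p Q L * K, hK.eventually_nhds.mono fun s hs => ?_⟩
  have hdecay := hs.self_of_nhds
  have hwiener : ∑' n, ‖coeff (u s) n‖ ≤ L :=
    (hdecay.mono (by lia) le_rfl).tsum_norm_le.trans (le_max_right _ _)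
  refine ⟨hdecay.mono (by lia) (le_add_of_nonneg_right (mul_nonneg hconst hdecay.nonneg)),
    hdecay.velocity ((hu.smoothPeriodic s).hasDecay_coeff_nonlinearity (le_max_left _ _) hwiener
      (hdecay.mono (by lia) le_rfl)), fun n => hu.hasDerivAt_coeff ⟨K, hs.mono fun r hr => ?_⟩ n⟩
  exact hr.mono (by lia) le_rfl

end Solution

end timeRegularity

/-! ### Conservation laws and persistence of decay -/

section persistence

lemma abs_sub_le_of_abs_hasDerivAt_le {g g' : ℝ → ℝ} {x y C : ℝ}
    (hc : ContinuousOn g (Set.Icc x y)) (hd : ∀ s ∈ Set.Ioo x y, HasDerivAt g (g' s) s)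
    (hC : ∀ s ∈ Set.Ioo x y, |g' s| ≤ C) {r r' : ℝ} (hr : r ∈ Set.Icc x y)
    (hr' : r' ∈ Set.Icc x y) : |g r' - g r| ≤ C * |r' - r| := by
  wlog hle : r ≤ r' generalizing r r'
  · rw [abs_sub_comm, abs_sub_comm r']
    exact this hr' hr (le_of_not_ge hle)
  obtain rfl | hlt := hle.eq_or_lt
  · simp
  have hsub : Set.Ioo r r' ⊆ Set.Ioo x y := Set.Ioo_subset_Ioo hr.1 hr'.2
  obtain ⟨s, hs, hslope⟩ := exists_hasDerivAt_eq_slope g g' hlt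
    (hc.mono (Set.Icc_subset_Icc hr.1 hr'.2)) fun s hs => hd s (hsub hs)
  rw [eq_div_iff (sub_pos.2 hlt).ne'] at hslope
  rw [← hslope, abs_mul]
  exact mul_le_mul_of_nonneg_right (hC s (hsub hs)) (abs_nonneg _)

lemma remainderSymbol_zero_zero (p : ℕ) : remainderSymbol p 0 0 = 0 := by
  ext n
  simp [remainderSymbol, signedPowerSum, slotSign]

lemma remainderSymbol_one_one (p : ℕ) : remainderSymbol p 1 1 = 0 := by
  ext n
  simp [remainderSymbol]

lemma momentumForm_zero {ι : Type*} [Fintype ι] (σ : ι → ℤˣ) (v : ι → ℤ → ℂ) :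
    momentumForm σ 0 v = 0 := by
  simp [momentumForm, momentumTerm]

/-- The length of the time intervals on which a Wiener norm at most `L` lets the decay constant
at most double. -/
def doublingTime (p Q : ℕ) (L : ℝ) : ℝ := (4 * nonlinearityConst p Q L)⁻¹

lemma doublingTime_pos (p Q : ℕ) {L : ℝ} (hL : 1 ≤ L) : 0 < doublingTime p Q L :=
  inv_pos.2 (mul_pos zero_lt_four (nonlinearityConst_pos p Q hL))

namespace Solution

variable {p Q : ℕ} {u : ℝ → ℝ → ℂ} (hu : Solution p u)
include hu

lemma hasDerivAt_mass {t : ℝ} (h : LocallyHasDecay 4 u t) :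
    HasDerivAt (fun s => sobolevSq 0 (coeff (u s))) 0 t := by
  have hcorr := hasDerivAt_correctedEnergy (k := 0) (q := 0) (C := 0) (μ := 0) (by norm_num)
    (by norm_num) (fun n => by simp) (hu.smoothPeriodic t) (hu.hasDecayingDeriv le_rfl h)
  simpa [correctedEnergy, remainderSymbol_zero_zero, nonlinearContribution, momentumForm_zero]
    using hcorr

lemma hasDerivAt_energy {t : ℝ} (h : LocallyHasDecay 4 u t) :
    HasDerivAt (fun s => energy p (u s)) 0 t := by
  have hcorr := hasDerivAt_correctedEnergy (k := 1) le_rfl le_rfl (hasGrowth_one (q := 0))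
    (hu.smoothPeriodic t) (hu.hasDecayingDeriv le_rfl h)
  simpa [energy, remainderSymbol_one_one, (hu.smoothPeriodic t).nonlinearContribution_one,
    momentumForm_zero] using hcorr

variable {S : Set ℝ} {K : ℝ}

lemma continuousOn_sobolevSq {k : ℕ} (hk : k + 1 ≤ Q) (hQ : 2 ≤ Q)
    (hS : ∀ s ∈ S, HasDecay Q K (coeff (u s))) :
    ContinuousOn (fun s => sobolevSq k (coeff (u s))) S := by
  have hcont := hu.continuousOn_coeff fun s hs x =>
    (hu.smoothPeriodic s).norm_le_of_hasDecay ((hS s hs).mono hQ le_rfl) x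
  refine continuousOn_tsum (fun n => continuousOn_const.mul ((hcont n).norm.pow 2))
    (summable_inv_one_add_abs_sq.mul_left (K ^ 2)) fun n s hs => ?_
  rw [Real.norm_of_nonneg (by positivity), sq]
  exact abs_pow_mul_norm_mul_norm_le hk (hS s hs) (hS s hs) n

lemma continuousOn_energy (hS : ∀ s ∈ S, HasDecay 4 K (coeff (u s))) :
    ContinuousOn (fun s => energy p (u s)) S := by
  refine (hu.continuousOn_sobolevSq (k := 1) (by norm_num) (by norm_num) hS).add
    (ContinuousOn.div_const ?_ _)
  simp_rw [(hu.smoothPeriodic _).momentumForm_one_slotCoeff, Complex.ofReal_re]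
  refine continuousOn_const.mul fun t _ =>
    intervalIntegral.continuousWithinAt_of_dominated_interval
      (bound := fun _ => ((K * decaySum) ^ 2) ^ (p + 1)) (.of_forall fun s => ?_) ?_
      intervalIntegrable_const
      (.of_forall fun x _ => ((hu.continuous_time x).norm.pow 2).pow _ |>.continuousWithinAt)
  · exact (((hu.smoothPeriodic s).contDiff.continuous.norm.pow 2).pow _).aestronglyMeasurable
  · filter_upwards [self_mem_nhdsWithin] with s hs
    refine .of_forall fun x _ => ?_
    rw [Real.norm_of_nonneg (by positivity)]
    gcongr
    exact (hu.smoothPeriodic s).norm_le_of_hasDecay ((hS s hs).mono (by norm_num) le_rfl) x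

lemma massEnergy_eq {x y r r' : ℝ} (hdecay : ∀ s ∈ Set.Icc x y, HasDecay 4 K (coeff (u s)))
    (hlocal : ∀ s ∈ Set.Ioo x y, LocallyHasDecay 4 u s) (hr : r ∈ Set.Icc x y)
    (hr' : r' ∈ Set.Icc x y) : massEnergy p (u r') = massEnergy p (u r) := by
  have h := abs_sub_le_of_abs_hasDerivAt_le (g := fun s => massEnergy p (u s))
    (g' := fun _ => 0 + 0) (C := 0)
    ((hu.continuousOn_sobolevSq (by norm_num) (by norm_num) hdecay).add
      (hu.continuousOn_energy hdecay))
    (fun s hs => (hu.hasDerivAt_mass (hlocal s hs)).add (hu.hasDerivAt_energy (hlocal s hs)))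
    (by simp) hr hr'
  rwa [zero_mul, abs_nonpos_iff, sub_eq_zero] at h

lemma abs_weighted_norm_sq_sub_le {x y r r' L Y : ℝ} (hQ : 4 ≤ Q) (n : ℤ)
    (hlocal : ∀ s ∈ Set.Ioo x y, LocallyHasDecay Q u s) (hL : 1 ≤ L)
    (hwiener : ∀ s ∈ Set.Icc x y, ∑' n, ‖coeff (u s) n‖ ≤ L)
    (hY : ∀ s ∈ Set.Icc x y, HasDecay Q Y (coeff (u s))) (hxy : y - x ≤ doublingTime p Q L)
    (hr : r ∈ Set.Icc x y) (hr' : r' ∈ Set.Icc x y) :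
    |((1 + |(n : ℝ)|) ^ Q * ‖coeff (u r') n‖) ^ 2 - ((1 + |(n : ℝ)|) ^ Q * ‖coeff (u r) n‖) ^ 2|
      ≤ Y ^ 2 / 2 := by
  set w := (1 + |(n : ℝ)|) ^ Q
  set B := nonlinearityConst p Q L
  have hB : 0 < B := nonlinearityConst_pos p Q hL
  have hY0 := (hY r hr).nonneg
  have hcont := hu.continuousOn_coeff (S := Set.Icc x y) (fun s hs =>
    (hu.smoothPeriodic s).norm_le_of_hasDecay ((hY s hs).mono (by lia) le_rfl)) n
  simp_rw [mul_pow]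
  calc |w ^ 2 * ‖coeff (u r') n‖ ^ 2 - w ^ 2 * ‖coeff (u r) n‖ ^ 2|
      ≤ 2 * (Y * (B * Y)) * |r' - r| := by
        refine abs_sub_le_of_abs_hasDerivAt_le (continuousOn_const.mul (hcont.norm.pow 2))
          (fun s hs => (hu.hasDerivAt_coeff ((hlocal s hs).mono hQ) n).norm_sq.const_mul _)
          (fun s hs => ?_) hr hr'
        have hs' := Set.Ioo_subset_Icc_self hs
        have hnonlin := (hu.smoothPeriodic s).hasDecay_coeff_nonlinearity (p := p) hL
          (hwiener s hs') (hY s hs') n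
        rw [inner_coeff_velocity, abs_mul, abs_mul, abs_neg, abs_two, abs_of_nonneg (by positivity)]
        calc _ ≤ w ^ 2 * (2 * (‖coeff (u s) n‖ * ‖coeff (nonlinearity p (u s)) n‖)) := by
              gcongr
              exact (Complex.abs_im_le_norm _).trans_eq (by rw [norm_mul, RCLike.norm_conj])
          _ = 2 * ((w * ‖coeff (u s) n‖) * (w * ‖coeff (nonlinearity p (u s)) n‖)) := by ring
          _ ≤ 2 * (Y * (B * Y)) := by
              gcongr
              exact hY s hs' n
    _ ≤ 2 * (Y * (B * Y)) * (4 * B)⁻¹ := by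
        gcongr
        exact (abs_sub_le_iff.2 ⟨by linarith [hr.1, hr'.2], by linarith [hr.2, hr'.1]⟩).trans hxy
    _ = Y ^ 2 / 2 := by
        field_simp
        ring

/-- With `Y` the best decay constant on the interval, `Y² ≤ X² + Y² / 2`. -/
lemma hasDecay_two_mul {x y r r' C L X : ℝ} (hQ : 4 ≤ Q)
    (hdecay : ∀ s ∈ Set.Icc x y, HasDecay Q C (coeff (u s)))
    (hlocal : ∀ s ∈ Set.Ioo x y, LocallyHasDecay Q u s) (hL : 1 ≤ L)
    (hwiener : ∀ s ∈ Set.Icc x y, ∑' n, ‖coeff (u s) n‖ ≤ L) (hxy : y - x ≤ doublingTime p Q L)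
    (hr : r ∈ Set.Icc x y) (hr' : r' ∈ Set.Icc x y) (hX : HasDecay Q X (coeff (u r))) :
    HasDecay Q (2 * X) (coeff (u r')) := by
  let W : Set ℝ := {w | ∃ s ∈ Set.Icc x y, ∃ n : ℤ, (1 + |(n : ℝ)|) ^ Q * ‖coeff (u s) n‖ = w}
  obtain ⟨Y, hYub, hYleast⟩ := Real.exists_isLUB (s := W) ⟨_, r, hr, 0, rfl⟩
    ⟨C, by rintro _ ⟨s, hs, n, rfl⟩; exact hdecay s hs n⟩
  have hY : ∀ s ∈ Set.Icc x y, HasDecay Q Y (coeff (u s)) := fun s hs n => hYub ⟨s, hs, n, rfl⟩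
  have hY0 := (hY r hr).nonneg
  have hself : Y ≤ √(X ^ 2 + Y ^ 2 / 2) := hYleast <| by
    rintro _ ⟨s, hs, n, rfl⟩
    have hvar := hu.abs_weighted_norm_sq_sub_le hQ n hlocal hL hwiener hY hxy hr hs
    refine Real.le_sqrt_of_sq_le ?_
    linarith [(abs_le.1 hvar).2, pow_le_pow_left₀ (by positivity) (hX n) 2]
  rw [Real.le_sqrt hY0 (by positivity)] at hself
  exact (hY r' hr').mono le_rfl (by nlinarith [hX.nonneg])

end Solution

end persistence

/-! ### Locally uniform decay -/

section locallyUniformDecay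

variable {p Q : ℕ} {u : ℝ → ℝ → ℂ}

namespace Solution

variable (hu : Solution p u)
include hu

lemma tsum_norm_coeff_le_of_locallyHasDecay {x y : ℝ}
    (hlocal : ∀ s ∈ Set.Icc x y, LocallyHasDecay 4 u s) {s : ℝ} (hs : s ∈ Set.Icc x y) :
    ∑' n, ‖coeff (u s) n‖ ≤ wienerBound (massEnergy p (u y)) := by
  obtain ⟨K, hK⟩ := exists_hasDecay_of_isCompact isCompact_Icc hlocal
  refine (hu.smoothPeriodic s).tsum_norm_coeff_le_wienerBound (p := p) (le_of_eq ?_)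
  exact hu.massEnergy_eq hK (fun r hr => hlocal r (Set.Ioo_subset_Icc_self hr))
    ⟨hs.1.trans hs.2, le_rfl⟩ hs

lemma exists_hasDecay_of_locallyHasDecay_Ioc {a t : ℝ} (hQ : 4 ≤ Q) (hat : a < t)
    (hlocal : ∀ s ∈ Set.Ioc a t, LocallyHasDecay Q u s) :
    ∃ K, ∀ s ∈ Set.Icc a t, HasDecay Q K (coeff (u s)) := by
  set L := wienerBound (massEnergy p (u t))
  have hL : 1 ≤ L := one_le_wienerBound (hu.smoothPeriodic t).massEnergy_nonneg
  have hwiener : ∀ s ∈ Set.Ioc a t, ∑' n, ‖coeff (u s) n‖ ≤ L := fun s hs =>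
    hu.tsum_norm_coeff_le_of_locallyHasDecay
      (fun r hr => (hlocal r ⟨hs.1.trans_le hr.1, hr.2⟩).mono hQ) ⟨le_rfl, hs.2⟩
  set b := min t (a + doublingTime p Q L)
  have hab : a < b := lt_min hat (lt_add_of_pos_right a (doublingTime_pos p Q hL))
  have hbt : b ≤ t := min_le_left _ _
  obtain ⟨K₁, hK₁⟩ := exists_hasDecay_of_isCompact isCompact_Icc fun r hr =>
    hlocal r ⟨hab.trans_le (Set.mem_Icc.1 hr).1, (Set.mem_Icc.1 hr).2⟩
  obtain ⟨K₀, hK₀⟩ := (hu.smoothPeriodic a).rapidDecay Q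
  have hleft : ∀ s ∈ Set.Ioc a b, HasDecay Q (2 * K₁) (coeff (u s)) := by
    intro s hs
    have hsub : Set.Icc s b ⊆ Set.Ioc a t := fun r hr => ⟨hs.1.trans_le hr.1, hr.2.trans hbt⟩
    obtain ⟨K, hK⟩ := exists_hasDecay_of_isCompact isCompact_Icc fun r hr => hlocal r (hsub hr)
    exact hu.hasDecay_two_mul hQ hK (fun r hr => hlocal r (hsub (Set.Ioo_subset_Icc_self hr))) hL
      (fun r hr => hwiener r (hsub hr))
      (by linarith [hs.1, min_le_right t (a + doublingTime p Q L)]) ⟨hs.2, le_rfl⟩ ⟨le_rfl, hs.2⟩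
      (hK₁ b ⟨le_rfl, hbt⟩)
  have hK₁_nonneg := (hK₁ b ⟨le_rfl, hbt⟩).nonneg
  refine ⟨max K₀ (2 * K₁), fun s hs => ?_⟩
  obtain rfl | has := hs.1.eq_or_lt
  · exact hK₀.mono le_rfl (le_max_left _ _)
  obtain hsb | hbs := le_total s b
  · exact (hleft s ⟨has, hsb⟩).mono le_rfl (le_max_right _ _)
  · exact (hK₁ s ⟨hbs, hs.2⟩).mono le_rfl (le_max_of_le_right (by linarith))

end Solution

/-- A time, depending only on the decay constant `K` at the initial time, on which the decay
constant at most doubles. -/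
def persistenceTime (p Q : ℕ) (K : ℝ) : ℝ :=
  doublingTime p Q (wienerBound (massEnergyBound p (2 * (K ^ 2 * decaySum))))

lemma massEnergyBound_sq_nonneg (p : ℕ) (K : ℝ) :
    0 ≤ massEnergyBound p (2 * (K ^ 2 * decaySum)) :=
  massEnergyBound_nonneg p (by have := decaySum_nonneg; positivity)

lemma persistenceTime_pos (p Q : ℕ) (K : ℝ) : 0 < persistenceTime p Q K :=
  doublingTime_pos p Q (one_le_wienerBound (massEnergyBound_sq_nonneg p K))

namespace Solution

variable (hu : Solution p u)
include hu

lemma hasDecay_two_mul_of_locallyHasDecay_Ioc {a t K : ℝ} (hQ : 4 ≤ Q) (hat : a < t)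
    (hlocal : ∀ s ∈ Set.Ioc a t, LocallyHasDecay Q u s) (ha : HasDecay Q K (coeff (u a)))
    (hta : t - a ≤ persistenceTime p Q K) : HasDecay Q (2 * K) (coeff (u t)) := by
  obtain ⟨C, hC⟩ := hu.exists_hasDecay_of_locallyHasDecay_Ioc hQ hat hlocal
  have hlocal' : ∀ s ∈ Set.Ioo a t, LocallyHasDecay Q u s := fun s hs =>
    hlocal s (Set.Ioo_subset_Ioc_self hs)
  have hinitial : massEnergy p (u a) ≤ massEnergyBound p (2 * (K ^ 2 * decaySum)) := by
    refine (hu.smoothPeriodic a).massEnergy_le ?_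
    linarith [ha.sobolevSq_le (k := 0) (by lia), ha.sobolevSq_le (k := 1) (by lia)]
  have hleft : a ∈ Set.Icc a t := Set.left_mem_Icc.2 hat.le
  refine hu.hasDecay_two_mul hQ hC hlocal' (one_le_wienerBound (massEnergyBound_sq_nonneg p K))
    (fun s hs => (hu.smoothPeriodic s).tsum_norm_coeff_le_wienerBound (p := p) ?_) hta hleft
    (Set.right_mem_Icc.2 hat.le) ha
  rwa [hu.massEnergy_eq (fun r hr => (hC r hr).mono hQ le_rfl)
    (fun r hr => (hlocal' r hr).mono hQ) hleft hs]

/-- Start the propagation at the last time before `t` at which decay is not locally uniform. -/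
lemma hasDecay_two_mul_of_not_locallyHasDecay {t₀ t K δ : ℝ} (hQ : 4 ≤ Q)
    (hδ : δ ≤ persistenceTime p Q K) (hbad : ¬ LocallyHasDecay Q u t₀)
    (hK : ∀ s, |s - t₀| < δ → ¬ LocallyHasDecay Q u s → HasDecay Q K (coeff (u s)))
    (hle : t₀ ≤ t) (hlt : t < t₀ + δ) : HasDecay Q (2 * K) (coeff (u t)) := by
  have hnear : ∀ s, t₀ ≤ s → s ≤ t → |s - t₀| < δ := fun s hs hst => by
    rw [abs_of_nonneg (sub_nonneg.2 hs)]
    linarith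
  have hK_nonneg : 0 ≤ K := (hK t₀ (hnear t₀ le_rfl hle) hbad).nonneg
  by_cases hgood : LocallyHasDecay Q u t
  swap
  · exact (hK t (hnear t hle le_rfl) hgood).mono le_rfl (by linarith)
  set S := {s | ¬ LocallyHasDecay Q u s} ∩ Set.Icc t₀ t
  have hclosed : IsClosed S := (isOpen_locallyHasDecay Q u).isClosed_compl.inter isClosed_Icc
  have hbdd : BddAbove S := ⟨t, fun s hs => hs.2.2⟩
  obtain ⟨hlast_bad, hlast⟩ := hclosed.csSup_mem ⟨t₀, hbad, le_rfl, hle⟩ hbdd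
  have hlast_lt : sSup S < t := hlast.2.lt_of_ne fun h => hlast_bad (h ▸ hgood)
  refine hu.hasDecay_two_mul_of_locallyHasDecay_Ioc hQ hlast_lt (fun s hs => ?_)
    (hK _ (hnear _ hlast.1 hlast.2) hlast_bad) (by linarith [hlast.1])
  by_contra hs_bad
  exact hs.1.not_ge (le_csSup hbdd ⟨hs_bad, hlast.1.trans hs.1.le, hs.2⟩)

end Solution

lemma hasDecay_coeff_conj_iff {K : ℝ} {f : ℝ → ℂ} :
    HasDecay Q K (coeff fun x => (starRingEnd ℂ) (f x)) ↔ HasDecay Q K (coeff f) :=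
  ⟨fun h => by simpa using h.coeff_conj, HasDecay.coeff_conj⟩

lemma locallyHasDecay_timeReversal_iff {t : ℝ} :
    LocallyHasDecay Q (fun s x => (starRingEnd ℂ) (u (-s) x)) t ↔ LocallyHasDecay Q u (-t) := by
  simp_rw [LocallyHasDecay, hasDecay_coeff_conj_iff]
  rw [← Homeomorph.coe_neg, ← (Homeomorph.neg ℝ).map_nhds_eq]
  rfl

namespace Solution

variable (hu : Solution p u)
include hu

/-- By Baire's theorem, the times without locally uniform decay, if any, have a relatively open
subset on which the decay is uniform. -/
lemma exists_hasDecay_near_not_locallyHasDecay (hQ : 2 ≤ Q) {t : ℝ}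
    (hbad : ¬ LocallyHasDecay Q u t) :
    ∃ t₀ δ K, 0 < δ ∧ ¬ LocallyHasDecay Q u t₀ ∧
      ∀ s, |s - t₀| < δ → ¬ LocallyHasDecay Q u s → HasDecay Q K (coeff (u s)) := by
  let S := {s | ¬ LocallyHasDecay Q u s}
  have : Nonempty S := ⟨⟨t, hbad⟩⟩
  have : CompleteSpace S := (isOpen_locallyHasDecay Q u).isClosed_compl.completeSpace_coe
  obtain ⟨K, t₀, ht₀⟩ := nonempty_interior_of_iUnion_of_closed
    (f := fun K : ℕ => {s : S | HasDecay Q K (coeff (u s))})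
    (fun K => (hu.isClosed_hasDecay hQ K).preimage continuous_subtype_val)
    (Set.eq_univ_of_forall fun s => by
      obtain ⟨K, hK⟩ := (hu.smoothPeriodic s).rapidDecay Q
      obtain ⟨N, hN⟩ := exists_nat_ge K
      exact Set.mem_iUnion.2 ⟨N, hK.mono le_rfl hN⟩)
  obtain ⟨δ, hδ, hball⟩ := Metric.isOpen_iff.1 isOpen_interior t₀ ht₀
  exact ⟨t₀, δ, K, hδ, t₀.2, fun s hs hs_bad =>
    interior_subset (hball (show (⟨s, hs_bad⟩ : S) ∈ Metric.ball t₀ δ from hs))⟩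

theorem locallyHasDecay (Q : ℕ) (t : ℝ) : LocallyHasDecay Q u t := by
  suffices h : ∀ Q, 4 ≤ Q → LocallyHasDecay Q u t from
    (h _ (le_max_right Q 4)).mono (le_max_left _ _)
  intro Q hQ
  by_contra hbad
  obtain ⟨t₀, δ, K, hδ, ht₀, hK⟩ := hu.exists_hasDecay_near_not_locallyHasDecay (by lia) hbad
  set η := min δ (persistenceTime p Q K)
  have hη : 0 < η := lt_min hδ (persistenceTime_pos p Q K)
  have hKη : ∀ s, |s - t₀| < η → ¬ LocallyHasDecay Q u s → HasDecay Q K (coeff (u s)) :=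
    fun s hs => hK s (hs.trans_le (min_le_left _ _))
  refine ht₀ ⟨2 * K, ?_⟩
  filter_upwards [Metric.ball_mem_nhds t₀ hη] with s hs
  rw [Metric.mem_ball, Real.dist_eq, abs_lt] at hs
  obtain hle | hle := le_total t₀ s
  · exact hu.hasDecay_two_mul_of_not_locallyHasDecay hQ (min_le_right _ _) ht₀ hKη hle
      (by linarith)
  · have hrev := hu.timeReversal.hasDecay_two_mul_of_not_locallyHasDecay (t₀ := -t₀) (t := -s)
      (K := K) hQ (min_le_right δ _) (by simpa [locallyHasDecay_timeReversal_iff] using ht₀)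
      (fun r hr hr_bad => hasDecay_coeff_conj_iff.2 <| hKη (-r)
        (by rwa [← abs_neg, show -(-r - t₀) = r - -t₀ by ring])
        (by simpa [locallyHasDecay_timeReversal_iff] using hr_bad))
      (by linarith) (by linarith)
    simpa [hasDecay_coeff_conj_iff] using hrev

end Solution

end locallyUniformDecay

/-! ### Bounds on the modified energy -/

section modifiedEnergy

lemma SobolevBound.slotCoeff {k p : ℕ} {c : ℤ → ℂ} {L H : ℝ≥0∞} (h : SobolevBound k c L H)
    (i : Slot p) : SobolevBound k (slotCoeff p c i) L H := by
  obtain ⟨hwiener, hone, hhigh⟩ := h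
  have hnorm : ∀ n, ‖NLS.slotCoeff p c i n‖ₑ = ‖c n‖ₑ := fun n => by
    rw [← ofReal_norm, norm_slotCoeff, ofReal_norm]
  exact ⟨by simpa only [hnorm], by simpa only [hnorm], by simpa only [hnorm]⟩

lemma SobolevBound.mono {k : ℕ} {c : ℤ → ℂ} {L L' H : ℝ≥0∞} (h : SobolevBound k c L H)
    (hL : L ≤ L') : SobolevBound k c L' H :=
  ⟨h.wiener.trans hL, h.one.trans hL, h.high.trans (mul_le_mul_left hL H)⟩

/-- The first parameter of a `SobolevBound` for the nonlinearity of a function with parameter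
`L`. -/
def nonlinearitySobolevConst (p k : ℕ) (L : ℝ≥0∞) : ℝ≥0∞ :=
  Fintype.card (Slot p) ^ (k + 2) * L ^ (Fintype.card (Slot p) + 1)

lemma nonlinearitySobolevConst_ne_top (p k : ℕ) {L : ℝ≥0∞} (hL : L ≠ ⊤) :
    nonlinearitySobolevConst p k L ≠ ⊤ :=
  ENNReal.mul_ne_top (ENNReal.pow_ne_top (ENNReal.natCast_ne_top _)) (ENNReal.pow_ne_top hL)

lemma one_le_card_slot (p : ℕ) : (1 : ℝ≥0∞) ≤ Fintype.card (Slot p) := by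
  exact_mod_cast Fintype.card_pos

lemma le_nonlinearitySobolevConst (p k : ℕ) {L : ℝ≥0∞} (hL : 1 ≤ L) :
    L ≤ nonlinearitySobolevConst p k L := by
  rw [nonlinearitySobolevConst, pow_succ L, ← mul_assoc]
  exact le_mul_of_one_le_left' (one_le_mul (one_le_pow₀ (one_le_card_slot p)) (one_le_pow₀ hL))

lemma SobolevBound.nonlinearity {k p : ℕ} {f : ℝ → ℂ} {L H : ℝ≥0∞}
    (h : SobolevBound k (coeff f) L H) (hf : SmoothPeriodic f) (hL : 1 ≤ L) (hL_top : L ≠ ⊤) :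
    SobolevBound k (coeff (nonlinearity p f)) (nonlinearitySobolevConst p k L) H := by
  have hcard := one_le_card_slot p
  set N := Fintype.card (Slot p)
  refine ⟨?_, ?_, ?_⟩
  · calc _ ≤ L ^ N := hf.tsum_enorm_coeff_nonlinearity_le hL h.wiener
      _ ≤ L ^ (N + 1) := pow_le_pow_right₀ hL N.le_succ
      _ ≤ _ := le_mul_of_one_le_left' (one_le_pow₀ hcard)
  · calc _ ≤ (N : ℝ≥0∞) ^ (1 + 1) * L * L ^ N :=
          hf.l2Norm_freqWeight_mul_coeff_nonlinearity_le 1 hL hL_top h.wiener h.one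
      _ = (N : ℝ≥0∞) ^ (0 + 2) * L ^ (N + 1) := by ring
      _ ≤ _ := by
        unfold nonlinearitySobolevConst
        gcongr
        exact k.zero_le
  · calc _ ≤ (N : ℝ≥0∞) ^ (k + 1) * (L * H) * L ^ N :=
          hf.l2Norm_freqWeight_mul_coeff_nonlinearity_le k hL hL_top h.wiener h.high
      _ = (N : ℝ≥0∞) ^ (k + 1) * L ^ (N + 1) * H := by ring
      _ ≤ _ := by
        unfold nonlinearitySobolevConst
        gcongr
        exact one_le_two

lemma SmoothPeriodic.l2Norm_freqWeight_mul_coeff_le {f : ℝ → ℂ} (hf : SmoothPeriodic f) (s : ℕ) :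
    l2Norm (fun n => freqWeight s n * ‖coeff f n‖ₑ) ≤
      ENNReal.ofReal √(sobolevSq s (coeff f)) := by
  rw [l2Norm_le_iff, ← ENNReal.ofReal_pow (Real.sqrt_nonneg _), Real.sq_sqrt (sobolevSq_nonneg _ _),
    sobolevSq, ENNReal.ofReal_tsum_of_nonneg (fun _ => by positivity) (hf.summable_sobolevSq s)]
  refine (tsum_congr fun n => ?_).le
  rw [freqWeight_eq_ofReal, ← ofReal_norm, ← ENNReal.ofReal_mul (by positivity),
    ← ENNReal.ofReal_pow (by positivity), mul_pow, ← pow_mul, mul_comm s]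

lemma SmoothPeriodic.sobolevBound {f : ℝ → ℂ} {L : ℝ} (hf : SmoothPeriodic f) (k : ℕ)
    (hL : 1 ≤ L) (hwiener : ∑' n, ‖coeff f n‖ ≤ L) (hone : sobolevSq 1 (coeff f) ≤ L ^ 2) :
    SobolevBound k (coeff f) (ENNReal.ofReal L) (ENNReal.ofReal √(sobolevSq k (coeff f))) where
  wiener := by
    simp_rw [← ofReal_norm]
    rw [← ENNReal.ofReal_tsum_of_nonneg (fun _ => norm_nonneg _) hf.rapidDecay.summable_norm]
    exact ENNReal.ofReal_le_ofReal hwiener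
  one := (hf.l2Norm_freqWeight_mul_coeff_le 1).trans
    (ENNReal.ofReal_le_ofReal (Real.sqrt_le_iff.2 ⟨by linarith, hone⟩))
  high := (hf.l2Norm_freqWeight_mul_coeff_le k).trans
    (le_mul_of_one_le_left' (by simpa using hL))

/-- The constant in the multilinear estimate `norm_momentumForm_le` for forms with `N` arguments
and symbols with constant `K`. -/
def formConst (N : ℕ) (K L : ℝ≥0∞) : ℝ :=
  ((N : ℝ≥0∞) ^ 4 * (K * (2 + resonanceConst)) * L ^ (N + 4)).toReal

lemma norm_momentumForm_le {ι : Type*} [Fintype ι] {σ : ι → ℤˣ} {μ : (ι → ℤ) → ℂ}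
    {v : ι → ℤ → ℂ} {k : ℕ} {K L : ℝ≥0∞} {H : ℝ} (hμ : SymbolBound k σ K μ) (hK : K ≠ ⊤)
    (hL : 1 ≤ L) (hL_top : L ≠ ⊤) (hH : 0 ≤ H)
    (hv : ∀ i, SobolevBound k (v i) L (ENNReal.ofReal H)) :
    ‖momentumForm σ μ v‖ ≤ formConst (Fintype.card ι) K L * H ^ 2 := by
  set A := (Fintype.card ι : ℝ≥0∞) ^ 4 * (K * (2 + resonanceConst)) * L ^ (Fintype.card ι + 4)
  have hA : A ≠ ⊤ := ENNReal.mul_ne_top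
    (ENNReal.mul_ne_top (ENNReal.pow_ne_top (ENNReal.natCast_ne_top _))
      (ENNReal.mul_ne_top hK (ENNReal.add_ne_top.2 ⟨ENNReal.ofNat_ne_top, resonanceConst_ne_top⟩)))
    (ENNReal.pow_ne_top hL_top)
  refine (ENNReal.ofReal_le_ofReal_iff (by unfold formConst; positivity)).1 ?_
  calc ENNReal.ofReal ‖momentumForm σ μ v‖ ≤ ∑' n, ‖momentumTerm σ μ v n‖ₑ := by
        rw [ofReal_norm]
        exact enorm_tsum_le_tsum_enorm
    _ ≤ A * ENNReal.ofReal H ^ 2 := tsum_enorm_momentumTerm_le hμ hL hv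
    _ = ENNReal.ofReal (A.toReal * H ^ 2) := by
        rw [ENNReal.ofReal_mul ENNReal.toReal_nonneg, ENNReal.ofReal_toReal hA,
          ENNReal.ofReal_pow hH]

/-- The squared `Hᵏ` seminorm corrected by the normal form that removes its nonresonant
variation. -/
def modifiedEnergy (p k : ℕ) (f : ℝ → ℂ) : ℝ :=
  correctedEnergy p k (normalFormSymbol k (slotSign p)) f

/-- The time derivative of `modifiedEnergy p k` along the flow, as a function of the state. -/
def modifiedEnergyRate (p k : ℕ) (f : ℝ → ℂ) : ℝ :=
  (Complex.I * (momentumForm (slotSign p) (resonantSymbol k (slotSign p)) (slotCoeff p (coeff f)) -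
    nonlinearContribution p (normalFormSymbol k (slotSign p)) f)).re / (p + 1)

lemma remainderSymbol_normalFormSymbol (p k : ℕ) :
    remainderSymbol p k (normalFormSymbol k (slotSign p)) = resonantSymbol k (slotSign p) := by
  ext n
  rw [remainderSymbol, signedPowerSum_eq_add_resonantSymbol, add_sub_cancel_left]

lemma Solution.hasDerivAt_modifiedEnergy {p : ℕ} {u : ℝ → ℝ → ℂ} (hu : Solution p u) (k : ℕ)
    (t : ℝ) : HasDerivAt (fun s => modifiedEnergy p k (u s)) (modifiedEnergyRate p k (u t)) t := by
  have h := hasDerivAt_correctedEnergy (k := k) (by lia) le_rfl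
    (hasGrowth_normalFormSymbol k (slotSign p)) (hu.smoothPeriodic t)
    (hu.hasDecayingDeriv (Q := 2 * k + 2) (by lia) (hu.locallyHasDecay _ t))
  rwa [remainderSymbol_normalFormSymbol] at h

/-- The modified energy differs from the squared `Hᵏ⁺¹` seminorm by at most `a` times the
squared `Hᵏ` seminorm, which also bounds its rate of change. -/
structure EnergyControl (p k : ℕ) (a : ℝ) (f : ℝ → ℂ) : Prop where
  correction : |modifiedEnergy p (k + 1) f - sobolevSq (k + 1) (coeff f)| ≤
    a * sobolevSq k (coeff f)
  rate : |modifiedEnergyRate p (k + 1) f| ≤ a * sobolevSq k (coeff f)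

lemma abs_re_div_succ_le (p : ℕ) {z : ℂ} {B : ℝ} (hz : ‖z‖ ≤ B) : |z.re / (p + 1)| ≤ B := by
  rw [abs_div, abs_of_nonneg (by positivity : (0 : ℝ) ≤ p + 1)]
  exact (div_le_self (abs_nonneg _) (by simp)).trans ((Complex.abs_re_le_norm z).trans hz)

lemma norm_nonlinearContribution_le {p : ℕ} {f : ℝ → ℂ} {μ : (Slot p → ℤ) → ℂ} {B : ℝ}
    (h : ∀ j, ‖momentumForm (slotSign p) μ (Function.update (slotCoeff p (coeff f)) j
      (slotCoeff p (coeff (nonlinearity p f)) j))‖ ≤ B) :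
    ‖nonlinearContribution p μ f‖ ≤ Fintype.card (Slot p) * B := by
  refine (norm_sum_le_of_le (n := fun _ => B) _ fun j _ => ?_).trans_eq
    (by simp only [Finset.sum_const, Finset.card_univ, nsmul_eq_mul])
  rw [norm_mul, Complex.norm_intCast, abs_cast_sign, one_mul]
  exact h j

lemma exists_energyControl (p k : ℕ) (hp : 1 ≤ p) {L : ℝ} (hL : 1 ≤ L) :
    ∃ a, 0 < a ∧ ∀ f, SmoothPeriodic f → ∑' n, ‖coeff f n‖ ≤ L → sobolevSq 1 (coeff f) ≤ L ^ 2 →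
      EnergyControl p k a f := by
  obtain ⟨K, hK, hsymbol⟩ := exists_symbolBound (ι := Slot p) k (by simp; lia)
  obtain ⟨hnormal, hresonant⟩ := hsymbol (slotSign p)
  have hL' : 1 ≤ ENNReal.ofReal L := by simpa using hL
  set L' := nonlinearitySobolevConst p k (ENNReal.ofReal L)
  have hLL' : ENNReal.ofReal L ≤ L' := le_nonlinearitySobolevConst p k hL'
  have hL'_top : L' ≠ ⊤ := nonlinearitySobolevConst_ne_top p k ENNReal.ofReal_ne_top
  set N := Fintype.card (Slot p)
  set A := formConst N K L'
  have hA : 0 ≤ A := ENNReal.toReal_nonneg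
  refine ⟨A + N * A + 1, by positivity, fun f hf hwiener hone => ?_⟩
  set S := sobolevSq k (coeff f)
  have hS : 0 ≤ S := sobolevSq_nonneg _ _
  have hbound := hf.sobolevBound k hL hwiener hone
  have hcoeff : ∀ i, SobolevBound k (slotCoeff p (coeff f) i) L' (ENNReal.ofReal √S) :=
    fun i => (hbound.mono hLL').slotCoeff i
  have hform : ∀ {μ v}, SymbolBound k (slotSign p) K μ →
      (∀ i, SobolevBound k (v i) L' (ENNReal.ofReal √S)) →
      ‖momentumForm (slotSign p) μ v‖ ≤ A * S := fun hμ hv =>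
    (norm_momentumForm_le hμ hK (hL'.trans hLL') hL'_top (Real.sqrt_nonneg S) hv).trans_eq
      (by rw [Real.sq_sqrt hS])
  have hcontribution : ‖nonlinearContribution p (normalFormSymbol (k + 1) (slotSign p)) f‖ ≤
      N * (A * S) := norm_nonlinearContribution_le fun j => hform hnormal fun i => by
    rcases eq_or_ne i j with rfl | hij
    · rw [Function.update_self]
      exact (hbound.nonlinearity hf hL' ENNReal.ofReal_ne_top).slotCoeff i
    · rw [Function.update_of_ne hij]
      exact hcoeff i
  have hNAS : 0 ≤ N * (A * S) := by positivity
  constructor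
  · rw [modifiedEnergy, correctedEnergy, add_sub_cancel_left]
    exact abs_re_div_succ_le p ((hform hnormal hcoeff).trans (by linarith))
  · refine abs_re_div_succ_le p ?_
    rw [norm_mul, Complex.norm_I, one_mul]
    linarith [norm_sub_le_of_le (hform hresonant hcoeff) hcontribution]

end modifiedEnergy

/-! ### Growth of Sobolev norms -/

section growth

lemma pow_add_le_interpolation {x y : ℝ} (hx : 0 < x) (hy : 0 ≤ y) (i j : ℕ) :
    y ^ (j + i) ≤ x ^ i * y ^ j + y ^ (j + i + 1) / x := by
  obtain hyx | hxy := le_total y x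
  · calc y ^ (j + i) = y ^ i * y ^ j := by ring
      _ ≤ x ^ i * y ^ j := by gcongr
      _ ≤ _ := le_add_of_nonneg_right (by positivity)
  · calc y ^ (j + i) ≤ y ^ (j + i + 1) / x := by
          rw [le_div_iff₀ hx, pow_succ]
          gcongr
      _ ≤ _ := le_add_of_nonneg_left (by positivity)

lemma SmoothPeriodic.sobolevSq_add_le_interpolation {f : ℝ → ℂ} (hf : SmoothPeriodic f) {x : ℝ}
    (hx : 0 < x) (i j : ℕ) :
    sobolevSq (j + i) (coeff f) ≤
      x ^ i * sobolevSq j (coeff f) + sobolevSq (j + i + 1) (coeff f) / x := by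
  have hlow := (hf.summable_sobolevSq j).mul_left (x ^ i)
  have hhigh := (hf.summable_sobolevSq (j + i + 1)).div_const x
  unfold sobolevSq
  rw [← tsum_mul_left, ← tsum_div_const, ← hlow.tsum_add hhigh]
  refine (hf.summable_sobolevSq (j + i)).tsum_le_tsum (fun n => ?_) (hlow.add hhigh)
  calc |(n : ℝ)| ^ (2 * (j + i)) * ‖coeff f n‖ ^ 2
      ≤ (x ^ i * |(n : ℝ)| ^ (2 * j) + |(n : ℝ)| ^ (2 * (j + i + 1)) / x) * ‖coeff f n‖ ^ 2 := by
        gcongr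
        simpa only [pow_mul] using pow_add_le_interpolation hx (sq_nonneg |(n : ℝ)|) i j
    _ = _ := by ring

/-- Evaluate the energy balance at a maximum of `Y` on `[0, t]`. -/
lemma le_two_mul_add_of_abs_sub_le {Y Z E E' : ℝ → ℝ} {a b q t : ℝ} (ha : 0 < a) (ht : 0 ≤ t)
    (hY : ContinuousOn Y (Set.Icc 0 t)) (hE : ∀ s, HasDerivAt E (E' s) s) (hZ : ∀ s, 0 ≤ Z s)
    (hEY : ∀ s, |E s - Y s| ≤ a * Z s) (hE' : ∀ s, |E' s| ≤ a * Z s) (hb : a * (2 + t) ≤ b)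
    (hZY : ∀ s, Z s ≤ q + Y s / (2 * b)) : Y t ≤ 2 * Y 0 + 2 * b * q := by
  have hb0 : 0 < b := (by positivity : 0 < a * (2 + t)).trans_le hb
  have hzero : (0 : ℝ) ∈ Set.Icc 0 t := ⟨le_rfl, ht⟩
  obtain ⟨r, hr, hmax⟩ := isCompact_Icc.exists_isMaxOn ⟨0, hzero⟩ hY
  set g := q + Y r / (2 * b)
  have hZg : ∀ s ∈ Set.Icc 0 t, a * Z s ≤ a * g := fun s hs => by
    have hYs : Y s ≤ Y r := hmax hs
    gcongr
    exact (hZY s).trans (by simp only [g]; gcongr)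
  have hag : 0 ≤ a * g := (mul_nonneg ha.le (hZ r)).trans (hZg r hr)
  have hEr : |E r - E 0| ≤ a * g * t :=
    calc |E r - E 0| ≤ a * g * |r - 0| :=
          abs_sub_le_of_abs_hasDerivAt_le (fun s _ => (hE s).continuousAt.continuousWithinAt)
            (fun s _ => hE s)
            (fun s hs => (hE' s).trans (hZg s (Set.Ioo_subset_Icc_self hs))) hzero hr
      _ ≤ a * g * t := by
          rw [sub_zero, abs_of_nonneg hr.1]
          gcongr
          exact hr.2
  have hg : 0 ≤ g := nonneg_of_mul_nonneg_right hag ha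
  have hYr : Y r ≤ Y 0 + b * g := by
    linarith [(abs_le.1 hEr).2, (abs_le.1 ((hEY r).trans (hZg r hr))).1,
      (abs_le.1 ((hEY 0).trans (hZg 0 hzero))).2, mul_le_mul_of_nonneg_right hb hg]
  have hbg : b * g = b * q + Y r / 2 := by
    simp only [g]
    field_simp
  have hYt : Y t ≤ Y r := hmax ⟨ht, le_rfl⟩
  linarith

lemma sqrt_add_le_sqrt_add_sqrt {x y : ℝ} (hx : 0 ≤ x) (hy : 0 ≤ y) : √(x + y) ≤ √x + √y :=
  Real.sqrt_le_iff.2 ⟨by positivity, by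
    linarith [add_sq (√x) (√y), Real.sq_sqrt hx, Real.sq_sqrt hy,
      mul_nonneg (Real.sqrt_nonneg x) (Real.sqrt_nonneg y)]⟩

lemma SmoothPeriodic.HkSq_eq {f : ℝ → ℂ} (hf : SmoothPeriodic f) (k : ℕ) :
    HkSq k f = 2 * π * (sobolevSq 0 (coeff f) + sobolevSq k (coeff f)) := by
  have hmass : L2sq f = 2 * π * sobolevSq 0 (coeff f) := by
    rw [← hf.L2sq_pD 0, pD, iteratedDeriv_zero]
  rw [HkSq, hf.L2sq_pD k, hmass, mul_add]

lemma SmoothPeriodic.sobolevSq_add_le_of_HkNorm_le {f : ℝ → ℂ} (hf : SmoothPeriodic f) {k : ℕ}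
    {R : ℝ} (hR : HkNorm k f ≤ R) :
    sobolevSq 0 (coeff f) + sobolevSq k (coeff f) ≤ R ^ 2 / (2 * π) := by
  rw [le_div_iff₀' (by positivity), ← hf.HkSq_eq]
  exact (Real.sqrt_le_iff.1 hR).2

namespace Solution

variable {p k : ℕ} {u : ℝ → ℝ → ℂ} (hu : Solution p u)
include hu

lemma sobolevSq_zero_eq (t : ℝ) : sobolevSq 0 (coeff (u t)) = sobolevSq 0 (coeff (u 0)) := by
  have hderiv := fun t => hu.hasDerivAt_mass (hu.locallyHasDecay 4 t)
  exact is_const_of_deriv_eq_zero (fun t => (hderiv t).differentiableAt)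
    (fun t => (hderiv t).deriv) t 0

lemma energy_eq (t : ℝ) : energy p (u t) = energy p (u 0) := by
  have hderiv := fun t => hu.hasDerivAt_energy (hu.locallyHasDecay 4 t)
  exact is_const_of_deriv_eq_zero (fun t => (hderiv t).differentiableAt)
    (fun t => (hderiv t).deriv) t 0

lemma massEnergy_le {R : ℝ} (hR : HkNorm 1 (u 0) ≤ R) (t : ℝ) :
    massEnergy p (u t) ≤ massEnergyBound p (R ^ 2 / (2 * π)) := by
  rw [massEnergy, hu.sobolevSq_zero_eq, hu.energy_eq]
  exact (hu.smoothPeriodic 0).massEnergy_le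
    ((hu.smoothPeriodic 0).sobolevSq_add_le_of_HkNorm_le hR)

variable {a t : ℝ} (ha : 0 < a) (hcontrol : ∀ s, EnergyControl p k a (u s))
include ha hcontrol

lemma sobolevSq_succ_le {b q : ℝ} (ht : 0 ≤ t) (hb : a * (2 + t) ≤ b)
    (hq : ∀ s, sobolevSq k (coeff (u s)) ≤ q + sobolevSq (k + 1) (coeff (u s)) / (2 * b)) :
    sobolevSq (k + 1) (coeff (u t)) ≤ 2 * sobolevSq (k + 1) (coeff (u 0)) + 2 * b * q := by
  obtain ⟨K, hK⟩ := exists_hasDecay_of_isCompact (isCompact_Icc (a := 0) (b := t))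
    fun s _ => hu.locallyHasDecay (k + 2) s
  exact le_two_mul_add_of_abs_sub_le ha ht (hu.continuousOn_sobolevSq le_rfl (by lia) hK)
    (hu.hasDerivAt_modifiedEnergy (k + 1)) (fun _ => sobolevSq_nonneg _ _)
    (fun s => (hcontrol s).correction) (fun s => (hcontrol s).rate) hb hq

lemma sobolevSq_succ_le_of_le_one (ht : 0 ≤ t) (ht1 : t ≤ 1) :
    sobolevSq (k + 1) (coeff (u t)) ≤
      2 * sobolevSq (k + 1) (coeff (u 0)) + (6 * a) ^ (k + 1) * sobolevSq 0 (coeff (u 0)) := by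
  have hinterp : ∀ s, sobolevSq k (coeff (u s)) ≤ (6 * a) ^ k * sobolevSq 0 (coeff (u 0)) +
      sobolevSq (k + 1) (coeff (u s)) / (2 * (3 * a)) := fun s => by
    have h := (hu.smoothPeriodic s).sobolevSq_add_le_interpolation
      (by positivity : 0 < 6 * a) k 0
    rw [show 2 * (3 * a) = 6 * a by ring]
    rwa [zero_add, hu.sobolevSq_zero_eq] at h
  calc _ ≤ _ := hu.sobolevSq_succ_le ha hcontrol ht (b := 3 * a) (by nlinarith) hinterp
    _ = _ := by ring

end Solution

namespace Solution

variable {p k : ℕ} {u : ℝ → ℝ → ℂ} (hu : Solution p u) {a t : ℝ} (ha : 0 < a)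
include hu ha

lemma sobolevSq_add_two_le {M : ℝ} (hcontrol : ∀ s, EnergyControl p (k + 1) a (u s))
    (hM : ∀ s, sobolevSq 1 (coeff (u s)) ≤ M) (ht : 1 ≤ t) :
    sobolevSq (k + 2) (coeff (u t)) ≤
      2 * sobolevSq (k + 2) (coeff (u 0)) + (6 * a) ^ (k + 1) * M * t ^ (k + 1) := by
  have hinterp : ∀ s, sobolevSq (k + 1) (coeff (u s)) ≤ (6 * a * t) ^ k * M +
      sobolevSq (k + 2) (coeff (u s)) / (2 * (3 * a * t)) := fun s =>
    calc sobolevSq (k + 1) (coeff (u s))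
        ≤ (6 * a * t) ^ k * sobolevSq 1 (coeff (u s)) +
            sobolevSq (k + 2) (coeff (u s)) / (6 * a * t) := by
          have h := (hu.smoothPeriodic s).sobolevSq_add_le_interpolation
            (by positivity : 0 < 6 * a * t) k 1
          rwa [add_comm 1 k] at h
      _ ≤ _ := by
          rw [show 2 * (3 * a * t) = 6 * a * t by ring]
          gcongr
          exact hM s
  calc _ ≤ _ := hu.sobolevSq_succ_le ha hcontrol (by linarith) (b := 3 * a * t) (by nlinarith)
        hinterp
    _ = _ := by ring

lemma HkNorm_succ_le_of_le_one (hcontrol : ∀ s, EnergyControl p k a (u s)) (ht : 0 ≤ t)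
    (ht1 : t ≤ 1) :
    HkNorm (k + 1) (u t) ≤ √(2 + (6 * a) ^ (k + 1)) * HkNorm (k + 1) (u 0) := by
  rw [HkNorm, HkNorm, ← Real.sqrt_mul (by positivity), (hu.smoothPeriodic t).HkSq_eq,
    (hu.smoothPeriodic 0).HkSq_eq, hu.sobolevSq_zero_eq, mul_left_comm]
  have hgrowth := hu.sobolevSq_succ_le_of_le_one ha hcontrol ht ht1
  have hmass := sobolevSq_nonneg 0 (coeff (u 0))
  have hhigh : 0 ≤ (6 * a) ^ (k + 1) * sobolevSq (k + 1) (coeff (u 0)) :=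
    mul_nonneg (by positivity) (sobolevSq_nonneg _ _)
  gcongr
  linarith

lemma HkNorm_add_two_le {M : ℝ} (hcontrol : ∀ s, EnergyControl p (k + 1) a (u s))
    (hM : ∀ s, sobolevSq 1 (coeff (u s)) ≤ M) (ht : 1 ≤ t) :
    HkNorm (k + 2) (u t) ≤ √2 * HkNorm (k + 2) (u 0) +
      √(2 * π * ((6 * a) ^ (k + 1) * M)) * t ^ (((k : ℝ) + 1) / 2) := by
  have hM_nonneg : 0 ≤ M := (sobolevSq_nonneg _ _).trans (hM 0)
  have hrpow : t ^ (((k : ℝ) + 1) / 2) = √(t ^ (k + 1)) := by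
    rw [Real.sqrt_eq_rpow, ← Real.rpow_natCast, ← Real.rpow_mul (by linarith), Nat.cast_succ,
      mul_one_div]
  rw [hrpow, HkNorm, HkNorm, ← Real.sqrt_mul zero_le_two, ← Real.sqrt_mul (by positivity)]
  have hHkSq : 0 ≤ HkSq (k + 2) (u 0) := by
    rw [(hu.smoothPeriodic 0).HkSq_eq]
    exact mul_nonneg (by positivity) (add_nonneg (sobolevSq_nonneg _ _) (sobolevSq_nonneg _ _))
  refine le_trans (Real.sqrt_le_sqrt ?_)
    (sqrt_add_le_sqrt_add_sqrt (mul_nonneg zero_le_two hHkSq) (by positivity))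
  rw [(hu.smoothPeriodic t).HkSq_eq, (hu.smoothPeriodic 0).HkSq_eq, hu.sobolevSq_zero_eq]
  have hgrowth := hu.sobolevSq_add_two_le ha hcontrol hM ht
  have hmass := sobolevSq_nonneg 0 (coeff (u 0))
  calc _ ≤ 2 * π * (2 * (sobolevSq 0 (coeff (u 0)) + sobolevSq (k + 2) (coeff (u 0))) +
        (6 * a) ^ (k + 1) * M * t ^ (k + 1)) :=
        mul_le_mul_of_nonneg_left (by linarith) (by positivity)
    _ = _ := by ring

end Solution

/-- A radius, depending only on the `H¹` norm `R` of the data, for the Wiener and `H¹` norms of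
the solution. -/
def solutionRadius (p : ℕ) (R : ℝ) : ℝ := wienerBound (massEnergyBound p (R ^ 2 / (2 * π)))

lemma one_le_solutionRadius (p : ℕ) (R : ℝ) : 1 ≤ solutionRadius p R :=
  one_le_wienerBound (massEnergyBound_nonneg p (by positivity))

namespace Solution

variable {p : ℕ} {u : ℝ → ℝ → ℂ} (hu : Solution p u) {R : ℝ} (hR : HkNorm 1 (u 0) ≤ R)
include hu hR

lemma tsum_norm_coeff_le_solutionRadius (t : ℝ) : ∑' n, ‖coeff (u t) n‖ ≤ solutionRadius p R :=
  (hu.smoothPeriodic t).tsum_norm_coeff_le_wienerBound (hu.massEnergy_le hR t)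

lemma sobolevSq_one_le_solutionRadius_sq (t : ℝ) :
    sobolevSq 1 (coeff (u t)) ≤ solutionRadius p R ^ 2 := by
  have hmassEnergy := hu.massEnergy_le hR t
  have hone := one_le_solutionRadius p R
  have hradius : massEnergyBound p (R ^ 2 / (2 * π)) ≤ solutionRadius p R := by
    rw [solutionRadius, wienerBound]
    linarith [decaySum_nonneg]
  rw [massEnergy] at hmassEnergy
  nlinarith [(hu.smoothPeriodic t).sobolevSq_one_le_energy (p := p),
    sobolevSq_nonneg 0 (coeff (u t))]

end Solution

end growth

end NLS

theorem nls_polynomial_growth_general (k p : ℕ) (hk : 2 ≤ k) (hp : 1 ≤ p) (R : ℝ) :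
    ∃ C : ℝ, 0 < C ∧ ∀ u : ℝ → ℝ → ℂ, IsNLS p Set.univ u → HkNorm 1 (u 0) ≤ R →
      ∀ δ, 0 ≤ δ → ∀ t, 0 < t →
        HkNorm k (u t) ≤ C * HkNorm k (u 0) + C * t ^ (((k : ℝ) - 1) / 2 + δ) := by
  obtain ⟨m, rfl⟩ := Nat.exists_eq_add_of_le' hk
  set L := NLS.solutionRadius p R
  obtain ⟨a, ha, hcontrol⟩ :=
    NLS.exists_energyControl p (m + 1) hp (NLS.one_le_solutionRadius p R)
  refine ⟨√(2 + (6 * a) ^ (m + 2)) + √(2 * π * ((6 * a) ^ (m + 1) * L ^ 2)), by positivity,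
    fun u hNLS hR δ hδ t ht => ?_⟩
  have hu := NLS.solution_of_isNLS hNLS
  have hH1 := hu.sobolevSq_one_le_solutionRadius_sq hR
  have hcontrol' : ∀ s, NLS.EnergyControl p (m + 1) a (u s) := fun s =>
    hcontrol _ (hu.smoothPeriodic s) (hu.tsum_norm_coeff_le_solutionRadius hR s) (hH1 s)
  have hnorm : 0 ≤ HkNorm (m + 2) (u 0) := Real.sqrt_nonneg _
  obtain ht1 | ht1 := le_total t 1
  · refine (hu.HkNorm_succ_le_of_le_one ha hcontrol' ht.le ht1).trans ?_
    refine le_add_of_le_of_nonneg ?_ (by positivity)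
    gcongr
    exact le_add_of_nonneg_right (Real.sqrt_nonneg _)
  · refine (hu.HkNorm_add_two_le ha hcontrol' hH1 ht1).trans ?_
    gcongr ?_ * _ + ?_ * ?_
    · exact (Real.sqrt_le_sqrt (le_add_of_nonneg_right (by positivity))).trans
        (le_add_of_nonneg_right (Real.sqrt_nonneg _))
    · exact le_add_of_nonneg_left (Real.sqrt_nonneg _)
    · refine Real.rpow_le_rpow_of_exponent_le ht1 ?_
      push_cast
      linarith

/-- Theorem 1.2: polynomial bound on the growth of Sobolev norms. -/
theorem nls_polynomial_growth
    (k p : ℕ) (hk : 2 ≤ k) (hp : 2 ≤ p) (R ε : ℝ) (hR : 0 < R) (hε : 0 < ε) :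
    ∃ C : ℝ, 0 < C ∧
      ∀ u : ℝ → ℝ → ℂ, IsNLS p Set.univ u → HkNorm 1 (u 0) ≤ R →
        (∀ t : ℝ, 0 < t →
          HkNorm k (u t) ≤ C * HkNorm k (u 0) + C * t ^ (((k : ℝ) - 1) / 2 + ε)) ∧
        (¬ (3 ∣ k) → ∀ t : ℝ, 0 < t →
          HkNorm k (u t) ≤ C * HkNorm k (u 0) + C * t ^ (((k : ℝ) - 1) / 2)) := by
  obtain ⟨C, hC, h⟩ := nls_polynomial_growth_general k p hk (one_le_two.trans hp) R
  exact ⟨C, hC, fun u hu hu₀ =>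
    ⟨h u hu hu₀ ε hε.le, fun _ => by simpa using h u hu hu₀ 0 le_rfl⟩⟩
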